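/- Fix an integer n ≥ 2 and a real number s > 2/(n−1). Then q·(ζ^{SL_n(q)}(s) − 1) tends to 0 as q → ∞ through prime powers, where ζ^{SL_n(q)}(s) := Σ_{χ ∈ Irr(SL_n(q))} χ(1)^{−s}; that is, for every ε > 0 there exists B such that for every prime power q > B, q·(Σ_{χ ∈ Irr(SL_n(q))} χ(1)^{−s} − 1) < ε. -/

import Mathlib

/-!
The degrees and the number of the irreducible representations of `GL_n(q)` are controlled through
cuspidal data, and the result is transferred to `SL_n(q)`.

*Cuspidal data.* Every nonzero representation of `GL_n(q)` contains a cuspidal datum (`CuspSub`): a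
standard Levi subgroup, given by labelling the `n` coordinates, and an irreducible cuspidal representation of
it, with normalized character `ω`, among the vectors fixed by the unipotent radical. The Bruhat
decomposition and Mackey's formula (`mackey_span`) show that at most `n!` irreducible
representations contain the same datum (`count_fixed`). A cuspidal representation of `GL_d` contains
a Whittaker vector, so that there are at most `q ^ d` of them (`Om_card`). Consequently, if the
blocks are grouped into classes on which `ω` restricts to the same character, and `r` is the sum of
the sizes of one representative of each class, there are at most `n! * q ^ r` irreducible
representations with this combinatorial pattern (`Key`, `count_key`).

*Degrees.* Adjacent inequivalent blocks may be interchanged (`CuspSub.swap`), and so the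
representatives may be assumed to occupy the last `r` positions (`exists_good`). Degenerate Whittaker
vectors supported on these positions give the lower bound `∏ (q ^ j - 1)` over `n - r < j < n` for the
degree (`dim_rk`), and a representation of degree greater than one has degree at least
`q ^ (n - 1) - 1` (`dim_ge_of_ne_one`). Since the exponents `j` in the product sum to at least
`r * (n - 1) / 2` for `r ≥ 2`, the nonlinear representations of `GL_n(q)` contribute
`O(q ^ (-δ))` to the zeta function, where `δ = s - 2 / (n - 1) > 0` (`term_le`, `sum_GL`).

*From `GL_n` to `SL_n`.* Every irreducible representation of `SL_n(q)` is covered by one of `GL_n(q)`.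
Twisting by powers of a generator of the characters of the determinant yields about `q / n`
inequivalent ones; conversely an irreducible representation of `GL_n(q)` covers at most `n` irreducible
representations of `SL_n(q)`, and its degree is at most `n` times theirs. Hence `q` times the
contribution of the nontrivial characters of `SL_n(q)` is still `O(q ^ (-δ))` (`sum_SL`, `sum_chars`),
while the trivial character contributes `1`.
-/

open CategoryTheory in
/-- The set of irreducible complex characters of a group `G`. -/
def irrChars (G : Type) [Group G] : Set (G → ℂ) :=
  {f | ∃ V : FDRep ℂ G, Simple V ∧ f = V.character}

set_option linter.all false

section Preparations

open scoped Classical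
open MonoidAlgebra (of)

namespace ZSL

/-! ### Representations of finite groups and the group algebra -/

section Rep

variable {G : Type} [Group G] [Fintype G]
variable {V : Type} [AddCommGroup V] [Module ℂ V] [FiniteDimensional ℂ V]
variable {V' : Type} [AddCommGroup V'] [Module ℂ V'] [FiniteDimensional ℂ V']

/-- The subspace `Y` is stable under the subgroup `M`. -/
def Stable (ρ : Representation ℂ G V) (M : Subgroup G) (Y : Submodule ℂ V) : Prop :=
  ∀ m ∈ M, ∀ y ∈ Y, ρ m y ∈ Y

/-- The subspace `Y` is an irreducible representation of the subgroup `M`. -/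
structure IrrSub (ρ : Representation ℂ G V) (M : Subgroup G) (Y : Submodule ℂ V) : Prop where
  ne_bot : Y ≠ ⊥
  stable : Stable ρ M Y
  minimal : ∀ W ≤ Y, Stable ρ M W → W = ⊥ ∨ W = Y

/-- Every `M`-equivariant map from `Y` to `Y'` vanishes. -/
def NoHom (ρ : Representation ℂ G V) (ρ' : Representation ℂ G V') (M : Subgroup G)
    (Y : Submodule ℂ V) (Y' : Submodule ℂ V') : Prop :=
  ∀ T : V →ₗ[ℂ] V', (∀ y ∈ Y, T y ∈ Y') → (∀ m ∈ M, ∀ y ∈ Y, T (ρ m y) = ρ' m (T y)) →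
    ∀ y ∈ Y, T y = 0

/-- Elements of the group algebra supported on the subgroup `M`. -/
noncomputable def Supp (M : Subgroup G) : Subalgebra ℂ (MonoidAlgebra ℂ G) :=
  Algebra.adjoin ℂ (Set.image (of ℂ G) (M : Set G))

lemma of_mem_Supp {M : Subgroup G} {m : G} (hm : m ∈ M) : of ℂ G m ∈ Supp M :=
  Algebra.subset_adjoin ⟨m, hm, rfl⟩

@[elab_as_elim]
lemma Supp_induction {M : Subgroup G} {C : (a : MonoidAlgebra ℂ G) → a ∈ Supp M → Prop}
    (h0 : C 0 (zero_mem _))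
    (hadd : ∀ a b ha hb, C a ha → C b hb → C (a + b) (add_mem ha hb))
    (hs : ∀ (c : ℂ) a ha, C a ha → C (c • a) (Subalgebra.smul_mem _ ha c))
    (hof : ∀ m (hm : m ∈ M), C (of ℂ G m) (of_mem_Supp hm))
    {a : MonoidAlgebra ℂ G} (ha : a ∈ Supp M) : C a ha := by
  have heq : Subalgebra.toSubmodule (Supp M) = Submodule.span ℂ (Set.image (of ℂ G) (M : Set G)) := by
    have : Submonoid.closure (Set.image (of ℂ G) (M : Set G)) = M.toSubmonoid.map (of ℂ G) := by
      rw [show Set.image (of ℂ G) (M : Set G) = (M.toSubmonoid.map (of ℂ G) : Set _) from rfl,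
        Submonoid.closure_eq]
    rw [Supp, Algebra.adjoin_eq_span, this]
    rfl
  have hle : ∀ x, x ∈ Submodule.span ℂ (Set.image (of ℂ G) (M : Set G)) → x ∈ Supp M := by
    intro x hx; rw [← heq] at hx; exact hx
  have key : a ∈ Submodule.span ℂ (Set.image (of ℂ G) (M : Set G)) := by
    rw [← heq]; exact ha
  have : ∃ h : a ∈ Supp M, C a h := by
    clear ha
    induction key using Submodule.span_induction with
    | mem x hx => obtain ⟨m, hm, rfl⟩ := hx; exact ⟨_, hof m hm⟩
    | zero => exact ⟨_, h0⟩
    | add x y _ _ hx hy =>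
      obtain ⟨_, hx⟩ := hx
      obtain ⟨_, hy⟩ := hy
      exact ⟨_, hadd x y _ _ hx hy⟩
    | smul c x _ hx =>
      obtain ⟨_, hx⟩ := hx
      exact ⟨_, hs c x _ hx⟩
  exact this.2

lemma Supp_mono {M N : Subgroup G} (h : M ≤ N) : Supp M ≤ Supp N :=
  Algebra.adjoin_mono (Set.image_mono h)

lemma coeff_of (g x : G) : (of ℂ G g).coeff x = if g = x then 1 else 0 := by
  simp [MonoidAlgebra.of_apply, Finsupp.single_apply]

lemma mem_Supp_iff {M : Subgroup G} {a : MonoidAlgebra ℂ G} :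
    a ∈ Supp M ↔ ∀ g, g ∉ M → a.coeff g = 0 := by
  constructor
  · intro ha g hg
    induction ha using Supp_induction with
    | h0 => simp
    | hadd a b _ _ ha hb => simp [ha, hb]
    | hs c a _ ha => simp [ha]
    | hof m hm =>
      rw [coeff_of, if_neg]
      rintro rfl
      exact hg hm
  · intro h
    rw [← MonoidAlgebra.sum_coeff_single a, Finsupp.sum]
    refine sum_mem fun g _ => ?_
    by_cases hg : g ∈ M
    · rw [show MonoidAlgebra.single g (a.coeff g) = (a.coeff g) • of ℂ G g by
        simp [MonoidAlgebra.of_apply]]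
      exact Subalgebra.smul_mem _ (of_mem_Supp hg) _
    · rw [h g hg]; simp

lemma alg_induction {C : MonoidAlgebra ℂ G → Prop}
    (h0 : C 0) (hadd : ∀ a b, C a → C b → C (a + b)) (hs : ∀ (c : ℂ) a, C a → C (c • a))
    (hof : ∀ m, C (of ℂ G m)) (a : MonoidAlgebra ℂ G) : C a :=
  Supp_induction (M := ⊤) (C := fun a _ => C a) h0 (fun a b _ _ => hadd a b)
    (fun c a _ => hs c a) (fun m _ => hof m) (mem_Supp_iff.2 (by simp))

/-- The action of the group algebra. -/
noncomputable abbrev act (ρ : Representation ℂ G V) (a : MonoidAlgebra ℂ G) : V →ₗ[ℂ] V :=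
  ρ.asAlgebraHom a

lemma act_of (ρ : Representation ℂ G V) (g : G) : act ρ (of ℂ G g) = ρ g :=
  ρ.asAlgebraHom_of g

lemma act_mul (ρ : Representation ℂ G V) (a b : MonoidAlgebra ℂ G) (v : V) :
    act ρ (a * b) v = act ρ a (act ρ b v) := by simp [act]

lemma rho_mul (ρ : Representation ℂ G V) (a b : G) (v : V) :
    ρ (a * b) v = ρ a (ρ b v) := by simp

lemma rho_inv_self (ρ : Representation ℂ G V) (a : G) (v : V) : ρ a⁻¹ (ρ a v) = v := by
  rw [← rho_mul]; simp

lemma rho_self_inv (ρ : Representation ℂ G V) (a : G) (v : V) : ρ a (ρ a⁻¹ v) = v := by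
  rw [← rho_mul]; simp

lemma Stable.act_mem {ρ : Representation ℂ G V} {M : Subgroup G} {Y : Submodule ℂ V}
    (h : Stable ρ M Y) {a : MonoidAlgebra ℂ G} (ha : a ∈ Supp M) {y : V} (hy : y ∈ Y) :
    act ρ a y ∈ Y := by
  induction ha using Supp_induction with
  | h0 => simp
  | hadd a b _ _ ha hb => simpa [act] using Y.add_mem ha hb
  | hs c a _ ha => simpa [act] using Y.smul_mem c ha
  | hof m hm => rw [act_of]; exact h m hm y hy

/-- Schur's lemma. -/
lemma IrrSub.schur {ρ : Representation ℂ G V} {M : Subgroup G} {Y : Submodule ℂ V}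
    (h : IrrSub ρ M Y) (T : V →ₗ[ℂ] V) (hT : ∀ y ∈ Y, T y ∈ Y)
    (hc : ∀ m ∈ M, ∀ y ∈ Y, T (ρ m y) = ρ m (T y)) : ∃ c : ℂ, ∀ y ∈ Y, T y = c • y := by
  haveI : Nontrivial Y := Submodule.nontrivial_iff_ne_bot.2 h.ne_bot
  obtain ⟨c, hcv⟩ := Module.End.exists_eigenvalue (T.restrict hT)
  obtain ⟨v, hv⟩ := hcv.exists_hasEigenvector
  have hv1 : T v = c • (v : V) := by
    have := congrArg Subtype.val hv.apply_eq_smul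
    simpa using this
  have hv0 : (v : V) ≠ 0 := fun h0 => hv.2 (Subtype.ext h0)
  let W : Submodule ℂ V := Y ⊓ LinearMap.ker (T - c • LinearMap.id)
  have hW : ∀ y, y ∈ W ↔ y ∈ Y ∧ T y = c • y := by
    intro y; simp [W, sub_eq_zero]
  have hWs : Stable ρ M W := by
    intro m hm y hy
    rw [hW] at hy ⊢
    exact ⟨h.stable m hm y hy.1, by rw [hc m hm y hy.1, hy.2, map_smul]⟩
  rcases h.minimal W inf_le_left hWs with h1 | h1
  · exact absurd ((Submodule.eq_bot_iff _).1 h1 v ((hW _).2 ⟨v.2, hv1⟩)) hv0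
  · exact ⟨c, fun y hy => ((hW y).1 (h1 ▸ hy)).2⟩

lemma exists_irrSub (ρ : Representation ℂ G V) (M : Subgroup G) (X : Submodule ℂ V)
    (hX : X ≠ ⊥) (hs : Stable ρ M X) : ∃ Y ≤ X, IrrSub ρ M Y := by
  have hwf : WellFounded ((· < ·) : Submodule ℂ V → Submodule ℂ V → Prop) := wellFounded_lt
  obtain ⟨Y, ⟨hY0, hYs, hYX⟩, hmin⟩ := hwf.has_min {Y | Y ≠ ⊥ ∧ Stable ρ M Y ∧ Y ≤ X} ⟨X, hX, hs, le_rfl⟩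
  refine ⟨Y, hYX, hY0, hYs, fun W hW hWs => ?_⟩
  by_contra! hcon
  exact hmin W ⟨hcon.1, hWs, hW.trans hYX⟩ (lt_of_le_of_ne hW hcon.2)

/-- The element `∑ ℓ(m⁻¹ v) m` of the group algebra of `M` (a matrix coefficient). -/
noncomputable def mc (ρ : Representation ℂ G V) (M : Subgroup G) (ℓ : V →ₗ[ℂ] ℂ) :
    V →ₗ[ℂ] MonoidAlgebra ℂ G where
  toFun v := ∑ m : M, ℓ (ρ (m : G)⁻¹ v) • of ℂ G (m : G)
  map_add' := by intro x y; simp [add_smul, Finset.sum_add_distrib]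
  map_smul' := by intro c x; simp [Finset.smul_sum, mul_smul]

lemma mc_apply (ρ : Representation ℂ G V) (M : Subgroup G) (ℓ : V →ₗ[ℂ] ℂ) (v : V) :
    mc ρ M ℓ v = ∑ m : M, ℓ (ρ (m : G)⁻¹ v) • of ℂ G (m : G) := rfl

lemma mc_mem_Supp (ρ : Representation ℂ G V) (M : Subgroup G) (ℓ : V →ₗ[ℂ] ℂ) (v : V) :
    mc ρ M ℓ v ∈ Supp M :=
  sum_mem fun m _ => Subalgebra.smul_mem _ (of_mem_Supp m.2) _

lemma mul_mc (ρ : Representation ℂ G V) (M : Subgroup G) (ℓ : V →ₗ[ℂ] ℂ)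
    {a : MonoidAlgebra ℂ G} (ha : a ∈ Supp M) (v : V) :
    a * mc ρ M ℓ v = mc ρ M ℓ (act ρ a v) := by
  induction ha using Supp_induction with
  | h0 => simp
  | hadd a b _ _ ha hb => simp [add_mul, ha, hb]
  | hs c a _ ha => simp [ha]
  | hof x hx =>
    rw [act_of, mc_apply, mc_apply, Finset.mul_sum]
    refine Fintype.sum_equiv (Equiv.mulLeft (⟨x, hx⟩ : M)) _ _ fun m => ?_
    simp [← rho_mul, mul_assoc]

lemma mc_mul (ρ : Representation ℂ G V) (M : Subgroup G) (ℓ : V →ₗ[ℂ] ℂ)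
    {a : MonoidAlgebra ℂ G} (ha : a ∈ Supp M) (v : V) :
    mc ρ M ℓ v * a = mc ρ M (ℓ ∘ₗ act ρ a) v := by
  induction ha using Supp_induction with
  | h0 => simp [mc_apply]
  | hadd a b _ _ ha hb =>
    rw [mul_add, ha, hb]
    simp [mc_apply, Finset.sum_add_distrib]
  | hs c a _ ha =>
    rw [mul_smul_comm, ha]
    simp [mc_apply, Finset.smul_sum]
  | hof x hx =>
    rw [act_of, mc_apply, mc_apply, Finset.sum_mul]
    refine Fintype.sum_equiv (Equiv.mulRight (⟨x, hx⟩ : M)) _ _ fun m => ?_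
    simp

lemma act_mc_apply (ρ : Representation ℂ G V) (ρ' : Representation ℂ G V') (M : Subgroup G)
    (ℓ : V →ₗ[ℂ] ℂ) (v : V) (y : V') :
    act ρ' (mc ρ M ℓ v) y = ∑ m : M, ℓ (ρ (m : G)⁻¹ v) • ρ' (m : G) y := by
  rw [mc_apply]; simp [act]

lemma act_mc_noHom {ρ : Representation ℂ G V} {ρ' : Representation ℂ G V'} {M : Subgroup G}
    {Y : Submodule ℂ V} {Y' : Submodule ℂ V'} (hN : NoHom ρ ρ' M Y Y') (hs : Stable ρ' M Y')
    (ℓ : V →ₗ[ℂ] ℂ) {v : V} (hv : v ∈ Y) {y : V'} (hy : y ∈ Y') :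
    act ρ' (mc ρ M ℓ v) y = 0 := by
  let T : V →ₗ[ℂ] V' := (LinearMap.toSpanSingleton ℂ _ y) ∘ₗ 0 +
    (LinearMap.applyₗ y) ∘ₗ (ρ'.asAlgebraHom.toLinearMap ∘ₗ mc ρ M ℓ)
  have hT : ∀ w, T w = act ρ' (mc ρ M ℓ w) y := by intro w; simp [T]
  rw [← hT]
  refine hN T (fun w _ => ?_) (fun m hm w _ => ?_) v hv
  · rw [hT]; exact hs.act_mem (mc_mem_Supp _ _ _ _) hy
  · rw [hT, hT, ← act_of ρ m, ← mul_mc _ _ _ (of_mem_Supp hm), act_mul, act_of]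

lemma act_mc_irr {ρ : Representation ℂ G V} {M : Subgroup G}
    {Y : Submodule ℂ V} (h : IrrSub ρ M Y) (ℓ : V →ₗ[ℂ] ℂ) {v : V} (hv : v ∈ Y)
    {y : V} (hy : y ∈ Y) :
    act ρ (mc ρ M ℓ v) y =
      (((Fintype.card M : ℂ) / (Module.finrank ℂ Y : ℂ)) * ℓ y) • v := by
  let T : V →ₗ[ℂ] V := (LinearMap.applyₗ y) ∘ₗ (ρ.asAlgebraHom.toLinearMap ∘ₗ mc ρ M ℓ)
  have hT : ∀ w, T w = act ρ (mc ρ M ℓ w) y := by intro w; simp [T]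
  have hTY : ∀ w, T w ∈ Y := fun w => by
    rw [hT]; exact h.stable.act_mem (mc_mem_Supp _ _ _ _) hy
  obtain ⟨c, hc⟩ := h.schur T (fun w _ => hTY w) (fun m hm w _ => by
    rw [hT, hT, ← act_of ρ m, ← mul_mc _ _ _ (of_mem_Supp hm), act_mul, act_of])
  have htr1 : LinearMap.trace ℂ V T = c * (Module.finrank ℂ Y : ℂ) := by
    rw [← LinearMap.trace_restrict_eq_of_forall_mem Y T hTY]
    have : T.restrict (p := Y) (q := Y) (fun x _ => hTY x) = c • LinearMap.id := by
      ext w; simp [hc w w.2]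
    rw [this]; simp
  have htr2 : LinearMap.trace ℂ V T = (Fintype.card M : ℂ) * ℓ y := by
    have : T = ∑ m : M, (ρ (m : G)) * (ℓ.smulRight y) * (ρ (m : G)⁻¹) := by
      ext w; rw [hT, act_mc_apply]; simp
    rw [this, map_sum]
    have h2 : ∀ m : M, LinearMap.trace ℂ V (ρ (m : G) * (ℓ.smulRight y) * (ρ (m : G)⁻¹)) = ℓ y := by
      intro m
      rw [LinearMap.trace_mul_comm, ← mul_assoc, ← map_mul]
      simp
    simp [h2]
  have hd : (Module.finrank ℂ Y : ℂ) ≠ 0 := by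
    haveI : Nontrivial Y := Submodule.nontrivial_iff_ne_bot.2 h.ne_bot
    exact_mod_cast Module.finrank_pos.ne'
  have hcc : c = ((Fintype.card M : ℂ) / (Module.finrank ℂ Y : ℂ)) * ℓ y := by
    field_simp; rw [← htr1, htr2]
  rw [← hT, hc v hv, hcc]

lemma exists_functional {v : V} (hv : v ≠ 0) : ∃ ℓ : V →ₗ[ℂ] ℂ, ℓ v = 1 :=
  Module.Projective.exists_dual_eq_one ℂ hv

lemma IrrSub.finrank_ne_zero {ρ : Representation ℂ G V} {M : Subgroup G}
    {Y : Submodule ℂ V} (h : IrrSub ρ M Y) : (Module.finrank ℂ Y : ℂ) ≠ 0 := by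
  have : Nontrivial Y := Submodule.nontrivial_iff_ne_bot.2 h.ne_bot
  exact_mod_cast Module.finrank_pos.ne'

lemma card_ne_zero' (M : Subgroup G) : (Fintype.card M : ℂ) ≠ 0 := by
  exact_mod_cast Fintype.card_ne_zero

/-- `ω` is the normalized character of `M` on `Y`, expressed through the action of class sums;
it is extended by zero outside `M`. -/
structure Cent (ρ : Representation ℂ G V) (M : Subgroup G) (Y : Submodule ℂ V) (ω : G → ℂ) :
    Prop where
  sum_eq : ∀ x ∈ M, ∀ y ∈ Y,
    ∑ m : M, ρ ((m : G) * x * (m : G)⁻¹) y = ((Fintype.card M : ℂ) * ω x) • y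
  eq_zero : ∀ x ∉ M, ω x = 0

/-- By Schur's lemma class sums act on an irreducible representation by scalars, so a normalized
character exists. -/
lemma IrrSub.exists_cent {ρ : Representation ℂ G V} {M : Subgroup G}
    {Y : Submodule ℂ V} (h : IrrSub ρ M Y) : ∃ ω, Cent ρ M Y ω := by
  have key : ∀ x : G, ∃ c : ℂ, (x ∈ M → ∀ y ∈ Y,
      ∑ m : M, ρ ((m : G) * x * (m : G)⁻¹) y = ((Fintype.card M : ℂ) * c) • y) ∧
      (x ∉ M → c = 0) := by
    intro x
    by_cases hx : x ∈ M
    · obtain ⟨c, hc⟩ := h.schur (∑ m : M, ρ ((m : G) * x * (m : G)⁻¹)) (fun y hy => by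
        rw [LinearMap.sum_apply]
        exact sum_mem fun m _ => h.stable _ (M.mul_mem (M.mul_mem m.2 hx) (M.inv_mem m.2)) _ hy)
        (fun k hk y _ => by
          rw [LinearMap.sum_apply, LinearMap.sum_apply, map_sum]
          refine (Fintype.sum_equiv (Equiv.mulLeft (⟨k, hk⟩ : M)) _ _ fun m => ?_).symm
          rw [← rho_mul, ← rho_mul]
          congr 2
          simp [mul_assoc])
      refine ⟨c / Fintype.card M, fun _ y hy => ?_, fun h' => absurd hx h'⟩
      rw [← LinearMap.sum_apply, hc y hy, mul_div_cancel₀ _ (card_ne_zero' M)]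
    · exact ⟨0, fun h' => absurd h' hx, fun _ => rfl⟩
  choose ω hω using key
  exact ⟨ω, fun x hx => (hω x).1 hx, fun x hx => (hω x).2 hx⟩

lemma Cent.conj {ρ : Representation ℂ G V} {M : Subgroup G} {Y : Submodule ℂ V} {ω : G → ℂ}
    (h : Cent ρ M Y ω) (hY : Y ≠ ⊥) {x k : G} (hk : k ∈ M) :
    ω (k * x * k⁻¹) = ω x := by
  by_cases hx : x ∈ M
  · obtain ⟨y, hy, hy0⟩ := Submodule.exists_mem_ne_zero_of_ne_bot hY
    have h1 := h.sum_eq x hx y hy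
    have h2 := h.sum_eq (k * x * k⁻¹) (M.mul_mem (M.mul_mem hk hx) (M.inv_mem hk)) y hy
    have h3 : ∑ m : M, ρ ((m : G) * (k * x * k⁻¹) * (m : G)⁻¹) y =
        ∑ m : M, ρ ((m : G) * x * (m : G)⁻¹) y := by
      refine Fintype.sum_equiv (Equiv.mulRight (⟨k, hk⟩ : M)) _ _ fun m => ?_
      congr 2
      simp [mul_assoc]
    rw [h3, h1] at h2
    have h4 := smul_left_injective ℂ hy0 h2
    exact (mul_left_cancel₀ (card_ne_zero' M) h4).symm
  · have hx' : k * x * k⁻¹ ∉ M := fun h' => hx (by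
      have := M.mul_mem (M.mul_mem (M.inv_mem hk) h') hk
      simpa [mul_assoc] using this)
    rw [h.eq_zero _ hx, h.eq_zero _ hx']

lemma Cent.one {ρ : Representation ℂ G V} {M : Subgroup G} {Y : Submodule ℂ V} {ω : G → ℂ}
    (h : Cent ρ M Y ω) (hY : Y ≠ ⊥) : ω 1 = 1 := by
  obtain ⟨y, hy, hy0⟩ := Submodule.exists_mem_ne_zero_of_ne_bot hY
  have h1 := h.sum_eq 1 M.one_mem y hy
  simp only [mul_one, mul_inv_cancel, map_one, Module.End.one_apply, Finset.sum_const,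
    Finset.card_univ] at h1
  rw [← Nat.cast_smul_eq_nsmul ℂ] at h1
  have h4 := smul_left_injective ℂ hy0 h1
  have h5 : (Fintype.card M : ℂ) * 1 = Fintype.card M * ω 1 := by simpa using h4
  exact (mul_left_cancel₀ (card_ne_zero' M) h5).symm

lemma Cent.mono {ρ : Representation ℂ G V} {M : Subgroup G} {Y Y' : Submodule ℂ V} {ω : G → ℂ}
    (h : Cent ρ M Y ω) (hY : Y' ≤ Y) : Cent ρ M Y' ω :=
  ⟨fun x hx y hy => h.sum_eq x hx y (hY hy), h.eq_zero⟩

/-- A primitive idempotent `p` of the group algebra of `M` adapted to the vector `v` of the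
irreducible representation `Y`: it acts on `Y` as a rank one projection onto the line of `v`. -/
structure RankOne (ρ : Representation ℂ G V) (M : Subgroup G) (Y : Submodule ℂ V) (v : V)
    (p : MonoidAlgebra ℂ G) : Prop where
  supp : p ∈ Supp M
  idem : p * p = p
  min : ∀ a ∈ Supp M, ∃ c : ℂ, p * a * p = c • p
  left : ∀ a ∈ Supp M, act ρ a v = 0 → a * p = 0
  right : ∀ a ∈ Supp M, (∀ y ∈ Y, act ρ a y = 0) → p * a = 0
  one : p.coeff 1 ≠ 0
  fix : act ρ p v = v
  nonzero : ∀ ω, Cent ρ M Y ω → ∀ (V' : Type) [AddCommGroup V'] [Module ℂ V'] [FiniteDimensional ℂ V']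
    (ρ' : Representation ℂ G V') (Y' : Submodule ℂ V'), Y' ≠ ⊥ → Stable ρ' M Y' → Cent ρ' M Y' ω →
    ∃ y ∈ Y', act ρ' p y ≠ 0

lemma IrrSub.exists_rankOne {ρ : Representation ℂ G V} {M : Subgroup G}
    {Y : Submodule ℂ V} (h : IrrSub ρ M Y) {v : V} (hv : v ∈ Y) (hv0 : v ≠ 0) :
    ∃ p, RankOne ρ M Y v p := by
  obtain ⟨ℓ, hℓ⟩ := exists_functional hv0
  set d : ℂ := (Module.finrank ℂ Y : ℂ) with hd
  set N : ℂ := (Fintype.card M : ℂ) with hN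
  have hd0 : d ≠ 0 := h.finrank_ne_zero
  have hN0 : N ≠ 0 := card_ne_zero' M
  set p := mc ρ M ℓ ((d / N) • v) with hp
  have hact : ∀ y ∈ Y, act ρ p y = ℓ y • v := by
    intro y hy
    rw [hp, act_mc_irr h ℓ (Y.smul_mem _ hv) hy, smul_smul]
    congr 1
    rw [← hd, ← hN]
    field_simp
  have hps : p ∈ Supp M := mc_mem_Supp _ _ _ _
  have hmin : ∀ a ∈ Supp M, p * a * p = ℓ (act ρ a v) • p := by
    intro a ha
    have hp' : p = (d / N) • mc ρ M ℓ v := by rw [hp, map_smul]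
    have h1 : p * a * mc ρ M ℓ v = ℓ (act ρ a v) • mc ρ M ℓ v := by
      rw [mul_mc _ _ _ (mul_mem hps ha), act_mul, hact _ (h.stable.act_mem ha hv), map_smul]
    rw [hp', mul_smul_comm, ← hp', h1, smul_comm, ← hp']
  refine ⟨p, hps, ?_, fun a ha => ⟨_, hmin a ha⟩, ?_, ?_, ?_, ?_, ?_⟩
  · have := hmin 1 (one_mem _)
    simpa [hℓ, act] using this
  · intro a ha h0
    rw [hp, mul_mc _ _ _ ha, map_smul, h0]; simp
  · intro a ha h0
    rw [hp, mc_mul _ _ _ ha, mc_apply]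
    refine Finset.sum_eq_zero fun m _ => ?_
    rw [LinearMap.comp_apply, h0, map_zero, zero_smul]
    exact h.stable _ (M.inv_mem m.2) _ (Y.smul_mem _ hv)
  · have : p.coeff 1 = d / N := by
      rw [hp, mc_apply, MonoidAlgebra.coeff_sum, Finset.sum_apply']
      rw [Finset.sum_eq_single (1 : M)]
      · simp [hℓ]
      · intro m _ hm
        have : (m : G) ≠ 1 := fun h' => hm (Subtype.ext h')
        simp [this]
      · simp
    rw [this]; exact div_ne_zero hd0 hN0
  · rw [hact v hv, hℓ, one_smul]
  · intro ω hω V' _ _ _ ρ' Y' hY' hYs hω'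
    by_contra! hcon
    -- the average of the conjugates of `p` is central and acts by the same scalar on `Y` and `Y'`
    have hgen : ∀ (V'' : Type) [AddCommGroup V''] [Module ℂ V''] [FiniteDimensional ℂ V'']
        (ρ'' : Representation ℂ G V'') (Y'' : Submodule ℂ V''), Cent ρ'' M Y'' ω → ∀ y ∈ Y'',
        ∑ k : M, ρ'' (k : G) (act ρ'' p (ρ'' (k : G)⁻¹ y)) =
          (∑ m : M, ℓ (ρ (m : G)⁻¹ ((d / N) • v)) * (N * ω m)) • y := by
      intro V'' _ _ _ ρ'' Y'' hω'' y hy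
      rw [Finset.sum_smul]
      simp_rw [hp, act_mc_apply, map_sum]
      rw [Finset.sum_comm]
      refine Finset.sum_congr rfl fun m _ => ?_
      rw [mul_smul, ← hω''.sum_eq m m.2 y hy, Finset.smul_sum]
      refine Finset.sum_congr rfl fun k _ => ?_
      rw [map_smul, ← rho_mul, ← rho_mul, mul_assoc]
    have h1 := hgen V ρ Y hω v hv
    have h2 : ∑ k : M, ρ (k : G) (act ρ p (ρ (k : G)⁻¹ v)) = (N / d) • v := by
      have h3 := act_mc_irr h ℓ hv hv
      rw [hℓ, mul_one, act_mc_apply] at h3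
      rw [← h3]
      refine Finset.sum_congr rfl fun k _ => ?_
      rw [hact _ (h.stable _ (M.inv_mem k.2) _ hv), map_smul]
    rw [h2] at h1
    have h4 := smul_left_injective ℂ hv0 h1
    obtain ⟨y, hy, hy0⟩ := Submodule.exists_mem_ne_zero_of_ne_bot hY'
    have h5 := hgen V' ρ' Y' hω' y hy
    rw [← h4] at h5
    rw [Finset.sum_eq_zero] at h5
    · exact smul_ne_zero (div_ne_zero hN0 hd0) hy0 h5.symm
    · intro k _
      rw [hcon _ (hYs _ (M.inv_mem k.2) _ hy), map_zero]

end Rep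

/-! ### Averaging idempotents and counting irreducible representations -/

section Idem

variable {G : Type} [Group G] [Fintype G]
variable {V : Type} [AddCommGroup V] [Module ℂ V] [FiniteDimensional ℂ V]

/-- `θ` restricts to a linear character of the subgroup `N`. -/
structure MulOn (θ : G → ℂ) (N : Subgroup G) : Prop where
  one : θ 1 = 1
  mul : ∀ a ∈ N, ∀ b ∈ N, θ (a * b) = θ a * θ b

lemma MulOn.trivial (N : Subgroup G) : MulOn (fun _ => (1 : ℂ)) N := ⟨rfl, by simp⟩

lemma MulOn.mono {θ : G → ℂ} {N N' : Subgroup G} (h : MulOn θ N) (hN : N' ≤ N) : MulOn θ N' :=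
  ⟨h.one, fun a ha b hb => h.mul a (hN ha) b (hN hb)⟩

lemma MulOn.ne_zero {θ : G → ℂ} {N : Subgroup G} (h : MulOn θ N) {a : G} (ha : a ∈ N) :
    θ a ≠ 0 := by
  intro h0
  have := h.mul a ha a⁻¹ (N.inv_mem ha)
  rw [mul_inv_cancel, h.one, h0, zero_mul] at this
  exact one_ne_zero this

/-- The idempotent of the group algebra attached to a linear character `θ` of `N`. -/
noncomputable def avg (N : Subgroup G) (θ : G → ℂ) : MonoidAlgebra ℂ G :=
  (Fintype.card N : ℂ)⁻¹ • ∑ n : N, (θ n)⁻¹ • of ℂ G (n : G)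

lemma avg_mem_Supp (N : Subgroup G) (θ : G → ℂ) : avg N θ ∈ Supp N :=
  Subalgebra.smul_mem _ (sum_mem fun n _ => Subalgebra.smul_mem _ (of_mem_Supp n.2) _) _

lemma of_mul_avg {N : Subgroup G} {θ : G → ℂ} (h : MulOn θ N) {n : G} (hn : n ∈ N) :
    of ℂ G n * avg N θ = θ n • avg N θ := by
  rw [avg, mul_smul_comm, smul_comm (θ n)]
  congr 1
  rw [Finset.mul_sum, Finset.smul_sum]
  refine Fintype.sum_equiv (Equiv.mulLeft (⟨n, hn⟩ : N)) _ _ fun m => ?_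
  have h1 := h.ne_zero hn
  have h2 := h.ne_zero m.2
  simp only [Equiv.coe_mulLeft, Subgroup.coe_mul, mul_smul_comm, smul_smul, ← map_mul]
  rw [h.mul n hn m m.2]
  congr 1
  field_simp

lemma avg_mul_of {N : Subgroup G} {θ : G → ℂ} (h : MulOn θ N) {n : G} (hn : n ∈ N) :
    avg N θ * of ℂ G n = θ n • avg N θ := by
  rw [avg, smul_mul_assoc, smul_comm (θ n)]
  congr 1
  rw [Finset.sum_mul, Finset.smul_sum]
  refine Fintype.sum_equiv (Equiv.mulRight (⟨n, hn⟩ : N)) _ _ fun m => ?_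
  have h1 := h.ne_zero hn
  have h2 := h.ne_zero m.2
  simp only [Equiv.coe_mulRight, Subgroup.coe_mul, smul_mul_assoc, smul_smul, ← map_mul]
  rw [h.mul m m.2 n hn]
  congr 1
  field_simp

lemma mul_avg_eq_self {N : Subgroup G} {θ : G → ℂ} (h : MulOn θ N) {a : MonoidAlgebra ℂ G}
    (ha : ∀ n ∈ N, a * of ℂ G n = θ n • a) : a * avg N θ = a := by
  rw [avg, mul_smul_comm, Finset.mul_sum]
  have : ∀ n : N, a * ((θ n)⁻¹ • of ℂ G (n : G)) = a := by
    intro n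
    rw [mul_smul_comm, ha n n.2, smul_smul, inv_mul_cancel₀ (h.ne_zero n.2), one_smul]
  simp only [this, Finset.sum_const, Finset.card_univ]
  rw [← Nat.cast_smul_eq_nsmul ℂ, smul_smul, inv_mul_cancel₀ (card_ne_zero' N), one_smul]

lemma avg_mul_eq_self {N : Subgroup G} {θ : G → ℂ} (h : MulOn θ N) {a : MonoidAlgebra ℂ G}
    (ha : ∀ n ∈ N, of ℂ G n * a = θ n • a) : avg N θ * a = a := by
  rw [avg, smul_mul_assoc, Finset.sum_mul]
  have : ∀ n : N, ((θ n)⁻¹ • of ℂ G (n : G)) * a = a := by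
    intro n
    rw [smul_mul_assoc, ha n n.2, smul_smul, inv_mul_cancel₀ (h.ne_zero n.2), one_smul]
  simp only [this, Finset.sum_const, Finset.card_univ]
  rw [← Nat.cast_smul_eq_nsmul ℂ, smul_smul, inv_mul_cancel₀ (card_ne_zero' N), one_smul]

lemma avg_mul_avg {N : Subgroup G} {θ : G → ℂ} (h : MulOn θ N) :
    avg N θ * avg N θ = avg N θ :=
  mul_avg_eq_self h fun _ hn => avg_mul_of h hn

lemma act_avg (ρ : Representation ℂ G V) (N : Subgroup G) (θ : G → ℂ) (v : V) :
    act ρ (avg N θ) v = (Fintype.card N : ℂ)⁻¹ • ∑ n : N, (θ n)⁻¹ • ρ n v := by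
  simp [act, avg]

lemma act_avg_eq_self (ρ : Representation ℂ G V) {N : Subgroup G} {θ : G → ℂ} (h : MulOn θ N)
    {v : V} (hv : ∀ n ∈ N, ρ n v = θ n • v) : act ρ (avg N θ) v = v := by
  rw [act_avg]
  have : ∀ n : N, (θ n)⁻¹ • ρ n v = v := by
    intro n
    rw [hv n n.2, smul_smul, inv_mul_cancel₀ (h.ne_zero n.2), one_smul]
  simp only [this, Finset.sum_const, Finset.card_univ]
  rw [← Nat.cast_smul_eq_nsmul ℂ, smul_smul, inv_mul_cancel₀ (card_ne_zero' N), one_smul]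

lemma rho_act_avg (ρ : Representation ℂ G V) {N : Subgroup G} {θ : G → ℂ} (h : MulOn θ N)
    {n : G} (hn : n ∈ N) (v : V) : ρ n (act ρ (avg N θ) v) = θ n • act ρ (avg N θ) v := by
  rw [← act_of ρ n, ← act_mul, of_mul_avg h hn]; simp [act]

lemma of_mul_avg_conj {N N' : Subgroup G} {θ θ' : G → ℂ} {m : G}
    (hN : ∀ n, n ∈ N ↔ m * n * m⁻¹ ∈ N') (hθ : ∀ n ∈ N, θ' (m * n * m⁻¹) = θ n) :
    of ℂ G m * avg N θ = avg N' θ' * of ℂ G m := by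
  let e : N ≃ N' :=
    { toFun := fun n => ⟨m * n * m⁻¹, (hN n).1 n.2⟩
      invFun := fun n => ⟨m⁻¹ * n * m, (hN _).2 (by simpa [mul_assoc] using n.2)⟩
      left_inv := fun n => Subtype.ext (by simp [mul_assoc])
      right_inv := fun n => Subtype.ext (by simp [mul_assoc]) }
  rw [avg, avg, mul_smul_comm, smul_mul_assoc, Finset.mul_sum, Finset.sum_mul,
    Fintype.card_congr e]
  congr 1
  refine Fintype.sum_equiv e _ _ fun n => ?_
  simp only [e, Equiv.coe_fn_mk, mul_smul_comm, smul_mul_assoc, hθ n n.2, ← map_mul]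
  simp [mul_assoc]

lemma coeff_mul_comm (a b : MonoidAlgebra ℂ G) : (a * b).coeff 1 = (b * a).coeff 1 := by
  induction a using alg_induction with
  | h0 => simp
  | hadd a b ha hb => simp [add_mul, mul_add, ha, hb]
  | hs c a ha => simp [ha]
  | hof x =>
    induction b using alg_induction with
    | h0 => simp
    | hadd a b ha hb => simp [add_mul, mul_add, ha, hb]
    | hs c a ha => simp [ha]
    | hof y =>
      rw [← map_mul, ← map_mul, coeff_of, coeff_of]
      congr 1
      exact propext ⟨fun h => mul_eq_one_comm.1 h, fun h => mul_eq_one_comm.1 h⟩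

lemma coeff_of_mul (g x : G) (a : MonoidAlgebra ℂ G) :
    (of ℂ G g * a).coeff x = a.coeff (g⁻¹ * x) := by
  induction a using alg_induction with
  | h0 => simp
  | hadd a b ha hb => simp_all [mul_add]
  | hs c a ha => simp_all
  | hof y =>
    rw [← map_mul, coeff_of, coeff_of]
    congr 1
    exact propext eq_inv_mul_iff_mul_eq.symm

/-- If `ε` is a minimal idempotent relative to the subgroup `H`, an element `a` of the group
algebra of `H` cannot kill a vector fixed by `ε` unless the trace of `a ε` vanishes. -/
lemma act_ne_zero_of_coeff {ρ : Representation ℂ G V} {H : Subgroup G} {ε a : MonoidAlgebra ℂ G}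
    (hε : ε * ε = ε) (hmin : ∀ g ∈ H, ∃ c : ℂ, ε * of ℂ G g * ε = c • ε) (ha : a ∈ Supp H)
    (h1 : (a * ε).coeff 1 ≠ 0) {v : V} (hv : act ρ ε v = v) (hv0 : v ≠ 0) :
    act ρ a v ≠ 0 := by
  have key : ∃ c : ℂ, ε * a * ε = c • ε := by
    clear h1
    induction ha using Supp_induction with
    | h0 => exact ⟨0, by simp⟩
    | hadd a b _ _ ha hb =>
      obtain ⟨c, hc⟩ := ha
      obtain ⟨d, hd⟩ := hb
      exact ⟨c + d, by rw [mul_add, add_mul, hc, hd, add_smul]⟩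
    | hs d a _ ha =>
      obtain ⟨c, hc⟩ := ha
      exact ⟨d * c, by rw [mul_smul_comm, smul_mul_assoc, hc, smul_smul]⟩
    | hof m hm => exact hmin m hm
  obtain ⟨c, hc⟩ := key
  intro h0
  have h2 : c • v = 0 := by
    have : act ρ (ε * a * ε) v = 0 := by rw [act_mul, act_mul, hv, h0, map_zero]
    rw [hc] at this
    rw [← this, ← hv]
    simp only [act, map_smul, LinearMap.smul_apply]
    rw [← act, hv, hv]
  have hc0 : c = 0 := (smul_eq_zero.1 h2).resolve_right hv0
  apply h1
  have : (ε * a * ε).coeff 1 = (a * ε).coeff 1 := by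
    rw [mul_assoc, coeff_mul_comm, mul_assoc, hε]
  rw [← this, hc, hc0]; simp

/-- If `p`, `p'` are minimal idempotents, `p ℂ[M] p'` is at most one-dimensional. -/
lemma min_min_smul {M : Subgroup G} {p p' : MonoidAlgebra ℂ G}
    (hp : ∀ a ∈ Supp M, ∃ c : ℂ, p * a * p = c • p)
    (hp' : ∀ a ∈ Supp M, ∃ c : ℂ, p' * a * p' = c • p')
    (hs : p ∈ Supp M) (hs' : p' ∈ Supp M) (hpp : p * p = p)
    {y z : MonoidAlgebra ℂ G} (hy : y ∈ Supp M) (hz : z ∈ Supp M) (h0 : p * y * p' ≠ 0) :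
    ∃ c : ℂ, p * z * p' = c • (p * y * p') := by
  set X := p * y * p' with hX
  have hXs : X ∈ Supp M := mul_mem (mul_mem hs hy) hs'
  obtain ⟨k, hk⟩ : ∃ k, X.coeff k ≠ 0 := by
    by_contra! hcon
    exact h0 (MonoidAlgebra.coeff_injective (Finsupp.ext hcon))
  have hkM : k ∈ M := by
    by_contra h
    exact hk (mem_Supp_iff.1 hXs k h)
  set b := of ℂ G k⁻¹ with hb
  have hbs : b ∈ Supp M := of_mem_Supp (M.inv_mem hkM)
  have hXb : (X * b).coeff 1 ≠ 0 := by
    rw [coeff_mul_comm, hb, coeff_of_mul]; simpa using hk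
  obtain ⟨c, hc⟩ := hp (y * p' * b) (mul_mem (mul_mem hy hs') hbs)
  have hpX : p * X = X := by rw [hX, ← mul_assoc, ← mul_assoc, hpp]
  have hXbp : X * b * p = c • p := by rw [← hc, hX]; simp only [mul_assoc]
  have hc0 : c ≠ 0 := by
    rintro rfl
    apply hXb
    have : (X * b * p).coeff 1 = (X * b).coeff 1 := by
      rw [coeff_mul_comm, ← mul_assoc, hpX]
    rw [← this, hXbp]; simp
  obtain ⟨c', hc'⟩ := hp' (b * p * z) (mul_mem (mul_mem hbs hs) hz)
  refine ⟨c' / c, ?_⟩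
  have h1 : X * b * p * z * p' = c • (p * z * p') := by
    rw [hXbp]; simp [smul_mul_assoc]
  have h2 : X * b * p * z * p' = c' • X := by
    rw [hX, mul_assoc p y p', mul_assoc p]
    have : p * y * (p' * (b * p * z) * p') = p * y * (c' • p') := by rw [hc']
    rw [mul_smul_comm] at this
    rw [mul_assoc p y p'] at this
    rw [← this]
    simp only [mul_assoc]
  rw [div_eq_inv_mul, mul_smul, ← h2, h1, smul_smul, inv_mul_cancel₀ hc0, one_smul]

end Idem

section Count

variable {G : Type} [Group G] [Fintype G]

/-- A finite-dimensional complex representation of `G` with a distinguished subspace. -/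
structure FRep (G : Type) [Group G] where
  V : Type
  [i1 : AddCommGroup V]
  [i2 : Module ℂ V]
  [i3 : FiniteDimensional ℂ V]
  ρ : Representation ℂ G V
  Y : Submodule ℂ V

attribute [instance] FRep.i1 FRep.i2 FRep.i3

/-- Pairwise non-isomorphic irreducible representations on which `ε` acts nontrivially are at
most as many as the dimension of any space containing all `ε g ε`. -/
lemma count_le_of_span {ι : Type} [Fintype ι] (R : ι → FRep G)
    (hirr : ∀ i, IrrSub (R i).ρ ⊤ (R i).Y)
    (hno : ∀ i j, i ≠ j → NoHom (R i).ρ (R j).ρ ⊤ (R i).Y (R j).Y) (ε : MonoidAlgebra ℂ G)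
    (hε : ∀ i, ∃ y ∈ (R i).Y, act (R i).ρ ε y ≠ 0)
    (S : Submodule ℂ (MonoidAlgebra ℂ G)) (hS : ∀ g, ε * of ℂ G g * ε ∈ S) :
    Fintype.card ι ≤ Module.finrank ℂ S := by
  choose u hu hu0 using hε
  have hℓ : ∀ i, ∃ ℓ : (R i).V →ₗ[ℂ] ℂ, ℓ (act (R i).ρ ε (u i)) = 1 :=
    fun i => exists_functional (hu0 i)
  choose ℓ hℓ using hℓ
  have hS' : ∀ a, ε * a * ε ∈ S := by
    intro a
    induction a using alg_induction with
    | h0 => simp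
    | hadd a b ha hb => rw [mul_add, add_mul]; exact S.add_mem ha hb
    | hs c a ha => rw [mul_smul_comm, smul_mul_assoc]; exact S.smul_mem _ ha
    | hof m => exact hS m
  let x : ι → S := fun i => ⟨ε * mc (R i).ρ ⊤ (ℓ i) (u i) * ε, hS' _⟩
  have htop : ∀ a : MonoidAlgebra ℂ G, a ∈ Supp (⊤ : Subgroup G) :=
    fun a => mem_Supp_iff.2 (by simp)
  have hli : LinearIndependent ℂ x := by
    rw [Fintype.linearIndependent_iff]
    intro c hc j
    have h1 : ∑ i, c i • (ε * mc (R i).ρ ⊤ (ℓ i) (u i) * ε) = 0 := by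
      have := congrArg Subtype.val hc
      simpa [x] using this
    have hj := hirr j
    have hεu : act (R j).ρ ε (u j) ∈ (R j).Y := hj.stable.act_mem (htop _) (hu j)
    have h2 := congrArg (fun a => act (R j).ρ a (u j)) h1
    simp only [act, map_sum, map_smul, LinearMap.sum_apply, LinearMap.smul_apply, map_zero,
      LinearMap.zero_apply] at h2
    rw [Finset.sum_eq_single j] at h2
    · have h3 : act (R j).ρ (ε * mc (R j).ρ ⊤ (ℓ j) (u j) * ε) (u j) =
          ((Fintype.card (⊤ : Subgroup G) : ℂ) / (Module.finrank ℂ (R j).Y : ℂ)) •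
            act (R j).ρ ε (u j) := by
        rw [act_mul, act_mul, act_mc_irr hj _ (hu j) hεu, hℓ, mul_one, map_smul]
      rw [← act, h3, smul_eq_zero] at h2
      exact h2.resolve_right
        (smul_ne_zero (div_ne_zero (card_ne_zero' _) hj.finrank_ne_zero) (hu0 j))
    · intro i _ hij
      rw [← act, act_mul, act_mul,
        act_mc_noHom (hno i j hij) hj.stable _ (hu i) hεu, map_zero, smul_zero]
    · simp
  exact hli.fintype_card_le_finrank

/-- The degrees of pairwise non-isomorphic irreducible representations containing the linear
character `θ` of `H` sum up to at most the index of `H`. -/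
lemma sum_finrank_le_index {ι : Type} [Fintype ι] (R : ι → FRep G)
    (hirr : ∀ i, IrrSub (R i).ρ ⊤ (R i).Y)
    (hno : ∀ i j, i ≠ j → NoHom (R i).ρ (R j).ρ ⊤ (R i).Y (R j).Y) (H : Subgroup G) (θ : G → ℂ)
    (hθ : MulOn θ H) (hε : ∀ i, ∃ y ∈ (R i).Y, y ≠ 0 ∧ ∀ k ∈ H, (R i).ρ k y = θ k • y) :
    (∑ i, Module.finrank ℂ (R i).Y) * Nat.card H ≤ Nat.card G := by
  choose w hw hw0 hwθ using hε
  have hℓ : ∀ i, ∃ ℓ : (R i).V →ₗ[ℂ] ℂ, ℓ (w i) = 1 := fun i => exists_functional (hw0 i)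
  choose ℓ hℓ using hℓ
  set e := avg H θ with he
  let S : Submodule ℂ (MonoidAlgebra ℂ G) :=
    Submodule.span ℂ (Set.range fun c : G ⧸ H => of ℂ G c.out * e)
  have hS1 : ∀ g, of ℂ G g * e ∈ S := by
    intro g
    obtain ⟨k, hk⟩ := QuotientGroup.mk_out_eq_mul H g
    have : of ℂ G (QuotientGroup.mk g : G ⧸ H).out * e = θ k • (of ℂ G g * e) := by
      rw [hk, map_mul, mul_assoc, he, of_mul_avg hθ k.2, mul_smul_comm]
    have h2 : of ℂ G g * e = (θ k)⁻¹ • (of ℂ G (QuotientGroup.mk g : G ⧸ H).out * e) := by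
      rw [this, smul_smul, inv_mul_cancel₀ (hθ.ne_zero k.2), one_smul]
    rw [h2]
    exact S.smul_mem _ (Submodule.subset_span ⟨_, rfl⟩)
  have hS : ∀ a, a * e ∈ S := by
    intro a
    induction a using alg_induction with
    | h0 => simp
    | hadd a b ha hb => rw [add_mul]; exact S.add_mem ha hb
    | hs c a ha => rw [smul_mul_assoc]; exact S.smul_mem _ ha
    | hof m => exact hS1 m
  let Φ : (∀ i, (R i).Y) →ₗ[ℂ] S := LinearMap.codRestrict S
    (∑ i, (LinearMap.mulRight ℂ e) ∘ₗ (mc (R i).ρ ⊤ (ℓ i)) ∘ₗ (R i).Y.subtype ∘ₗ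
      LinearMap.proj i) (fun u => by
        rw [LinearMap.sum_apply]; exact sum_mem fun i _ => hS _)
  have hΦ : ∀ u, (Φ u : MonoidAlgebra ℂ G) = ∑ i, mc (R i).ρ ⊤ (ℓ i) (u i) * e := by
    intro u; simp [Φ]
  have hinj : Function.Injective Φ := by
    rw [← LinearMap.ker_eq_bot, LinearMap.ker_eq_bot']
    intro u hu
    funext j
    have hj := hirr j
    have h1 : act (R j).ρ (Φ u : MonoidAlgebra ℂ G) (w j) = 0 := by rw [hu]; simp [act]
    rw [hΦ] at h1
    simp only [act, map_sum, LinearMap.sum_apply] at h1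
    have hew : act (R j).ρ e (w j) = w j := act_avg_eq_self _ hθ (hwθ j)
    rw [Finset.sum_eq_single j] at h1
    · rw [← act, act_mul, hew, act_mc_irr hj _ (u j).2 (hw j), hℓ, mul_one] at h1
      have := (smul_eq_zero.1 h1).resolve_left
        (div_ne_zero (card_ne_zero' _) hj.finrank_ne_zero)
      exact Subtype.ext this
    · intro i _ hij
      rw [← act, act_mul, hew, act_mc_noHom (hno i j hij) hj.stable _ (u i).2 (hw j)]
    · simp
  have h1 := LinearMap.finrank_le_finrank_of_injective hinj
  rw [Module.finrank_pi_fintype] at h1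
  have h2 : Module.finrank ℂ S ≤ Fintype.card (G ⧸ H) := finrank_range_le_card _
  calc _ ≤ Nat.card (G ⧸ H) * Nat.card H := by
        rw [Nat.card_eq_fintype_card (α := G ⧸ H)]
        exact Nat.mul_le_mul_right _ (h1.trans h2)
    _ = Nat.card G := (Subgroup.card_eq_card_quotient_mul_card_subgroup H).symm

lemma noHom_of_cent {V : Type} [AddCommGroup V] [Module ℂ V] [FiniteDimensional ℂ V]
    {V' : Type} [AddCommGroup V'] [Module ℂ V'] [FiniteDimensional ℂ V']
    {ρ : Representation ℂ G V} {ρ' : Representation ℂ G V'} {M : Subgroup G}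
    {Y : Submodule ℂ V} {Y' : Submodule ℂ V'} {ω ω' : G → ℂ} (h : Cent ρ M Y ω)
    (h' : Cent ρ' M Y' ω') (hne : ω ≠ ω') : NoHom ρ ρ' M Y Y' := by
  intro T hT hc y hy
  by_contra h0
  apply hne
  funext x
  by_cases hx : x ∈ M
  · have h1 := congrArg T (h.sum_eq x hx y hy)
    have h2 := h'.sum_eq x hx (T y) (hT y hy)
    rw [map_sum, map_smul] at h1
    have h3 : ∑ m : M, T (ρ ((m : G) * x * (m : G)⁻¹) y) =
        ∑ m : M, ρ' ((m : G) * x * (m : G)⁻¹) (T y) :=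
      Finset.sum_congr rfl fun m _ =>
        hc _ (M.mul_mem (M.mul_mem m.2 hx) (M.inv_mem m.2)) y hy
    rw [h1, h2] at h3
    exact mul_left_cancel₀ (card_ne_zero' M) (smul_left_injective ℂ h0 h3)
  · rw [h.eq_zero x hx, h'.eq_zero x hx]

lemma noHom_of_finrank {V : Type} [AddCommGroup V] [Module ℂ V] [FiniteDimensional ℂ V]
    {V' : Type} [AddCommGroup V'] [Module ℂ V'] [FiniteDimensional ℂ V']
    {ρ : Representation ℂ G V} {ρ' : Representation ℂ G V'} {M : Subgroup G}
    {Y : Submodule ℂ V} {Y' : Submodule ℂ V'} (h : IrrSub ρ M Y) (h' : IrrSub ρ' M Y')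
    (hne : Module.finrank ℂ Y ≠ Module.finrank ℂ Y') : NoHom ρ ρ' M Y Y' := by
  intro T hT hc
  by_contra! hcon
  obtain ⟨y, hy, hy0⟩ := hcon
  apply hne
  have hker : Y ⊓ LinearMap.ker T = ⊥ := by
    refine (h.minimal _ inf_le_left ?_).resolve_right ?_
    · intro m hm z hz
      refine ⟨h.stable m hm z hz.1, ?_⟩
      have : T z = 0 := hz.2
      change T (ρ m z) = 0
      rw [hc m hm z hz.1, this, map_zero]
    · intro heq
      have : y ∈ Y ⊓ LinearMap.ker T := by rw [heq]; exact hy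
      exact hy0 this.2
  have him : Y.map T = Y' := by
    refine (h'.minimal _ ?_ ?_).resolve_left ?_
    · rintro _ ⟨z, hz, rfl⟩; exact hT z hz
    · rintro m hm _ ⟨z, hz, rfl⟩
      exact ⟨ρ m z, h.stable m hm z hz, hc m hm z hz⟩
    · intro heq
      have : T y ∈ Y.map T := ⟨y, hy, rfl⟩
      rw [heq] at this
      exact hy0 this
  rw [← him]
  have hinj : Function.Injective (T.domRestrict Y) := by
    rw [← LinearMap.ker_eq_bot, LinearMap.ker_eq_bot']
    intro z hz
    have : (z : V) ∈ Y ⊓ LinearMap.ker T := ⟨z.2, hz⟩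
    rw [hker] at this
    exact Subtype.ext this
  have h1 := LinearMap.finrank_range_of_inj hinj
  rw [LinearMap.range_domRestrict] at h1
  exact h1.symm

/-- The character of an irreducible representation is its degree times `ω`. -/
lemma character_eq {V : Type} [AddCommGroup V] [Module ℂ V] [FiniteDimensional ℂ V]
    {ρ : Representation ℂ G V} {ω : G → ℂ} (h : Cent ρ ⊤ ⊤ ω) (x : G) :
    ρ.character x = Module.finrank ℂ V * ω x := by
  have h1 : ∑ m : (⊤ : Subgroup G), ρ ((m : G) * x * (m : G)⁻¹) =
      ((Fintype.card (⊤ : Subgroup G) : ℂ) * ω x) • LinearMap.id := by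
    ext y
    rw [LinearMap.sum_apply, h.sum_eq x trivial y trivial]; simp
  have h2 := congrArg (LinearMap.trace ℂ V) h1
  rw [map_sum, map_smul] at h2
  have h3 : ∀ m : (⊤ : Subgroup G), LinearMap.trace ℂ V (ρ ((m : G) * x * (m : G)⁻¹)) =
      ρ.character x := by
    intro m
    rw [Representation.character, map_mul, LinearMap.trace_mul_comm, ← map_mul]
    simp
  simp only [h3, Finset.sum_const, Finset.card_univ, nsmul_eq_mul, LinearMap.trace_id,
    smul_eq_mul] at h2
  rw [mul_assoc] at h2
  have := mul_left_cancel₀ (card_ne_zero' (⊤ : Subgroup G)) h2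
  rw [this, mul_comm]

/-- Irreducible representations with different characters are disjoint. -/
lemma noHom_of_character {V : Type} [AddCommGroup V] [Module ℂ V] [FiniteDimensional ℂ V]
    {V' : Type} [AddCommGroup V'] [Module ℂ V'] [FiniteDimensional ℂ V']
    {ρ : Representation ℂ G V} {ρ' : Representation ℂ G V'} (h : IrrSub ρ ⊤ ⊤)
    (h' : IrrSub ρ' ⊤ ⊤) (hne : ρ.character ≠ ρ'.character) : NoHom ρ ρ' ⊤ ⊤ ⊤ := by
  obtain ⟨ω, hω⟩ := h.exists_cent
  obtain ⟨ω', hω'⟩ := h'.exists_cent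
  by_cases h1 : ω = ω'
  · refine noHom_of_finrank h h' fun h2 => hne ?_
    rw [finrank_top, finrank_top] at h2
    funext x
    rw [character_eq hω, character_eq hω', h1, h2]
  · exact noHom_of_cent hω hω' h1

end Count

/-! ### Parabolic and Levi subgroups of the general linear group -/

section GLn

variable {n : ℕ} {F : Type} [Field F] [Fintype F]

/-- The group `GL_n(F)`. -/
abbrev GLn (n : ℕ) (F : Type) [Field F] : Type := GL (Fin n) F

lemma mulEntry (g k : GLn n F) (i j : Fin n) : (g * k) i j = ∑ l, g i l * k l j := by
  simp [Matrix.mul_apply]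

lemma oneEntry (i j : Fin n) : (1 : GLn n F) i j = if i = j then 1 else 0 := by
  simp [Matrix.one_apply]

lemma gl_ext {g k : GLn n F} (h : ∀ i j, g i j = k i j) : g = k :=
  Matrix.GeneralLinearGroup.ext h

/-- The subgroup of matrices agreeing with the identity matrix outside the positions allowed by
the transitive relation `R`. -/
def Pat (R : Fin n → Fin n → Prop) (hR : ∀ a b c, R a b → R b c → R a c) :
    Subgroup (GLn n F) :=
  have hmul : ∀ {a b : GLn n F}, (∀ i j, ¬ R i j → a i j = (1 : GLn n F) i j) →
      (∀ i j, ¬ R i j → b i j = (1 : GLn n F) i j) →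
      (∀ i j, ¬ R i j → (a * b) i j = (1 : GLn n F) i j) := by
    intro a b ha hb i j hij
    rw [mulEntry]
    by_cases h : ∃ l, R i l ∧ l ≠ i ∧ a i l * b l j ≠ 0
    · obtain ⟨l, hl, hli, h0⟩ := h
      by_cases h2 : R l j
      · exact absurd (hR _ _ _ hl h2) hij
      · rw [hb l j h2, oneEntry] at h0
        by_cases h3 : l = j
        · subst h3; exact absurd hl hij
        · simp [h3] at h0
    · push Not at h
      rw [Finset.sum_eq_single i]
      · by_cases h2 : R i i
        · rw [hb i j hij, oneEntry]
          by_cases h3 : i = j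
          · subst h3; exact absurd h2 hij
          · simp [h3]
        · rw [ha i i h2, hb i j hij]; simp [oneEntry]
      · intro l _ hl
        by_cases h2 : R i l
        · exact h l h2 hl
        · rw [ha i l h2, oneEntry, if_neg (Ne.symm hl), zero_mul]
      · simp
  { carrier := {g | ∀ i j, ¬ R i j → g i j = (1 : GLn n F) i j}
    mul_mem' := hmul
    one_mem' := fun _ _ _ => rfl
    inv_mem' := by
      intro g hg
      have hpow : ∀ k : ℕ, ∀ i j, ¬ R i j → (g ^ k) i j = (1 : GLn n F) i j := by
        intro k
        induction k with
        | zero => intro i j _; simp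
        | succ k ih => rw [pow_succ]; exact hmul ih hg
      have : g⁻¹ = g ^ (orderOf g - 1) := by
        rw [inv_eq_iff_mul_eq_one, ← pow_succ',
          Nat.sub_add_cancel (orderOf_pos g), pow_orderOf_eq_one]
      rw [this]
      exact hpow _ }

lemma mem_Pat {R : Fin n → Fin n → Prop} {hR : ∀ a b c, R a b → R b c → R a c} {g : GLn n F} :
    g ∈ Pat R hR ↔ ∀ i j, ¬ R i j → g i j = if i = j then 1 else 0 := by
  simp only [← oneEntry (F := F)]
  exact Iff.rfl

lemma Pat_mono {R S : Fin n → Fin n → Prop} {hR : ∀ a b c, R a b → R b c → R a c}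
    {hS : ∀ a b c, S a b → S b c → S a c} (h : ∀ i j, R i j → S i j) :
    (Pat R hR : Subgroup (GLn n F)) ≤ Pat S hS := by
  intro g hg
  rw [mem_Pat] at *
  exact fun i j hij => hg i j fun h' => hij (h i j h')

/-- The parabolic subgroup attached to a labelling `h` of the basis vectors. -/
def PP (F : Type) [Field F] [Fintype F] (h : Fin n → ℕ) : Subgroup (GLn n F) :=
  Pat (fun i j => h i ≤ h j) fun _ _ _ => le_trans

/-- The standard Levi subgroup of `PP F h`. -/
def MM (F : Type) [Field F] [Fintype F] (h : Fin n → ℕ) : Subgroup (GLn n F) :=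
  Pat (fun i j => h i = h j) fun _ _ _ => Eq.trans

/-- The unipotent radical of `PP F h`. -/
def NN (F : Type) [Field F] [Fintype F] (h : Fin n → ℕ) : Subgroup (GLn n F) :=
  Pat (fun i j => h i < h j) fun _ _ _ => lt_trans

/-- The intersection `NN F f ⊓ MM F h`. -/
def NM (F : Type) [Field F] [Fintype F] (f h : Fin n → ℕ) : Subgroup (GLn n F) :=
  Pat (fun i j => f i < f j ∧ h i = h j) fun _ _ _ h1 h2 => ⟨h1.1.trans h2.1, h1.2.trans h2.2⟩

/-- The factor of the Levi subgroup `MM F h` corresponding to the label `k`. -/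
def BB (F : Type) [Field F] [Fintype F] (h : Fin n → ℕ) (k : ℕ) : Subgroup (GLn n F) :=
  Pat (fun i j => h i = k ∧ h j = k) fun _ _ _ h1 h2 => ⟨h1.1, h2.2⟩

lemma mem_PP {h : Fin n → ℕ} {g : GLn n F} : g ∈ PP F h ↔ ∀ i j, h j < h i → g i j = 0 := by
  rw [PP, mem_Pat]
  refine forall₂_congr fun i j => ?_
  rw [not_le]
  refine imp_congr_right fun hij => ?_
  rw [if_neg]; rintro rfl; exact lt_irrefl _ hij

lemma mem_MM {h : Fin n → ℕ} {g : GLn n F} : g ∈ MM F h ↔ ∀ i j, h i ≠ h j → g i j = 0 := by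
  rw [MM, mem_Pat]
  refine forall₂_congr fun i j => ?_
  refine imp_congr_right fun hij => ?_
  rw [if_neg]; rintro rfl; exact hij rfl

lemma mem_NN {h : Fin n → ℕ} {g : GLn n F} :
    g ∈ NN F h ↔ ∀ i j, ¬ h i < h j → g i j = if i = j then 1 else 0 := mem_Pat

lemma MM_le_PP (h : Fin n → ℕ) : MM F h ≤ PP F h := Pat_mono fun _ _ => le_of_eq
lemma NN_le_PP (h : Fin n → ℕ) : NN F h ≤ PP F h := Pat_mono fun _ _ => le_of_lt
lemma NM_le_MM (f h : Fin n → ℕ) : NM F f h ≤ MM F h := Pat_mono fun _ _ h => h.2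
lemma NM_le_NN (f h : Fin n → ℕ) : NM F f h ≤ NN F f := Pat_mono fun _ _ h => h.1
lemma BB_le_MM (h : Fin n → ℕ) (k : ℕ) : BB F h k ≤ MM F h :=
  Pat_mono fun _ _ h => h.1.trans h.2.symm

/-- The block diagonal part of a matrix. -/
def lev (h : Fin n → ℕ) (A : Matrix (Fin n) (Fin n) F) : Matrix (Fin n) (Fin n) F :=
  fun i j => if h i = h j then A i j else 0

lemma lev_mul {h : Fin n → ℕ} {a b : GLn n F} (ha : a ∈ PP F h) (hb : b ∈ PP F h) :
    lev h ((a * b : GLn n F) : Matrix (Fin n) (Fin n) F) =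
      lev h (a : Matrix (Fin n) (Fin n) F) * lev h (b : Matrix (Fin n) (Fin n) F) := by
  rw [mem_PP] at ha hb
  ext i j
  rw [Matrix.mul_apply]
  simp only [lev]
  by_cases hij : h i = h j
  · rw [if_pos hij, mulEntry]
    refine Finset.sum_congr rfl fun l _ => ?_
    rcases lt_trichotomy (h i) (h l) with h1 | h1 | h1
    · rw [hb l j (by omega)]; simp
    · rw [if_pos h1, if_pos (h1.symm.trans hij)]
    · rw [ha i l h1]; simp
  · rw [if_neg hij, Finset.sum_eq_zero]
    intro l _
    by_cases h1 : h i = h l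
    · rw [if_neg (fun h2 => hij (h1.trans h2)), mul_zero]
    · rw [if_neg h1, zero_mul]

lemma lev_one (h : Fin n → ℕ) :
    lev h ((1 : GLn n F) : Matrix (Fin n) (Fin n) F) = 1 := by
  ext i j
  simp only [lev, oneEntry, Matrix.one_apply]
  by_cases hij : i = j
  · simp [hij]
  · simp [hij]

lemma mem_NN_iff {h : Fin n → ℕ} {g : GLn n F} :
    g ∈ NN F h ↔ g ∈ PP F h ∧ lev h (g : Matrix (Fin n) (Fin n) F) = 1 := by
  constructor
  · intro hg
    refine ⟨NN_le_PP h hg, ?_⟩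
    rw [mem_NN] at hg
    ext i j
    simp only [lev, Matrix.one_apply]
    by_cases hij : h i = h j
    · rw [if_pos hij, hg i j (by omega)]
    · rw [if_neg hij, if_neg]; rintro rfl; exact hij rfl
  · rintro ⟨h1, h2⟩
    rw [mem_PP] at h1
    rw [mem_NN]
    intro i j hij
    by_cases h3 : h i = h j
    · have := congrFun (congrFun h2 i) j
      simpa [lev, h3, Matrix.one_apply] using this
    · rw [h1 i j (by omega), if_neg]; rintro rfl; exact h3 rfl

lemma lev_of_mem_MM {h : Fin n → ℕ} {g : GLn n F} (hg : g ∈ MM F h) :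
    lev h (g : Matrix (Fin n) (Fin n) F) = g := by
  rw [mem_MM] at hg
  ext i j
  simp only [lev]
  split_ifs with h1
  · rfl
  · rw [hg i j h1]

lemma PP_decomp {h : Fin n → ℕ} {g : GLn n F} (hg : g ∈ PP F h) :
    ∃ m ∈ MM F h, (∀ i j, h i = h j → m i j = g i j) ∧ m⁻¹ * g ∈ NN F h ∧ g * m⁻¹ ∈ NN F h := by
  have hgi := (PP F h).inv_mem hg
  have h1 : lev h (g : Matrix (Fin n) (Fin n) F) *
      lev h ((g⁻¹ : GLn n F) : Matrix (Fin n) (Fin n) F) = 1 := by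
    rw [← lev_mul hg hgi, mul_inv_cancel, lev_one]
  have h2 : lev h ((g⁻¹ : GLn n F) : Matrix (Fin n) (Fin n) F) *
      lev h (g : Matrix (Fin n) (Fin n) F) = 1 := by
    rw [← lev_mul hgi hg, inv_mul_cancel, lev_one]
  let m : GLn n F := ⟨lev h g, lev h ((g⁻¹ : GLn n F) : Matrix (Fin n) (Fin n) F), h1, h2⟩
  have hme : ∀ i j, m i j = lev h (g : Matrix (Fin n) (Fin n) F) i j := fun _ _ => rfl
  have hm : m ∈ MM F h := by
    rw [mem_MM]
    intro i j hij
    rw [hme, lev, if_neg hij]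
  have hmi : lev h ((m⁻¹ : GLn n F) : Matrix (Fin n) (Fin n) F) =
      lev h ((g⁻¹ : GLn n F) : Matrix (Fin n) (Fin n) F) := by
    rw [lev_of_mem_MM ((MM F h).inv_mem hm)]; rfl
  have hmP := MM_le_PP h ((MM F h).inv_mem hm)
  refine ⟨m, hm, fun i j hij => ?_, ?_, ?_⟩
  · rw [hme, lev, if_pos hij]
  · rw [mem_NN_iff]
    refine ⟨(PP F h).mul_mem hmP hg, ?_⟩
    rw [lev_mul hmP hg, hmi, h2]
  · rw [mem_NN_iff]
    refine ⟨(PP F h).mul_mem hg hmP, ?_⟩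
    rw [lev_mul hg hmP, hmi, h1]

lemma PP_conj_NN {h : Fin n → ℕ} {m x : GLn n F} (hm : m ∈ PP F h) (hx : x ∈ NN F h) :
    m * x * m⁻¹ ∈ NN F h := by
  have hmi := (PP F h).inv_mem hm
  have hxP := NN_le_PP h hx
  rw [mem_NN_iff]
  refine ⟨(PP F h).mul_mem ((PP F h).mul_mem hm hxP) hmi, ?_⟩
  rw [lev_mul ((PP F h).mul_mem hm hxP) hmi, lev_mul hm hxP, (mem_NN_iff.1 hx).2, mul_one,
    ← lev_mul hm hmi, mul_inv_cancel, lev_one]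

lemma PP_conj_NN_iff {h : Fin n → ℕ} {m : GLn n F} (hm : m ∈ PP F h) (x : GLn n F) :
    x ∈ NN F h ↔ m * x * m⁻¹ ∈ NN F h := by
  refine ⟨PP_conj_NN hm, fun h1 => ?_⟩
  have := PP_conj_NN ((PP F h).inv_mem hm) h1
  simpa [mul_assoc] using this

lemma MM_inf_NN {h : Fin n → ℕ} {x : GLn n F} (h1 : x ∈ MM F h) (h2 : x ∈ NN F h) : x = 1 := by
  have h3 := (mem_NN_iff.1 h2).2
  rw [lev_of_mem_MM h1] at h3
  exact Units.ext h3

/-- Permutation matrices. -/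
def pm (F : Type) [Field F] (σ : Equiv.Perm (Fin n)) : GLn n F where
  val := Matrix.of fun i j => if i = σ j then 1 else 0
  inv := Matrix.of fun i j => if σ i = j then 1 else 0
  val_inv := by
    ext i j
    rw [Matrix.mul_apply, Finset.sum_eq_single (σ.symm i)]
    · simp [Matrix.one_apply]
    · intro b _ hb
      have : i ≠ σ b := fun h => hb (by simp [h])
      simp [this]
    · simp
  inv_val := by
    ext i j
    rw [Matrix.mul_apply, Finset.sum_eq_single (σ i)]
    · simp [Matrix.one_apply]
    · intro b _ hb
      simp [Ne.symm hb]
    · simp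

lemma pm_apply (σ : Equiv.Perm (Fin n)) (i j : Fin n) :
    pm F σ i j = if i = σ j then 1 else 0 := rfl

lemma pm_mul_apply (σ : Equiv.Perm (Fin n)) (g : GLn n F) (i j : Fin n) :
    (pm F σ * g) i j = g (σ.symm i) j := by
  rw [mulEntry, Finset.sum_eq_single (σ.symm i)]
  · simp [pm_apply]
  · intro b _ hb
    have : i ≠ σ b := fun h => hb (by simp [h])
    simp [pm_apply, this]
  · simp

lemma mul_pm_apply (σ : Equiv.Perm (Fin n)) (g : GLn n F) (i j : Fin n) :
    (g * pm F σ) i j = g i (σ j) := by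
  rw [mulEntry, Finset.sum_eq_single (σ j)]
  · simp [pm_apply]
  · intro b _ hb
    simp [pm_apply, hb]
  · simp

lemma pm_mul (σ τ : Equiv.Perm (Fin n)) : pm F (σ * τ) = pm F σ * pm F τ := by
  apply gl_ext
  intro i j
  rw [mul_pm_apply, pm_apply, pm_apply]; rfl

lemma pm_one : pm F (1 : Equiv.Perm (Fin n)) = 1 := by
  apply gl_ext
  intro i j
  rw [pm_apply, oneEntry]; rfl

lemma pm_inv (σ : Equiv.Perm (Fin n)) : (pm F σ)⁻¹ = pm F σ⁻¹ := by
  rw [inv_eq_iff_mul_eq_one, ← pm_mul, mul_inv_cancel, pm_one]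

lemma pm_conj_apply (σ : Equiv.Perm (Fin n)) (g : GLn n F) (i j : Fin n) :
    (pm F σ * g * (pm F σ)⁻¹) i j = g (σ.symm i) (σ.symm j) := by
  rw [pm_inv, mul_pm_apply, pm_mul_apply]; rfl

lemma pm_conj_apply' (σ : Equiv.Perm (Fin n)) (g : GLn n F) (i j : Fin n) :
    (pm F σ * g * (pm F σ)⁻¹) (σ i) (σ j) = g i j := by
  rw [pm_conj_apply]; simp

lemma pm_conj_mem_Pat (σ : Equiv.Perm (Fin n)) {R S : Fin n → Fin n → Prop}
    {hR : ∀ a b c, R a b → R b c → R a c} {hS : ∀ a b c, S a b → S b c → S a c}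
    (h : ∀ i j, R i j ↔ S (σ i) (σ j)) (g : GLn n F) :
    g ∈ Pat R hR ↔ pm F σ * g * (pm F σ)⁻¹ ∈ Pat S hS := by
  rw [mem_Pat, mem_Pat]
  constructor
  · intro hg i j hij
    rw [pm_conj_apply, hg]
    · simp
    · rw [h]; simpa using hij
  · intro hg i j hij
    rw [h] at hij
    have := hg _ _ hij
    rw [pm_conj_apply'] at this
    rw [this]; simp

/-- A matrix with nonzero determinant as an element of `GL_n`. -/
noncomputable def mkGL (A : Matrix (Fin n) (Fin n) F) (hA : A.det ≠ 0) : GLn n F :=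
  Matrix.GeneralLinearGroup.mkOfDetNeZero A hA

lemma mkGL_apply (A : Matrix (Fin n) (Fin n) F) (hA : A.det ≠ 0) (i j : Fin n) :
    mkGL A hA i j = A i j := rfl

end GLn

/-! ### Bruhat decomposition -/

section Bruhat

variable {n : ℕ} {F : Type} [Field F] [Fintype F]

/-- The transvection `1 + u ⊗ w`, where `w · u = 0`. -/
def tv (u w : Fin n → F) (h : ∑ l, w l * u l = 0) : GLn n F where
  val := Matrix.of fun i j => (if i = j then 1 else 0) + u i * w j
  inv := Matrix.of fun i j => (if i = j then 1 else 0) - u i * w j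
  val_inv := by
    ext i j
    rw [Matrix.mul_apply]
    simp only [Matrix.of_apply, add_mul, mul_sub, Finset.sum_add_distrib, Finset.sum_sub_distrib]
    have : ∑ x, u i * w x * (u x * w j) = 0 := by
      have : ∑ x, u i * w x * (u x * w j) = u i * w j * ∑ l, w l * u l := by
        rw [Finset.mul_sum]; exact Finset.sum_congr rfl fun l _ => by ring
      rw [this, h, mul_zero]
    rw [this]
    simp [Matrix.one_apply]
  inv_val := by
    ext i j
    rw [Matrix.mul_apply]
    simp only [Matrix.of_apply, sub_mul, mul_add, Finset.sum_add_distrib, Finset.sum_sub_distrib]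
    have : ∑ x, u i * w x * (u x * w j) = 0 := by
      have : ∑ x, u i * w x * (u x * w j) = u i * w j * ∑ l, w l * u l := by
        rw [Finset.mul_sum]; exact Finset.sum_congr rfl fun l _ => by ring
      rw [this, h, mul_zero]
    rw [this]
    simp [Matrix.one_apply]

lemma tv_apply (u w : Fin n → F) (h : ∑ l, w l * u l = 0) (i j : Fin n) :
    tv u w h i j = (if i = j then 1 else 0) + u i * w j := rfl

lemma mul_tv_apply (g : GLn n F) (u w : Fin n → F) (h : ∑ l, w l * u l = 0) (i j : Fin n) :
    (g * tv u w h) i j = g i j + (∑ l, g i l * u l) * w j := by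
  rw [mulEntry]
  simp only [tv_apply, mul_add, Finset.sum_add_distrib, Finset.sum_mul]
  simp [mul_assoc]

lemma tv_mul_apply (g : GLn n F) (u w : Fin n → F) (h : ∑ l, w l * u l = 0) (i j : Fin n) :
    (tv u w h * g) i j = g i j + u i * ∑ l, w l * g l j := by
  rw [mulEntry]
  simp only [tv_apply, add_mul, Finset.sum_add_distrib, Finset.mul_sum]
  simp [mul_assoc]

lemma exists_entry_ne_zero (g : GLn n F) (i : Fin n) : ∃ a, g i a ≠ 0 := by
  by_contra h
  push Not at h
  have : (g * g⁻¹) i i = 0 := by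
    rw [mulEntry]; exact Finset.sum_eq_zero fun l _ => by rw [h, zero_mul]
  rw [mul_inv_cancel, oneEntry, if_pos rfl] at this
  exact one_ne_zero this

/-- In each row of `S` the matrix `g` has a single nonzero entry, which is also the only nonzero
entry of its column. -/
def Proc (g : GLn n F) (S : Finset (Fin n)) : Prop :=
  ∀ i ∈ S, ∃ c, g i c ≠ 0 ∧ (∀ j, j ≠ c → g i j = 0) ∧ ∀ k, k ≠ i → g k c = 0

/-- One step of Gaussian elimination: pivoting in the row `i` at the nonzero entry with least label. -/
lemma bruhat_step (β : Fin n → ℕ) (hβ : Function.Injective β) (g : GLn n F)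
    (S : Finset (Fin n)) (hS : ∀ i ∈ S, ∀ j, β i < β j → j ∈ S) (hp : Proc g S)
    (i : Fin n) (hi : i ∉ S) (hmax : ∀ j, j ∉ S → β j ≤ β i) :
    ∃ x ∈ PP F β, ∃ y ∈ PP F β, Proc (x * g * y) (insert i S) := by
  obtain ⟨a, ha, hmin⟩ : ∃ a, g i a ≠ 0 ∧ ∀ b, g i b ≠ 0 → β a ≤ β b := by
    obtain ⟨a, ha, h⟩ := Finset.exists_min_image (Finset.univ.filter fun a => g i a ≠ 0) β
      (by obtain ⟨a, ha⟩ := exists_entry_ne_zero g i; exact ⟨a, by simpa using ha⟩)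
    exact ⟨a, by simpa using ha, fun b hb => h b (by simpa using hb)⟩
  have haS : ∀ k ∈ S, g k a = 0 := by
    intro k hk
    obtain ⟨c, hc, h1, h2⟩ := hp k hk
    refine h1 a ?_
    rintro rfl
    exact ha (h2 i (by rintro rfl; exact hi hk))
  let w : Fin n → F := fun j => if j = a then 0 else - g i j / g i a
  let u : Fin n → F := fun k => if k = i then 0 else - g k a / g i a
  have hy0 : ∑ l, w l * (Pi.single a 1 : Fin n → F) l = 0 := by
    rw [Finset.sum_eq_single a] <;> simp +contextual [w, Pi.single_apply]
  have hx0 : ∑ l, (Pi.single i 1 : Fin n → F) l * u l = 0 := by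
    rw [Finset.sum_eq_single i] <;> simp +contextual [u, Pi.single_apply]
  let y := tv (Pi.single a 1 : Fin n → F) w hy0
  let x := tv u (Pi.single i 1 : Fin n → F) hx0
  have hy : y ∈ PP F β := by
    rw [mem_PP]
    intro k j hkj
    have hne : k ≠ j := by rintro rfl; exact lt_irrefl _ hkj
    simp only [y, tv_apply, if_neg hne, zero_add]
    by_cases hka : k = a
    · subst hka
      have : g i j = 0 := by
        by_contra h
        exact absurd (hmin j h) (by omega)
      simp [w, this]
    · simp [Pi.single_apply, hka]
  have hx : x ∈ PP F β := by
    rw [mem_PP]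
    intro k j hkj
    have hne : k ≠ j := by rintro rfl; exact lt_irrefl _ hkj
    simp only [x, tv_apply, if_neg hne, zero_add]
    by_cases hka : j = i
    · subst hka
      have : k ∈ S := by
        by_contra h
        exact absurd (hmax k h) (by omega)
      simp [u, haS k this]
    · simp [Pi.single_apply, hka]
  refine ⟨x, hx, y, hy, ?_⟩
  have hgy : ∀ k j, (g * y) k j = g k j + g k a * w j := by
    intro k j
    simp only [y, mul_tv_apply]
    simp [Pi.single_apply]
  have hxgy : ∀ k j, (x * g * y) k j = g k j + g k a * w j + u k * (g i j + g i a * w j) := by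
    intro k j
    rw [mul_assoc]
    simp only [x, tv_mul_apply, hgy]
    simp [Pi.single_apply]
  have hrow : ∀ j, j ≠ a → g i j + g i a * w j = 0 := by
    intro j hj
    simp only [w, if_neg hj]
    field_simp; ring
  intro k hk
  rw [Finset.mem_insert] at hk
  by_cases hki : k = i
  · subst hki
    refine ⟨a, ?_, ?_, ?_⟩
    · rw [hxgy]; simp [w, u, ha]
    · intro j hj
      rw [hxgy, hrow j hj]; simp
    · intro l hl
      rw [hxgy]
      simp only [w, u, if_neg hl, if_true]
      field_simp; ring
  · have hkS : k ∈ S := hk.resolve_left hki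
    obtain ⟨c, hc, h1, h2⟩ := hp k hkS
    have hca : c ≠ a := by rintro rfl; exact hc (haS k hkS)
    have huk : u k = 0 := by simp [u, haS k hkS]
    have hwc : w c = 0 := by simp [w, h2 i (Ne.symm hki)]
    refine ⟨c, ?_, ?_, ?_⟩
    · rw [hxgy, huk, haS k hkS]; simpa using hc
    · intro j hj
      rw [hxgy, huk, haS k hkS, h1 j hj]; simp
    · intro l hl
      rw [hxgy, hrow c hca, h2 l hl, hwc]; simp

/-- The Bruhat decomposition with respect to the Borel subgroup of an injective labelling. -/
lemma bruhat (β : Fin n → ℕ) (hβ : Function.Injective β) (g : GLn n F) :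
    ∃ x ∈ PP F β, ∃ y ∈ PP F β, ∃ σ : Equiv.Perm (Fin n), g = x * pm F σ * y := by
  have key : ∀ m : ℕ, m ≤ n → ∃ S : Finset (Fin n), S.card = m ∧
      (∀ i ∈ S, ∀ j, β i < β j → j ∈ S) ∧
      ∃ x ∈ PP F β, ∃ y ∈ PP F β, Proc (x * g * y) S := by
    intro m
    induction m with
    | zero =>
      intro _
      exact ⟨∅, by simp, by simp, 1, one_mem _, 1, one_mem _, by intro i hi; simp at hi⟩
    | succ m ih =>
      intro hm
      obtain ⟨S, hc, hS, x, hx, y, hy, hp⟩ := ih (by omega)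
      obtain ⟨i, hi, hmax⟩ := Finset.exists_max_image (Finset.univ.filter fun a => a ∉ S) β
        (by
          by_contra h
          rw [Finset.not_nonempty_iff_eq_empty, Finset.filter_eq_empty_iff] at h
          have : S = Finset.univ := by ext a; simpa using h (Finset.mem_univ a)
          rw [this] at hc; simp at hc; omega)
      simp only [Finset.mem_filter, Finset.mem_univ, true_and] at hi hmax
      obtain ⟨x', hx', y', hy', hp'⟩ := bruhat_step β hβ _ S hS hp i hi hmax
      refine ⟨insert i S, by rw [Finset.card_insert_of_notMem hi, hc], ?_, x' * x,
        mul_mem hx' hx, y * y', mul_mem hy hy', by simpa [mul_assoc] using hp'⟩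
      intro k hk j hj
      rw [Finset.mem_insert] at *
      rcases hk with rfl | hk
      · right
        by_contra h
        exact absurd (hmax j h) (by omega)
      · exact Or.inr (hS k hk j hj)
  obtain ⟨S, hc, -, x, hx, y, hy, hp⟩ := key n le_rfl
  have hS : S = Finset.univ := by
    apply Finset.eq_univ_of_card; simpa using hc
  subst hS
  choose c hc1 hc2 hc3 using fun i => hp i (Finset.mem_univ i)
  have hinj : Function.Injective c := by
    intro i j hij
    by_contra h
    exact hc1 i (by rw [hij]; exact hc3 j i h)
  let τ : Equiv.Perm (Fin n) := Equiv.ofBijective c (Finite.injective_iff_bijective.1 hinj)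
  have hd : (x * g * y) * pm F τ ∈ PP F β := by
    rw [mem_PP]
    intro i j hij
    rw [mul_pm_apply]
    apply hc2
    intro h
    have : j = i := hinj h
    subst this; exact lt_irrefl _ hij
  refine ⟨x⁻¹ * ((x * g * y) * pm F τ), mul_mem (inv_mem hx) hd, y⁻¹, inv_mem hy, τ⁻¹, ?_⟩
  rw [← pm_inv]; group

/-- Bruhat decomposition for the parabolic subgroup of an arbitrary labelling. -/
lemma bruhatP (h : Fin n → ℕ) (g : GLn n F) :
    ∃ x ∈ PP F h, ∃ y ∈ PP F h, ∃ σ : Equiv.Perm (Fin n), g = x * pm F σ * y := by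
  have hlt : ∀ i j, h i < h j → h i * n + i.val < h j * n + j.val := by
    intro i j hij
    have := Nat.mul_le_mul_right n (Nat.succ_le_of_lt hij)
    have h2 := i.2
    rw [Nat.succ_mul] at this
    omega
  have hinj : Function.Injective (fun i : Fin n => h i * n + i.val) := by
    intro i j hij
    simp only at hij
    rcases lt_trichotomy (h i) (h j) with h1 | h1 | h1
    · have := hlt i j h1; omega
    · rw [h1] at hij; exact Fin.ext (by omega)
    · have := hlt j i h1; omega
  have hle : PP F (fun i : Fin n => h i * n + i.val) ≤ PP F h := by
    refine Pat_mono fun i j hij => ?_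
    by_contra hc
    have := hlt j i (by omega)
    exact absurd this (not_lt.2 hij)
  obtain ⟨x, hx, y, hy, σ, e⟩ := bruhat _ hinj g
  exact ⟨x, hle hx, y, hle hy, σ, e⟩

/-- A permutation matrix in a parabolic subgroup preserves the labelling. -/
lemma pm_mem_PP {h : Fin n → ℕ} {σ : Equiv.Perm (Fin n)} (hσ : pm F σ ∈ PP F h) (i : Fin n) :
    h (σ i) = h i := by
  have h1 : ∀ i, h (σ i) ≤ h i := by
    intro i
    by_contra hc
    have := mem_PP.1 hσ (σ i) i (by omega)
    simp [pm_apply] at this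
  have h2 : ∑ i, h (σ i) = ∑ i, h i := Equiv.sum_comp σ h
  exact (Finset.sum_eq_sum_iff_of_le fun i _ => h1 i).1 h2 i (Finset.mem_univ i)

end Bruhat

/-! ### Cuspidal data and Mackey's formula -/

section Mackey

variable {n : ℕ} {F : Type} [Field F] [Fintype F]
variable {V : Type} [AddCommGroup V] [Module ℂ V] [FiniteDimensional ℂ V]

/-- `Y` is an irreducible cuspidal representation of the Levi subgroup `MM F h`, with normalized
character `ω`, inside the space of vectors fixed by the unipotent radical `NN F h`. -/
structure CuspSub (ρ : Representation ℂ (GLn n F) V) (h : Fin n → ℕ) (Y : Submodule ℂ V)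
    (ω : GLn n F → ℂ) : Prop where
  irr : IrrSub ρ (MM F h) Y
  fixN : ∀ u ∈ NN F h, ∀ y ∈ Y, ρ u y = y
  cusp : ∀ f : Fin n → ℕ, (∃ i j, h i = h j ∧ f i ≠ f j) → ∀ y ∈ Y,
    (∀ u ∈ NM F f h, ρ u y = y) → y = 0
  cent : Cent ρ (MM F h) Y ω

/-- Two labels are equivalent if some permutation carries one block to the other and matches the
corresponding restrictions of `ω`. -/
def Eqv (F : Type) [Field F] [Fintype F] (h : Fin n → ℕ) (ω : GLn n F → ℂ) (k l : ℕ) : Prop :=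
  ∃ w : Equiv.Perm (Fin n), (∀ i, h i = k ↔ h (w i) = l) ∧
    ∀ x ∈ BB F h k, ω (pm F w * x * (pm F w)⁻¹) = ω x

/-- The idempotent of the unipotent radical. -/
noncomputable def eN (F : Type) [Field F] [Fintype F] (h : Fin n → ℕ) :
    MonoidAlgebra ℂ (GLn n F) := avg (NN F h) fun _ => 1

lemma of_mul_eN {h : Fin n → ℕ} {u : GLn n F} (hu : u ∈ NN F h) :
    of ℂ _ u * eN F h = eN F h := by
  rw [eN, of_mul_avg (MulOn.trivial _) hu, one_smul]

lemma eN_mul_of {h : Fin n → ℕ} {u : GLn n F} (hu : u ∈ NN F h) :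
    eN F h * of ℂ _ u = eN F h := by
  rw [eN, avg_mul_of (MulOn.trivial _) hu, one_smul]

lemma eN_mul_eN (h : Fin n → ℕ) : eN F h * eN F h = eN F h := avg_mul_avg (MulOn.trivial _)

lemma eN_comm_of {h : Fin n → ℕ} {m : GLn n F} (hm : m ∈ PP F h) :
    of ℂ _ m * eN F h = eN F h * of ℂ _ m :=
  of_mul_avg_conj (PP_conj_NN_iff hm) fun _ _ => rfl

lemma eN_comm {h : Fin n → ℕ} {a : MonoidAlgebra ℂ (GLn n F)} (ha : a ∈ Supp (PP F h)) :
    a * eN F h = eN F h * a := by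
  induction ha using Supp_induction with
  | h0 => simp
  | hadd a b _ _ ha hb => rw [add_mul, mul_add, ha, hb]
  | hs c a _ ha => rw [smul_mul_assoc, mul_smul_comm, ha]
  | hof m hm => exact eN_comm_of hm

lemma eN_comm' {h : Fin n → ℕ} {a : MonoidAlgebra ℂ (GLn n F)} (ha : a ∈ Supp (MM F h)) :
    a * eN F h = eN F h * a := eN_comm (Supp_mono (MM_le_PP h) ha)

/-- A permutation respecting the blocks of `h` normalizes the Levi subgroup. -/
lemma conj_mem_MM {h : Fin n → ℕ} {w : Equiv.Perm (Fin n)}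
    (hw : ∀ i j, h i = h j ↔ h (w i) = h (w j)) (x : GLn n F) :
    x ∈ MM F h ↔ pm F w * x * (pm F w)⁻¹ ∈ MM F h := pm_conj_mem_Pat w hw x

lemma block_iff {h : Fin n → ℕ} {w : Equiv.Perm (Fin n)}
    (hw : ∀ i j, h i = h j → h (w i) = h (w j)) (i j : Fin n) : h i = h j ↔ h (w i) = h (w j) := by
  have hk : ∀ k : ℕ, ∀ i j, h i = h j → h ((w ^ k) i) = h ((w ^ k) j) := by
    intro k
    induction k with
    | zero => intro i j h; simpa using h
    | succ k ih => intro i j h; rw [pow_succ]; exact ih _ _ (hw _ _ h)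
  refine ⟨hw i j, fun h1 => ?_⟩
  have h2 := hk (orderOf w - 1) _ _ h1
  rw [← Equiv.Perm.mul_apply, ← Equiv.Perm.mul_apply, ← pow_succ,
    Nat.sub_add_cancel (orderOf_pos w), pow_orderOf_eq_one] at h2
  exact h2

/-- Conjugation by a group element on the group algebra. -/
noncomputable def cj {G : Type} [Group G] (g : G) (a : MonoidAlgebra ℂ G) : MonoidAlgebra ℂ G :=
  of ℂ G g * a * of ℂ G g⁻¹

lemma of_inv_mul_of {G : Type} [Group G] (g : G) : of ℂ G g⁻¹ * of ℂ G g = 1 := by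
  rw [← map_mul, inv_mul_cancel, map_one]

lemma of_mul_of_inv {G : Type} [Group G] (g : G) : of ℂ G g * of ℂ G g⁻¹ = 1 := by
  rw [← map_mul, mul_inv_cancel, map_one]

lemma cj_mul {G : Type} [Group G] (g : G) (a b : MonoidAlgebra ℂ G) :
    cj g (a * b) = cj g a * cj g b := by
  simp only [cj, mul_assoc]
  rw [← mul_assoc (of ℂ G g⁻¹) (of ℂ G g), of_inv_mul_of, one_mul]

lemma cj_smul {G : Type} [Group G] (g : G) (c : ℂ) (a : MonoidAlgebra ℂ G) :
    cj g (c • a) = c • cj g a := by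
  simp [cj]

lemma cj_sum {G : Type} [Group G] {ι : Type} (s : Finset ι) (g : G) (a : ι → MonoidAlgebra ℂ G) :
    cj g (∑ i ∈ s, a i) = ∑ i ∈ s, cj g (a i) := by
  simp [cj, Finset.mul_sum, Finset.sum_mul]

lemma cj_of {G : Type} [Group G] (g x : G) : cj g (of ℂ G x) = of ℂ G (g * x * g⁻¹) := by
  simp only [cj, ← map_mul]

lemma of_mul_eq_cj {G : Type} [Group G] (g : G) (a : MonoidAlgebra ℂ G) :
    of ℂ G g * a = cj g a * of ℂ G g := by
  rw [cj, mul_assoc, of_inv_mul_of, mul_one]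

lemma cj_inv_cj {G : Type} [Group G] (g : G) (a : MonoidAlgebra ℂ G) : cj g (cj g⁻¹ a) = a := by
  simp only [cj, inv_inv, mul_assoc, of_mul_of_inv, mul_one]
  rw [← mul_assoc, of_mul_of_inv, one_mul]

lemma cj_mem_Supp {G : Type} [Group G] [Fintype G] {M N : Subgroup G} {g : G}
    (hg : ∀ x ∈ M, g * x * g⁻¹ ∈ N) {a : MonoidAlgebra ℂ G} (ha : a ∈ Supp M) :
    cj g a ∈ Supp N := by
  induction ha using Supp_induction with
  | h0 => simp [cj]
  | hadd a b _ _ ha hb =>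
    have : cj g (a + b) = cj g a + cj g b := by simp [cj, mul_add, add_mul]
    rw [this]; exact add_mem ha hb
  | hs c a _ ha => rw [cj_smul]; exact Subalgebra.smul_mem _ ha c
  | hof m hm => rw [cj_of]; exact of_mem_Supp (hg m hm)

lemma Supp_comm_sum {G : Type} [Group G] [Fintype G] {M : Subgroup G} (x : G)
    {z : MonoidAlgebra ℂ G} (hz : z ∈ Supp M) :
    (∑ m : M, of ℂ G ((m : G) * x * (m : G)⁻¹)) * z =
      z * ∑ m : M, of ℂ G ((m : G) * x * (m : G)⁻¹) := by
  induction hz using Supp_induction with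
  | h0 => simp
  | hadd a b _ _ ha hb => rw [add_mul, mul_add, ha, hb]
  | hs c a _ ha => rw [smul_mul_assoc, mul_smul_comm, ha]
  | hof k hk =>
    rw [Finset.sum_mul, Finset.mul_sum]
    refine (Fintype.sum_equiv (Equiv.mulLeft (⟨k, hk⟩ : M)) _ _ fun m => ?_).symm
    rw [← map_mul, ← map_mul]
    congr 1
    simp [mul_assoc]

lemma cj_classSum {G : Type} [Group G] [Fintype G] {M : Subgroup G} {g : G}
    (hg : ∀ x, x ∈ M ↔ g * x * g⁻¹ ∈ M) (x : G) :
    cj g (∑ m : M, of ℂ G ((m : G) * x * (m : G)⁻¹)) =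
      ∑ m : M, of ℂ G ((m : G) * (g * x * g⁻¹) * (m : G)⁻¹) := by
  rw [cj_sum]
  let e : M ≃ M :=
    { toFun := fun m => ⟨g * m * g⁻¹, (hg m).1 m.2⟩
      invFun := fun m => ⟨g⁻¹ * m * g, (hg _).2 (by simpa [mul_assoc] using m.2)⟩
      left_inv := fun m => Subtype.ext (by simp [mul_assoc])
      right_inv := fun m => Subtype.ext (by simp [mul_assoc]) }
  refine Fintype.sum_equiv e _ _ fun m => ?_
  rw [cj_of]
  congr 1
  simp [e, mul_assoc]

variable {ρ : Representation ℂ (GLn n F) V} {h : Fin n → ℕ} {Y : Submodule ℂ V}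
  {ω : GLn n F → ℂ} {v : V} {p : MonoidAlgebra ℂ (GLn n F)}

/-- Class sums act on the primitive idempotent through `ω`. -/
lemma RankOne.classSum {G : Type} [Group G] [Fintype G] {M : Subgroup G}
    {ρ : Representation ℂ G V} {ω : G → ℂ} {p : MonoidAlgebra ℂ G}
    (hp : RankOne ρ M Y v p) (hω : Cent ρ M Y ω) (hv : v ∈ Y) {x : G} (hx : x ∈ M) :
    (∑ m : M, of ℂ G ((m : G) * x * (m : G)⁻¹)) * p = ((Fintype.card M : ℂ) * ω x) • p := by
  have h1 := hp.left ((∑ m : M, of ℂ G ((m : G) * x * (m : G)⁻¹)) -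
    ((Fintype.card M : ℂ) * ω x) • 1) (sub_mem (sum_mem fun m _ => of_mem_Supp
      (M.mul_mem (M.mul_mem m.2 hx) (M.inv_mem m.2))) (Subalgebra.smul_mem _ (one_mem _) _)) (by
      simp only [act]
      rw [map_sub, map_sum, LinearMap.sub_apply, LinearMap.sum_apply]
      have := hω.sum_eq x hx v hv
      simp only [Representation.asAlgebraHom_of]
      rw [this]; simp)
  rw [sub_mul, smul_mul_assoc, one_mul] at h1
  exact sub_eq_zero.1 h1

/-- The Bruhat cell of `w` does not contribute when `w` splits a block: the double coset then
produces vectors of `Y` fixed by a unipotent radical `NM` of the Levi subgroup, and these vanish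
by cuspidality. -/
lemma mackey_zero (hc : CuspSub ρ h Y ω) (hv : v ∈ Y) (hp : RankOne ρ (MM F h) Y v p)
    (w : Equiv.Perm (Fin n)) {m : GLn n F} (hm : m ∈ MM F h)
    (hw : ∃ i j, h i = h j ∧ h (w i) ≠ h (w j)) :
    eN F h * of ℂ _ (pm F w) * eN F h * (of ℂ _ m * p) = 0 := by
  set e' := avg (NM F (fun i => h (w i)) h) (fun _ => (1 : ℂ)) with he'
  have he's : e' ∈ Supp (MM F h) := Supp_mono (NM_le_MM _ _) (avg_mem_Supp _ _)
  have h1 : eN F h * of ℂ _ (pm F w) * e' = eN F h * of ℂ _ (pm F w) := by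
    refine mul_avg_eq_self (MulOn.trivial _) fun u hu => ?_
    rw [one_smul, mul_assoc, ← map_mul]
    have h2 : pm F w * u * (pm F w)⁻¹ ∈ NN F h :=
      (pm_conj_mem_Pat w (R := fun i j => h (w i) < h (w j)) (hR := fun _ _ _ => lt_trans)
        (fun _ _ => Iff.rfl) u).1 (NM_le_NN _ _ hu)
    have h3 : pm F w * u = (pm F w * u * (pm F w)⁻¹) * pm F w := by group
    rw [h3, map_mul, ← mul_assoc, eN_mul_of h2]
  have h4 : e' * (of ℂ _ m * p) = 0 := by
    rw [← mul_assoc]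
    refine hp.left _ (mul_mem he's (of_mem_Supp hm)) ?_
    rw [act_mul, act_of]
    refine hc.cusp (fun i => h (w i)) hw _
      (hc.irr.stable.act_mem he's (hc.irr.stable m hm v hv)) fun u hu => ?_
    rw [rho_act_avg ρ (MulOn.trivial _) hu, one_smul]
  rw [← h1, mul_assoc _ e', eN_comm' he's, mul_assoc, mul_assoc, mul_assoc, h4]
  simp

/-- When `w` permutes the blocks it normalizes the Levi subgroup, and the idempotent `p` can be
moved to the left through the operator of the Bruhat cell of `w`. -/
lemma mackey_block (hp : RankOne ρ (MM F h) Y v p)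
    (w : Equiv.Perm (Fin n)) {m m' : GLn n F} (hm : m ∈ MM F h) (hm' : m' ∈ MM F h)
    (hw : ∀ i j, h i = h j ↔ h (w i) = h (w j)) :
    p * of ℂ _ m * (eN F h * of ℂ _ (pm F w) * eN F h * (of ℂ _ m' * p)) =
      (p * (of ℂ _ m * cj (pm F w) (of ℂ _ m')) * cj (pm F w) p) *
        (eN F h * of ℂ _ (pm F w) * eN F h) := by
  have h1 : of ℂ _ m' * p ∈ Supp (MM F h) := mul_mem (of_mem_Supp hm') hp.supp
  have h2 : cj (pm F w) (of ℂ _ m' * p) ∈ Supp (MM F h) :=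
    cj_mem_Supp (fun x hx => (conj_mem_MM hw x).1 hx) h1
  have e1 : eN F h * of ℂ _ (pm F w) * eN F h * (of ℂ _ m' * p) =
      cj (pm F w) (of ℂ _ m' * p) * (eN F h * of ℂ _ (pm F w) * eN F h) := by
    rw [mul_assoc _ (eN F h), ← eN_comm' h1, ← mul_assoc, mul_assoc (eN F h), of_mul_eq_cj,
      ← mul_assoc, ← eN_comm' h2]
    simp only [mul_assoc]
  rw [e1, cj_mul]
  simp only [mul_assoc]

/-- A permutation `w` of the blocks which contributes to Mackey's formula preserves `ω`: class
sums act on the two sides of `p * z * cj (pm F w) p` by the values of `ω` at `x` and its conjugate. -/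
lemma mackey_omega (hc : CuspSub ρ h Y ω) (hv : v ∈ Y) (hp : RankOne ρ (MM F h) Y v p)
    (w : Equiv.Perm (Fin n)) (hw : ∀ i j, h i = h j ↔ h (w i) = h (w j))
    {z : MonoidAlgebra ℂ (GLn n F)} (hz : z ∈ Supp (MM F h)) (h0 : p * z * cj (pm F w) p ≠ 0)
    {x : GLn n F} (hx : x ∈ MM F h) : ω (pm F w * x * (pm F w)⁻¹) = ω x := by
  set x' := pm F w * x * (pm F w)⁻¹ with hx'
  have hxM : x' ∈ MM F h := (conj_mem_MM hw x).1 hx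
  set K : GLn n F → MonoidAlgebra ℂ (GLn n F) :=
    fun x => ∑ m : MM F h, of ℂ _ ((m : GLn n F) * x * (m : GLn n F)⁻¹) with hK
  have hcK : cj (pm F w) (K x) = K x' := by
    exact cj_classSum (conj_mem_MM hw) x
  have h1 : K x' * (p * z * cj (pm F w) p) =
      ((Fintype.card (MM F h) : ℂ) * ω x') • (p * z * cj (pm F w) p) := by
    rw [← mul_assoc, ← mul_assoc, hp.classSum hc.cent hv hxM]
    simp only [smul_mul_assoc]
  have h2 : K x' * (p * z * cj (pm F w) p) =
      ((Fintype.card (MM F h) : ℂ) * ω x) • (p * z * cj (pm F w) p) := by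
    rw [← mul_assoc, Supp_comm_sum x' (mul_mem hp.supp hz), mul_assoc]
    change p * z * (K x' * _) = _
    rw [← hcK, ← cj_mul, hp.classSum hc.cent hv hx, cj_smul, mul_smul_comm]
  have h3 := smul_left_injective ℂ h0 (h1.symm.trans h2)
  exact mul_left_cancel₀ (card_ne_zero' (MM F h)) h3

/-- The idempotent cutting out a line in the `ω`-cuspidal part of the Jacquet module. -/
noncomputable def epsi (h : Fin n → ℕ) (p : MonoidAlgebra ℂ (GLn n F)) :
    MonoidAlgebra ℂ (GLn n F) := eN F h * p

lemma epsi_idem (hp : RankOne ρ (MM F h) Y v p) : epsi h p * epsi h p = epsi h p := by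
  rw [epsi, mul_assoc, ← mul_assoc p, eN_comm' hp.supp, mul_assoc, hp.idem, ← mul_assoc, eN_mul_eN]

lemma act_epsi {V' : Type} [AddCommGroup V'] [Module ℂ V'] [FiniteDimensional ℂ V']
    {ρ' : Representation ℂ (GLn n F) V'} {Y' : Submodule ℂ V'}
    (hp : p ∈ Supp (MM F h)) (hfix : ∀ u ∈ NN F h, ∀ y ∈ Y', ρ' u y = y) {y : V'} (hy : y ∈ Y') :
    act ρ' (epsi h p) y = act ρ' p y := by
  rw [epsi, ← eN_comm' hp, act_mul, eN, act_avg_eq_self ρ' (MulOn.trivial _)]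
  intro u hu; rw [hfix u hu y hy, one_smul]

lemma epsi_sandwich (hp : RankOne ρ (MM F h) Y v p) {x y m m' : GLn n F}
    {w : Equiv.Perm (Fin n)} (hm : m ∈ MM F h) (hm' : m' ∈ MM F h)
    (hx : m⁻¹ * x ∈ NN F h) (hy : y * m'⁻¹ ∈ NN F h) :
    epsi h p * of ℂ _ (x * pm F w * y) * epsi h p =
      p * of ℂ _ m * (eN F h * of ℂ _ (pm F w) * eN F h * (of ℂ _ m' * p)) := by
  have e1 : x = m * (m⁻¹ * x) := by group
  have e2 : y = (y * m'⁻¹) * m' := by group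
  have e3 : epsi h p * of ℂ _ x = p * of ℂ _ m * eN F h := by
    rw [e1, epsi, map_mul, ← eN_comm' hp.supp, ← mul_assoc, mul_assoc p, 
      ← eN_comm_of (MM_le_PP h hm), mul_assoc, mul_assoc, eN_mul_of hx]
    simp only [mul_assoc]
  have e4 : of ℂ _ y * epsi h p = eN F h * (of ℂ _ m' * p) := by
    conv_lhs => rw [e2]
    rw [epsi, map_mul, mul_assoc, ← mul_assoc (of ℂ _ m'), eN_comm_of (MM_le_PP h hm'),
      ← mul_assoc, ← mul_assoc, of_mul_eN hy]
    simp only [mul_assoc]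
  rw [map_mul, map_mul, ← mul_assoc, ← mul_assoc, e3, mul_assoc, e4]
  simp only [mul_assoc]

/-- Mackey's formula: the algebra `ε ℂ[G] ε` cut out by the idempotent `ε = epsi h p` of a cuspidal
datum is spanned by one element for each `w` in the symmetric group, hence lies in a space of
dimension at most `n!`. -/
lemma mackey_span (hc : CuspSub ρ h Y ω) (hv : v ∈ Y) (hp : RankOne ρ (MM F h) Y v p) :
    ∃ S : Submodule ℂ (MonoidAlgebra ℂ (GLn n F)), Module.finrank ℂ S ≤ n.factorial ∧
      ∀ g, epsi h p * of ℂ _ g * epsi h p ∈ S := by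
  have key : ∀ w : Equiv.Perm (Fin n), ∃ X : MonoidAlgebra ℂ (GLn n F),
      ∀ m ∈ MM F h, ∀ m' ∈ MM F h, ∃ c : ℂ,
      p * of ℂ _ m * (eN F h * of ℂ _ (pm F w) * eN F h * (of ℂ _ m' * p)) = c • X := by
    intro w
    by_cases hw : ∃ i j, h i = h j ∧ h (w i) ≠ h (w j)
    · exact ⟨0, fun m hm m' hm' => ⟨0, by rw [mackey_zero hc hv hp w hm' hw]; simp⟩⟩
    · push Not at hw
      have hb := block_iff hw
      have hcM : ∀ a ∈ Supp (MM F h), cj (pm F w) a ∈ Supp (MM F h) := fun a ha =>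
        cj_mem_Supp (fun x hx => (conj_mem_MM hb x).1 hx) ha
      by_cases h0 : ∃ z ∈ Supp (MM F h), p * z * cj (pm F w) p ≠ 0
      · obtain ⟨z, hz, h0⟩ := h0
        refine ⟨(p * z * cj (pm F w) p) * (eN F h * of ℂ _ (pm F w) * eN F h),
          fun m hm m' hm' => ?_⟩
        obtain ⟨c, hc⟩ := min_min_smul (p' := cj (pm F w) p) hp.min (by
          intro a ha
          have ha' : cj (pm F w)⁻¹ a ∈ Supp (MM F h) := by
            refine cj_mem_Supp (fun x hx => ?_) ha
            rw [conj_mem_MM hb]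
            simpa [mul_assoc] using hx
          obtain ⟨c, hc⟩ := hp.min _ ha'
          refine ⟨c, ?_⟩
          rw [← cj_smul, ← hc, cj_mul, cj_mul, cj_inv_cj]) hp.supp (hcM _ hp.supp) hp.idem hz
          (z := of ℂ _ m * cj (pm F w) (of ℂ _ m'))
          (mul_mem (of_mem_Supp hm) (hcM _ (of_mem_Supp hm'))) h0
        refine ⟨c, ?_⟩
        rw [mackey_block hp w hm hm' hb, hc, smul_mul_assoc]
      · push Not at h0
        refine ⟨0, fun m hm m' hm' => ⟨0, ?_⟩⟩
        rw [mackey_block hp w hm hm' hb, h0 _ (mul_mem (of_mem_Supp hm) (hcM _ (of_mem_Supp hm')))]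
        simp
  choose X hX using key
  refine ⟨Submodule.span ℂ (Set.range X), ?_, fun g => ?_⟩
  · refine (finrank_range_le_card X).trans ?_
    simp [Fintype.card_perm]
  · obtain ⟨x, hx, y, hy, w, rfl⟩ := bruhatP h g
    obtain ⟨m, hm, -, h1, -⟩ := PP_decomp hx
    obtain ⟨m', hm', -, -, h2⟩ := PP_decomp hy
    rw [epsi_sandwich hp hm hm' h1 h2]
    obtain ⟨c, hc⟩ := hX w m hm m' hm'
    rw [hc]
    exact Submodule.smul_mem _ _ (Submodule.subset_span ⟨w, rfl⟩)

/-- Inequivalent labels merged by a coarser labelling `f` do not interact: the Hecke algebra of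
the parabolic subgroup `PP F f` is one-dimensional. -/
lemma mackey_min (hc : CuspSub ρ h Y ω) (hv : v ∈ Y) (hp : RankOne ρ (MM F h) Y v p)
    {f : Fin n → ℕ} (hf : ∀ i j, h i ≤ h j → f i ≤ f j)
    (hne : ∀ i j, f i = f j → h i ≠ h j → ¬ Eqv F h ω (h i) (h j)) {g : GLn n F}
    (hg : g ∈ PP F f) : ∃ c : ℂ, epsi h p * of ℂ _ g * epsi h p = c • epsi h p := by
  have hle : PP F h ≤ PP F f := Pat_mono hf
  by_cases h0 : epsi h p * of ℂ _ g * epsi h p = 0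
  · exact ⟨0, by rw [h0, zero_smul]⟩
  obtain ⟨x, hx, y, hy, w, rfl⟩ := bruhatP h g
  have hwP : pm F w ∈ PP F f := by
    have := mul_mem (mul_mem (inv_mem (hle hx)) hg) (inv_mem (hle hy))
    simpa [mul_assoc] using this
  obtain ⟨m, hm, -, h1, -⟩ := PP_decomp hx
  obtain ⟨m', hm', -, -, h2⟩ := PP_decomp hy
  rw [epsi_sandwich hp hm hm' h1 h2] at h0
  have hw : ∀ i j, h i = h j → h (w i) = h (w j) := by
    by_contra hw
    push Not at hw
    exact h0 (by rw [mackey_zero hc hv hp w hm' hw, mul_zero])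
  have hb := block_iff hw
  rw [mackey_block hp w hm hm' hb] at h0
  have hcM : ∀ a ∈ Supp (MM F h), cj (pm F w) a ∈ Supp (MM F h) := fun a ha =>
    cj_mem_Supp (fun x hx => (conj_mem_MM hb x).1 hx) ha
  have hid : ∀ i, h (w i) = h i := by
    intro i
    by_contra hi
    refine hne i (w i) (pm_mem_PP hwP i).symm (Ne.symm hi) ⟨w, fun j => hb j i, fun x hx => ?_⟩
    exact mackey_omega hc hv hp w hb
      (mul_mem (of_mem_Supp hm) (hcM _ (of_mem_Supp hm'))) (left_ne_zero_of_mul h0)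
      (BB_le_MM h _ hx)
  have hwM : pm F w ∈ MM F h := by
    rw [mem_MM]
    intro i j hij
    rw [pm_apply, if_neg]
    rintro rfl
    exact hij (hid j)
  obtain ⟨c, hc⟩ := hp.min (of ℂ _ (m * pm F w * m')) (of_mem_Supp
    (mul_mem (mul_mem hm hwM) hm'))
  refine ⟨c, ?_⟩
  have e1 : eN F h * of ℂ _ (pm F w) * eN F h = eN F h * of ℂ _ (pm F w) := by
    rw [mul_assoc, eN_comm_of (MM_le_PP h hwM), ← mul_assoc, eN_mul_eN]
  have e2 : p * of ℂ _ m * eN F h = eN F h * (p * of ℂ _ m) :=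
    eN_comm' (mul_mem hp.supp (of_mem_Supp hm))
  rw [epsi_sandwich hp hm hm' h1 h2, e1, ← mul_assoc, ← mul_assoc, ← mul_assoc, e2, epsi, ← mul_smul_comm, ← hc]
  simp only [map_mul, mul_assoc]

end Mackey

/-! ### Existence, conjugation and interchange of cuspidal data -/

section General

variable {G : Type} [Group G] [Fintype G]
variable {V : Type} [AddCommGroup V] [Module ℂ V] [FiniteDimensional ℂ V]

/-- The image of an irreducible subrepresentation under an intertwining map, provided it is
nonzero. -/
lemma IrrSub.map {ρ : Representation ℂ G V} {M M' : Subgroup G} {Y : Submodule ℂ V}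
    (h : IrrSub ρ M Y) (T : V →ₗ[ℂ] V) (φ : G → G) (hφ : ∀ x ∈ M, φ x ∈ M')
    (hφ' : ∀ x ∈ M', ∃ z ∈ M, φ z = x)
    (hT : ∀ x ∈ M, ∀ y ∈ Y, T (ρ x y) = ρ (φ x) (T y)) (hne : Y.map T ≠ ⊥) :
    IrrSub ρ M' (Y.map T) := by
  refine ⟨hne, ?_, ?_⟩
  · intro x hx y hy
    obtain ⟨z, hz, rfl⟩ := hφ' x hx
    obtain ⟨y, hy, rfl⟩ := hy
    rw [← hT z hz y hy]
    exact ⟨_, h.stable z hz y hy, rfl⟩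
  · intro Z hZ hZs
    by_cases hZ0 : Z = ⊥
    · exact Or.inl hZ0
    right
    have h1 := (h.minimal (Y ⊓ Z.comap T) inf_le_left (by
      intro x hx y hy
      refine ⟨h.stable x hx y hy.1, ?_⟩
      show T (ρ x y) ∈ Z
      rw [hT x hx y hy.1]
      exact hZs _ (hφ x hx) _ hy.2)).resolve_left (by
      obtain ⟨z, hz, hz0⟩ := Submodule.exists_mem_ne_zero_of_ne_bot hZ0
      obtain ⟨y, hy, rfl⟩ := hZ hz
      intro h2
      have : y ∈ Y ⊓ Z.comap T := ⟨hy, hz⟩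
      rw [h2] at this
      exact hz0 (by rw [(Submodule.mem_bot ℂ).1 this, map_zero]))
    refine le_antisymm hZ ?_
    rintro _ ⟨y, hy, rfl⟩
    rw [← h1] at hy
    exact hy.2

lemma Cent.map {ρ : Representation ℂ G V} {M : Subgroup G} {Y : Submodule ℂ V} {ω : G → ℂ}
    (h : Cent ρ M Y ω) (hs : Stable ρ M Y) (T : V →ₗ[ℂ] V)
    (hT : ∀ x ∈ M, ∀ y ∈ Y, T (ρ x y) = ρ x (T y)) : Cent ρ M (Y.map T) ω := by
  refine ⟨?_, h.eq_zero⟩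
  rintro x hx _ ⟨y, hy, rfl⟩
  rw [← map_smul, ← h.sum_eq x hx y hy, map_sum]
  refine Finset.sum_congr rfl fun m _ => ?_
  rw [hT _ (M.mul_mem (M.mul_mem m.2 hx) (M.inv_mem m.2)) y hy]

lemma Cent.map_conj {ρ : Representation ℂ G V} {M M' : Subgroup G} {Y : Submodule ℂ V}
    {ω : G → ℂ} (h : Cent ρ M Y ω) (g : G) (hM : ∀ x, x ∈ M ↔ g * x * g⁻¹ ∈ M') :
    Cent ρ M' (Y.map (ρ g)) (fun x => ω (g⁻¹ * x * g)) := by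
  have hM' : ∀ x, x ∈ M' ↔ g⁻¹ * x * g ∈ M := by
    intro x; rw [hM]; simp [mul_assoc]
  let e : M ≃ M' :=
    { toFun := fun m => ⟨g * m * g⁻¹, (hM m).1 m.2⟩
      invFun := fun m => ⟨g⁻¹ * m * g, (hM' _).1 m.2⟩
      left_inv := fun m => Subtype.ext (by simp [mul_assoc])
      right_inv := fun m => Subtype.ext (by simp [mul_assoc]) }
  refine ⟨?_, fun x hx => h.eq_zero _ fun h' => hx ((hM' x).2 h')⟩
  rintro x hx _ ⟨y, hy, rfl⟩
  rw [← map_smul, ← Fintype.card_congr e, ← h.sum_eq _ ((hM' x).1 hx) y hy, map_sum]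
  refine (Fintype.sum_equiv e _ _ fun m => ?_).symm
  rw [← rho_mul, ← rho_mul]
  congr 2
  simp [e, mul_assoc]

/-- A criterion for the nonvanishing at `1` of the product of two averaging idempotents and an
element of the group algebra of `M`. -/
lemma coeff_avg_avg {N' N M : Subgroup G} {θ : G → ℂ} {p : MonoidAlgebra ℂ G} (hp : p ∈ Supp M)
    (hp1 : p.coeff 1 ≠ 0) (hθ : MulOn θ N')
    (h : ∀ a ∈ N', ∀ b ∈ N, a * b ∈ M → p.coeff (a * b)⁻¹ = θ a * p.coeff 1) :
    (avg N' θ * (avg N (fun _ => 1) * p)).coeff 1 ≠ 0 := by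
  have h1 : (avg N' θ * (avg N (fun _ => 1) * p)).coeff 1 =
      (Fintype.card N' : ℂ)⁻¹ * ((Fintype.card N : ℂ)⁻¹ *
        ∑ a : N', ∑ b : N, (θ a)⁻¹ * p.coeff ((a * b : G)⁻¹)) := by
    have e1 : avg N' θ * (avg N (fun _ => 1) * p) =
        (Fintype.card N' : ℂ)⁻¹ • (Fintype.card N : ℂ)⁻¹ •
          ∑ a : N', ∑ b : N, (θ a)⁻¹ • (of ℂ G (a * b : G) * p) := by
      rw [avg, avg]
      simp only [smul_mul_assoc, mul_smul_comm, Finset.sum_mul, Finset.mul_sum, inv_one, one_smul,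
        Finset.smul_sum, map_mul, mul_assoc]
      rw [Finset.sum_comm]
      refine Finset.sum_congr rfl fun a _ => Finset.sum_congr rfl fun b _ => ?_
      rw [smul_comm (Fintype.card N : ℂ)⁻¹]
    rw [e1]
    simp only [MonoidAlgebra.coeff_smul, MonoidAlgebra.coeff_sum, Finsupp.smul_apply,
      Finsupp.finset_sum_apply, smul_eq_mul, coeff_of_mul, mul_one]
  have h2 : ∀ (a : N') (b : N), (θ a)⁻¹ * p.coeff ((a * b : G)⁻¹) =
      p.coeff 1 * if (a * b : G) ∈ M then 1 else 0 := by
    intro a b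
    by_cases hM : (a * b : G) ∈ M
    · rw [h a a.2 b b.2 hM, ← mul_assoc, inv_mul_cancel₀ (hθ.ne_zero a.2), if_pos hM]; simp
    · rw [(mem_Supp_iff.1 hp) _ (fun h5 => hM (by simpa using M.inv_mem h5)), if_neg hM]
      simp
  rw [h1]
  simp only [h2, ← Finset.mul_sum]
  refine mul_ne_zero (inv_ne_zero (card_ne_zero' _)) (mul_ne_zero (inv_ne_zero (card_ne_zero' _))
    (mul_ne_zero hp1 ?_))
  have h5 : (∑ a : N', ∑ b : N, if (a * b : G) ∈ M then (1 : ℂ) else 0) =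
      ((∑ a : N', ∑ b : N, if (a * b : G) ∈ M then 1 else 0 : ℕ) : ℂ) := by push_cast; rfl
  rw [h5, Nat.cast_ne_zero]
  intro h6
  have h7 := Finset.sum_eq_zero_iff.1 h6 1 (Finset.mem_univ _)
  have h8 := Finset.sum_eq_zero_iff.1 h7 1 (Finset.mem_univ _)
  simp [M.one_mem] at h8

end General

section Cusp

variable {n : ℕ} {F : Type} [Field F] [Fintype F]
variable {V : Type} [AddCommGroup V] [Module ℂ V] [FiniteDimensional ℂ V]
variable {ρ : Representation ℂ (GLn n F) V} {h : Fin n → ℕ} {Y : Submodule ℂ V}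
  {ω : GLn n F → ℂ}

lemma Pat_congr {R S : Fin n → Fin n → Prop} {hR : ∀ a b c, R a b → R b c → R a c}
    {hS : ∀ a b c, S a b → S b c → S a c} (h : ∀ i j, R i j ↔ S i j) :
    (Pat R hR : Subgroup (GLn n F)) = Pat S hS :=
  le_antisymm (Pat_mono fun i j => (h i j).1) (Pat_mono fun i j => (h i j).2)

lemma eq_iff_of_lt_iff {h h' : Fin n → ℕ} (hh : ∀ i j, h i < h j ↔ h' i < h' j) (i j : Fin n) :
    h i = h j ↔ h' i = h' j := by
  have h1 := hh i j
  have h2 := hh j i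
  omega

lemma CuspSub.congr (hc : CuspSub ρ h Y ω) {h' : Fin n → ℕ}
    (hh : ∀ i j, h i < h j ↔ h' i < h' j) : CuspSub ρ h' Y ω := by
  have he := eq_iff_of_lt_iff hh
  have hM : MM F h = MM F h' := Pat_congr he
  have hN : NN F h = NN F h' := Pat_congr hh
  refine ⟨hM ▸ hc.irr, hN ▸ hc.fixN, ?_, hM ▸ hc.cent⟩
  rintro f ⟨i, j, h1, h2⟩ y hy hfix
  refine hc.cusp f ⟨i, j, (he i j).2 h1, h2⟩ y hy fun u hu => hfix u ?_
  rwa [NM, Pat_congr (S := fun i j => f i < f j ∧ h' i = h' j)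
    (hS := fun _ _ _ h1 h2 => ⟨h1.1.trans h2.1, h1.2.trans h2.2⟩) (fun i j => by rw [he i j])] at hu

/-- A labelling may be replaced by one with values below `n` that orders the positions in the same
way. -/
lemma exists_compress (h : Fin n → ℕ) :
    ∃ h' : Fin n → Fin n, ∀ i j, h i < h j ↔ (h' i).val < (h' j).val := by
  have hlt : ∀ i, ((Finset.univ.image h).filter (· < h i)).card < n := by
    intro i
    calc _ < (Finset.univ.image h).card := by
          apply Finset.card_lt_card
          refine ⟨Finset.filter_subset _ _, fun h1 => ?_⟩
          have := h1 (Finset.mem_image_of_mem h (Finset.mem_univ i))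
          simp at this
      _ ≤ n := by simpa using Finset.card_image_le (s := Finset.univ) (f := h)
  refine ⟨fun i => ⟨_, hlt i⟩, fun i j => ?_⟩
  simp only
  constructor
  · intro hij
    apply Finset.card_lt_card
    refine ⟨fun x hx => ?_, fun h1 => ?_⟩
    · rw [Finset.mem_filter] at *; exact ⟨hx.1, hx.2.trans hij⟩
    · have := @h1 (h i) (by simp [hij])
      simp at this
  · intro hij
    by_contra hc
    refine absurd hij (not_lt.2 (Finset.card_le_card fun x hx => ?_))
    rw [Finset.mem_filter] at *; exact ⟨hx.1, hx.2.trans_le (not_lt.1 hc)⟩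

/-- Every nonzero representation of `GL_n(F)` contains a cuspidal datum. -/
lemma exists_cuspSub (ρ : Representation ℂ (GLn n F) V) (hV : ∃ v : V, v ≠ 0) :
    ∃ (h : Fin n → Fin n) (Y : Submodule ℂ V) (ω : GLn n F → ℂ),
      CuspSub ρ (fun i => (h i).val) Y ω := by
  let P : (Fin n → ℕ) → Prop := fun h => ∃ v : V, v ≠ 0 ∧ ∀ u ∈ NN F h, ρ u v = v
  have hP0 : P fun _ => 0 := by
    obtain ⟨v, hv⟩ := hV
    refine ⟨v, hv, fun u hu => ?_⟩
    have : u = 1 := gl_ext fun i j => by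
      rw [mem_NN.1 hu i j (by simp), oneEntry]
    rw [this, map_one]; rfl
  obtain ⟨⟨h, hPh⟩, -, hmax⟩ := WellFounded.has_min
    (measure (fun h : {h // P h} => n - (Finset.univ.image h.1).card)).wf Set.univ
    ⟨⟨_, hP0⟩, trivial⟩
  have hmax' : ∀ h', P h' → (Finset.univ.image h').card ≤ (Finset.univ.image h).card := by
    intro h' hP'
    have h1 := hmax ⟨h', hP'⟩ trivial
    simp only [measure, invImage, InvImage, WellFoundedRelation.rel, sizeOf_nat] at h1
    have h2 : (Finset.univ.image h').card ≤ n := by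
      simpa using Finset.card_image_le (s := Finset.univ) (f := h')
    have h3 : ¬ (n - (Finset.univ.image h').card < n - (Finset.univ.image h).card) := h1
    omega
  let X : Submodule ℂ V :=
    { carrier := {v | ∀ u ∈ NN F h, ρ u v = v}
      add_mem' := fun ha hb u hu => by rw [map_add, ha u hu, hb u hu]
      zero_mem' := fun u hu => map_zero _
      smul_mem' := fun c a ha u hu => by rw [map_smul, ha u hu] }
  have hX0 : X ≠ ⊥ := by
    obtain ⟨v, hv, hfix⟩ := hPh
    intro h0
    have : v ∈ X := hfix
    rw [h0] at this
    exact hv this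
  have hXs : Stable ρ (MM F h) X := by
    intro m hm v hv u hu
    have h1 : u * m = m * (m⁻¹ * u * m) := by group
    rw [← rho_mul, h1, rho_mul, hv]
    have := PP_conj_NN (inv_mem (MM_le_PP h hm)) hu
    rwa [inv_inv] at this
  obtain ⟨Y, hY, hirr⟩ := exists_irrSub ρ (MM F h) X hX0 hXs
  obtain ⟨ω, hω⟩ := hirr.exists_cent
  have hc : CuspSub ρ h Y ω := by
    refine ⟨hirr, fun u hu y hy => hY hy u hu, ?_, hω⟩
    rintro f ⟨i0, j0, hh0, hf0⟩ y hy hfix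
    by_contra hy0
    obtain ⟨f', hf'⟩ := exists_compress f
    let h2 : Fin n → ℕ := fun i => h i * n + f' i
    have hdiv : ∀ i, h2 i / n = h i := by
      intro i
      have hn : 0 < n := i.pos
      simp only [h2]
      rw [mul_comm, Nat.mul_add_div hn, Nat.div_eq_of_lt (f' i).2, add_zero]
    have hlt : ∀ i j, h2 i < h2 j → h i ≤ h j := by
      intro i j hij
      rw [← hdiv i, ← hdiv j]; exact Nat.div_le_div_right hij.le
    have hP2 : P h2 := by
      refine ⟨y, hy0, fun u hu => ?_⟩
      have huP : u ∈ PP F h := (Pat_mono hlt) hu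
      obtain ⟨m, hm, hm1, hm2, -⟩ := PP_decomp huP
      have e : u = m * (m⁻¹ * u) := by group
      rw [e, rho_mul, hY hy _ hm2]
      refine hfix m ?_
      rw [NM, mem_Pat]
      intro i j hij
      by_cases h3 : h i = h j
      · rw [hm1 i j h3, mem_NN.1 hu i j]
        intro h4
        refine hij ⟨(hf' i j).2 ?_, h3⟩
        simp only [h2, h3] at h4
        omega
      · rw [mem_MM.1 hm i j h3, if_neg]
        rintro rfl; exact h3 rfl
    have h3 := hmax' h2 hP2
    have h4 : (Finset.univ.image h) = (Finset.univ.image h2).image (· / n) := by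
      rw [Finset.image_image]
      exact Finset.image_congr fun i _ => (hdiv i).symm
    have h5 : ((Finset.univ.image h2).image (· / n)).card = (Finset.univ.image h2).card :=
      le_antisymm Finset.card_image_le (h4 ▸ h3)
    have h6 := Finset.card_image_iff.1 h5
    have h7 : h2 i0 = h2 j0 := h6 (by simp) (by simp) (by simp only [hdiv, hh0])
    have h8 : (f' i0).val = f' j0 := by simp only [h2, hh0] at h7; omega
    exact hf0 ((eq_iff_of_lt_iff hf' i0 j0).2 h8)
  obtain ⟨h', hh'⟩ := exists_compress h
  exact ⟨h', Y, ω, hc.congr hh'⟩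

/-- Conjugation of a cuspidal datum by a permutation matrix. -/
lemma CuspSub.conj (hc : CuspSub ρ h Y ω) (σ : Equiv.Perm (Fin n)) :
    CuspSub ρ (fun i => h (σ.symm i)) (Y.map (ρ (pm F σ)))
      (fun x => ω ((pm F σ)⁻¹ * x * pm F σ)) := by
  have hM : ∀ x, x ∈ MM F h ↔ pm F σ * x * (pm F σ)⁻¹ ∈ MM F fun i => h (σ.symm i) :=
    pm_conj_mem_Pat σ fun i j => by simp
  have hN : ∀ x, x ∈ NN F h ↔ pm F σ * x * (pm F σ)⁻¹ ∈ NN F fun i => h (σ.symm i) :=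
    pm_conj_mem_Pat σ fun i j => by simp
  have hinj : ∀ y, ρ (pm F σ) y = 0 → y = 0 := by
    intro y hy
    rw [← rho_inv_self ρ (pm F σ) y, hy, map_zero]
  refine ⟨hc.irr.map _ (fun x => pm F σ * x * (pm F σ)⁻¹) (fun x => (hM x).1) (fun x hx =>
    ⟨(pm F σ)⁻¹ * x * pm F σ, (hM _).2 (by convert hx using 1; group), by group⟩)
    (fun x hx y hy => ?_) ?_, ?_, ?_, hc.cent.map_conj _ hM⟩
  · rw [← rho_mul, ← rho_mul]
    congr 2; group
  · intro h0
    obtain ⟨y, hy, hy0⟩ := Submodule.exists_mem_ne_zero_of_ne_bot hc.irr.ne_bot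
    have : ρ (pm F σ) y ∈ Y.map (ρ (pm F σ)) := ⟨y, hy, rfl⟩
    rw [h0] at this
    exact hy0 (hinj y this)
  · rintro u hu _ ⟨y, hy, rfl⟩
    have e : u * pm F σ = pm F σ * ((pm F σ)⁻¹ * u * pm F σ) := by group
    rw [← rho_mul, e, rho_mul, hc.fixN _ ((hN _).2 (by convert hu using 1; group)) y hy]
  · rintro f ⟨i, j, h1, h2⟩ _ ⟨y, hy, rfl⟩ hfix
    rw [hc.cusp (fun i => f (σ i)) ⟨σ.symm i, σ.symm j, h1, by simpa using h2⟩ y hy, map_zero]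
    intro u hu
    have hu' : pm F σ * u * (pm F σ)⁻¹ ∈ NM F f fun i => h (σ.symm i) :=
      (pm_conj_mem_Pat σ (fun i j => by simp) u).1 hu
    have h3 := hfix _ hu'
    rw [← rho_mul] at h3
    have e : pm F σ * u * (pm F σ)⁻¹ * pm F σ = pm F σ * u := by group
    rw [e, rho_mul] at h3
    rw [← sub_eq_zero]
    apply hinj
    rw [map_sub, h3, sub_self]

lemma Eqv.refl (k : ℕ) : Eqv F h ω k k := ⟨1, fun i => by simp, fun x _ => by simp [pm_one]⟩

lemma conj_mem_BB {h : Fin n → ℕ} {w : Equiv.Perm (Fin n)} {k l : ℕ}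
    (hw : ∀ i, h i = k ↔ h (w i) = l) (x : GLn n F) :
    x ∈ BB F h k ↔ pm F w * x * (pm F w)⁻¹ ∈ BB F h l :=
  pm_conj_mem_Pat w (fun i j => by rw [hw i, hw j]) x

lemma Eqv.symm {k l : ℕ} (hk : Eqv F h ω k l) : Eqv F h ω l k := by
  obtain ⟨w, hw, hx⟩ := hk
  refine ⟨w⁻¹, fun i => by rw [hw]; simp, fun x hxl => ?_⟩
  have e : x = pm F w * (pm F w⁻¹ * x * (pm F w⁻¹)⁻¹) * (pm F w)⁻¹ := by
    rw [← pm_inv]; group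
  rw [← hx]
  · rw [← e]
  · rw [conj_mem_BB hw, ← e]; exact hxl

lemma Eqv.trans {k l m : ℕ} (hk : Eqv F h ω k l) (hl : Eqv F h ω l m) : Eqv F h ω k m := by
  obtain ⟨w, hw, hx⟩ := hk
  obtain ⟨w', hw', hx'⟩ := hl
  refine ⟨w' * w, fun i => by rw [hw, hw']; rfl, fun x hxk => ?_⟩
  rw [← hx x hxk, ← hx' _ ((conj_mem_BB hw x).1 hxk), pm_mul]
  congr 1; group

/-- Equivalence of labels is unaffected by conjugation with a permutation matrix. -/
lemma Eqv.of_conj (σ : Equiv.Perm (Fin n)) {k l : ℕ}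
    (hk : Eqv F (fun i => h (σ.symm i)) (fun x => ω ((pm F σ)⁻¹ * x * pm F σ)) k l) :
    Eqv F h ω k l := by
  obtain ⟨w, hw, hx⟩ := hk
  refine ⟨σ⁻¹ * w * σ, fun i => ?_, fun x hxk => ?_⟩
  · have := hw (σ i)
    simpa using this
  · have hx' : pm F σ * x * (pm F σ)⁻¹ ∈ BB F (fun i => h (σ.symm i)) k :=
      (pm_conj_mem_Pat σ (fun i j => by simp) x).1 hxk
    have := hx _ hx'
    rw [pm_mul, pm_mul, ← pm_inv]
    convert this using 2 <;> group

lemma Eqv.relabel {h' : Fin n → ℕ} {k l k' l' : ℕ} (hk : ∀ i, h i = k ↔ h' i = k')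
    (hl : ∀ i, h i = l ↔ h' i = l') (he : Eqv F h ω k l) : Eqv F h' ω k' l' := by
  obtain ⟨w, hw, hx⟩ := he
  refine ⟨w, fun i => by rw [← hk, ← hl, hw], fun x hxk => hx x ?_⟩
  rwa [BB, Pat_congr (S := fun i j => h' i = k' ∧ h' j = k') (fun i j => by rw [hk, hk])]

/-- Two adjacent inequivalent labels may be interchanged. -/
lemma CuspSub.swap (hc : CuspSub ρ h Y ω) (k : ℕ) (hk : ¬ Eqv F h ω k (k + 1)) :
    ∃ Y', CuspSub ρ (fun i => Equiv.swap k (k + 1) (h i)) Y' ω := by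
  set h' : Fin n → ℕ := fun i => Equiv.swap k (k + 1) (h i) with hh'
  let f : Fin n → ℕ := fun i => if h i = k + 1 then k else h i
  have hsw : ∀ x, Equiv.swap k (k + 1) x = if x = k then k + 1 else if x = k + 1 then k else x :=
    fun x => Equiv.swap_apply_def _ _ _
  have he : ∀ i j, h i = h j ↔ h' i = h' j := fun i j => by simp [hh']
  have hM : MM F h' = MM F h := Pat_congr fun i j => (he i j).symm
  have hf : ∀ i j, h i ≤ h j → f i ≤ f j := by
    intro i j hij; simp only [f]; split_ifs <;> omega
  have hfne : ∀ i j, f i = f j → h i ≠ h j → ¬ Eqv F h ω (h i) (h j) := by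
    intro i j h1 h2 h3
    simp only [f] at h1
    split_ifs at h1 with h4 h5 h5
    · omega
    · rw [h4, ← h1] at h3; exact hk h3.symm
    · rw [h5, h1] at h3; exact hk h3
    · exact h2 h1
  have hle : NN F h' ≤ PP F f := by
    refine Pat_mono fun i j hij => ?_
    simp only [hh', hsw] at hij
    simp only [f]
    split_ifs at hij ⊢ <;> omega
  set a := eN F h' with ha
  have hinj : ∀ y ∈ Y, act ρ a y = 0 → y = 0 := by
    intro v hv h0
    by_contra hv0
    obtain ⟨p, hp⟩ := hc.irr.exists_rankOne hv hv0
    refine act_ne_zero_of_coeff (epsi_idem hp) (fun g hg => mackey_min hc hv hp hf hfne hg)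
      (Supp_mono hle (avg_mem_Supp _ _)) ?_
      (by rw [act_epsi hp.supp hc.fixN hv, hp.fix]) hv0 h0
    refine coeff_avg_avg hp.supp hp.one (MulOn.trivial _) fun x hx y hy hxy => ?_
    suffices hs : x * y = 1 by rw [hs]; simp
    have hxP : x ∈ PP F h := by
      have := mul_mem (MM_le_PP h hxy) (inv_mem (NN_le_PP h hy))
      simpa [mul_assoc] using this
    have hxN : x ∈ NN F h := by
      rw [mem_NN]
      intro i j hij
      rcases eq_or_lt_of_le (not_lt.1 hij) with h1 | h1
      · rw [mem_NN.1 hx i j]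
        have := (he i j).1 h1.symm
        omega
      · rw [mem_PP.1 hxP i j h1, if_neg]
        rintro rfl; exact lt_irrefl _ h1
    exact MM_inf_NN hxy (mul_mem hxN hy)
  have hcomm : ∀ x ∈ MM F h, ∀ y, act ρ a (ρ x y) = ρ x (act ρ a y) := by
    intro x hx y
    rw [← hM] at hx
    rw [← act_of, ← act_mul, ← act_mul, eN_comm_of (MM_le_PP _ hx)]
  refine ⟨Y.map (act ρ a), ?_, ?_, ?_, ?_⟩
  · rw [hM]
    refine hc.irr.map _ id (fun x hx => hx) (fun x hx => ⟨x, hx, rfl⟩)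
      (fun x hx y _ => hcomm x hx y) fun h0 => ?_
    obtain ⟨y, hy, hy0⟩ := Submodule.exists_mem_ne_zero_of_ne_bot hc.irr.ne_bot
    have : act ρ a y ∈ Y.map (act ρ a) := ⟨y, hy, rfl⟩
    rw [h0] at this
    exact hy0 (hinj y hy this)
  · rintro u hu _ ⟨y, hy, rfl⟩
    rw [ha, eN, rho_act_avg ρ (MulOn.trivial _) hu, one_smul]
  · rintro g ⟨i, j, h1, h2⟩ _ ⟨y, hy, rfl⟩ hfix
    rw [hc.cusp g ⟨i, j, (he i j).2 h1, h2⟩ y hy, map_zero]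
    intro u hu
    have huM := NM_le_MM _ _ hu
    rw [← sub_eq_zero]
    refine hinj _ (sub_mem (hc.irr.stable u huM y hy) hy) ?_
    rw [map_sub, hcomm u huM, hfix u, sub_self]
    rwa [NM, Pat_congr (S := fun i j => g i < g j ∧ h i = h j)
      (hS := fun _ _ _ h1 h2 => ⟨h1.1.trans h2.1, h1.2.trans h2.2⟩) (fun i j => by rw [he i j])]
  · rw [hM]
    exact hc.cent.map hc.irr.stable _ fun x hx y _ => hcomm x hx y

end Cusp

/-! ### Moving the representatives to the last positions -/

section Potential

variable {n : ℕ} {F : Type} [Field F] [Fintype F]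
variable {V : Type} [AddCommGroup V] [Module ℂ V] [FiniteDimensional ℂ V]

/-- `D` is a set of representatives of the labels for the equivalence `Eqv`. -/
def Transv (F : Type) [Field F] [Fintype F] (h : Fin n → Fin n) (ω : GLn n F → ℂ)
    (D : Finset (Fin n)) : Prop :=
  (∀ k ∈ D, ∀ l ∈ D, Eqv F (fun i => (h i).val) ω k l → k = l) ∧
    ∀ k : Fin n, ∃ d ∈ D, Eqv F (fun i => (h i).val) ω k d

lemma exists_transv (h : Fin n → Fin n) (ω : GLn n F → ℂ) : ∃ D, Transv F h ω D := by
  let S : Setoid (Fin n) := ⟨fun k l => Eqv F (fun i => (h i).val) ω k l,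
    fun k => Eqv.refl _, fun h => h.symm, fun h h' => h.trans h'⟩
  refine ⟨Finset.univ.image fun k : Fin n => (Quotient.mk S k).out, ?_, fun k =>
    ⟨(Quotient.mk S k).out, by simp, ?_⟩⟩
  · simp only [Finset.mem_image, Finset.mem_univ, true_and]
    rintro _ ⟨k, rfl⟩ _ ⟨l, rfl⟩ hkl
    have h1 : Quotient.mk S (Quotient.mk S k).out = Quotient.mk S (Quotient.mk S l).out :=
      Quotient.sound hkl
    rw [Quotient.out_eq, Quotient.out_eq] at h1
    rw [h1]
  · have : Quotient.mk S k = Quotient.mk S (Quotient.mk S k).out := (Quotient.out_eq _).symm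
    exact Quotient.exact this

/-- Every nonzero representation contains a cuspidal datum for which some set of representatives
of the equivalence classes of labels consists of the largest labels. -/
lemma exists_good (ρ : Representation ℂ (GLn n F) V) (hV : ∃ v : V, v ≠ 0) :
    ∃ (h : Fin n → Fin n) (Y : Submodule ℂ V) (ω : GLn n F → ℂ) (D : Finset (Fin n)),
      CuspSub ρ (fun i => (h i).val) Y ω ∧ Transv F h ω D ∧ ∀ k ∈ D, ∀ l, k ≤ l → l ∈ D := by
  obtain ⟨h0, Y0, ω, hc0⟩ := exists_cuspSub ρ hV
  obtain ⟨D0, hD0⟩ := exists_transv h0 ω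
  let Q : (Fin n → Fin n) × Finset (Fin n) → Prop := fun x =>
    (∃ Y, CuspSub ρ (fun i => (x.1 i).val) Y ω) ∧ Transv F x.1 ω x.2
  obtain ⟨⟨h, D⟩, hQ, hmax⟩ := Finset.exists_max_image (Finset.univ.filter Q)
    (fun x => ∑ k ∈ x.2, k.val) ⟨(h0, D0), by simpa [Q] using ⟨⟨Y0, hc0⟩, hD0⟩⟩
  simp only [Finset.mem_filter, Finset.mem_univ, true_and] at hQ hmax
  obtain ⟨⟨Y, hc⟩, hD1, hD2⟩ := hQ
  refine ⟨h, Y, ω, D, hc, ⟨hD1, hD2⟩, ?_⟩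
  by_contra hcon
  push Not at hcon
  obtain ⟨k, hk, l, hkl, hl⟩ := hcon
  obtain ⟨c, hcm, hcmax⟩ := Finset.exists_max_image (D.filter (· ≤ l)) id ⟨k, by simp [hk, hkl]⟩
  simp only [Finset.mem_filter, id, and_imp] at hcm hcmax
  obtain ⟨hcD, hcl⟩ := hcm
  have hcl' : c < l := lt_of_le_of_ne hcl (by rintro rfl; exact hl hcD)
  have hlt : c.val + 1 < n := lt_of_le_of_lt (Nat.succ_le_of_lt hcl') l.2
  let c' : Fin n := ⟨c.val + 1, hlt⟩
  have hc'D : c' ∉ D := by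
    intro h1
    have h2 : c' ≤ c := hcmax c' h1 hcl'
    exact absurd h2 (not_le.2 (Fin.lt_def.2 (Nat.lt_succ_self _)))
  let sw : Equiv.Perm (Fin n) := Equiv.swap c c'
  have hsum : ∑ k ∈ D, k.val < ∑ k ∈ D.image sw, k.val := by
    rw [Finset.sum_image fun a _ b _ h => sw.injective h]
    have hswc : (sw c).val = c.val + 1 := by simp [sw, c']
    refine Finset.sum_lt_sum (fun d hd => ?_) ⟨c, hcD, by omega⟩
    by_cases h1 : d = c
    · subst h1; omega
    · rw [show sw d = d from Equiv.swap_apply_of_ne_of_ne h1 (by rintro rfl; exact hc'D hd)]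
  have hfin : ∀ h', Q (h', D.image sw) → False := fun h' hq =>
    absurd (hmax _ hq) (not_le.2 hsum)
  by_cases he : Eqv F (fun i => (h i).val) ω c c'
  · have hsw : ∀ d : Fin n, Eqv F (fun i => (h i).val) ω d (sw d) := by
      intro d
      by_cases h1 : d = c
      · subst h1; simpa [sw] using he
      by_cases h2 : d = c'
      · rw [h2]; simpa [sw] using he.symm
      · rw [show sw d = d from Equiv.swap_apply_of_ne_of_ne h1 h2]; exact Eqv.refl _
    refine hfin h ⟨⟨Y, hc⟩, ?_, fun k => ?_⟩
    · simp only [Finset.mem_image]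
      rintro _ ⟨a, ha, rfl⟩ _ ⟨b, hb, rfl⟩ hab
      rw [hD1 a ha b hb (((hsw a).trans hab).trans (hsw b).symm)]
    · obtain ⟨d, hd, hkd⟩ := hD2 k
      exact ⟨sw d, Finset.mem_image_of_mem _ hd, hkd.trans (hsw d)⟩
  · obtain ⟨Y', hY'⟩ := hc.swap c.val he
    have hval : ∀ d : Fin n, Equiv.swap c.val (c.val + 1) d.val = (sw d).val := by
      intro d
      simp only [sw, Equiv.swap_apply_def, Fin.ext_iff, c']
      split_ifs <;> simp_all
    have hrel : ∀ a b : Fin n, Eqv F (fun i => (h i).val) ω a b ↔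
        Eqv F (fun i => (sw (h i)).val) ω (sw a) (sw b) := by
      intro a b
      have h1 : ∀ a i, (h i).val = a.val ↔ (sw (h i)).val = (sw a).val := by
        intro a i; rw [← Fin.ext_iff, ← Fin.ext_iff, sw.apply_eq_iff_eq]
      exact ⟨Eqv.relabel (h1 a) (h1 b), Eqv.relabel (fun i => (h1 a i).symm)
        fun i => (h1 b i).symm⟩
    refine hfin (fun i => sw (h i)) ⟨⟨Y', by simpa only [hval] using hY'⟩, ?_, fun k => ?_⟩
    · simp only [Finset.mem_image]
      rintro _ ⟨a, ha, rfl⟩ _ ⟨b, hb, rfl⟩ hab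
      rw [hD1 a ha b hb ((hrel a b).2 hab)]
    · obtain ⟨d, hd, hkd⟩ := hD2 (sw.symm k)
      exact ⟨sw d, Finset.mem_image_of_mem _ hd, by simpa using (hrel _ _).1 hkd⟩

end Potential

/-! ### Degenerate Whittaker vectors: groups and characters -/

section Whittaker

variable {n : ℕ} {F : Type} [Field F] [Fintype F]
variable {V : Type} [AddCommGroup V] [Module ℂ V] [FiniteDimensional ℂ V]

/-- Upper unitriangular matrices in the Levi subgroup `MM F h`, trivial in the columns `< t`. -/
def HH (F : Type) [Field F] [Fintype F] (h : Fin n → ℕ) (t : ℕ) : Subgroup (GLn n F) :=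
  Pat (fun a b => a < b ∧ t ≤ b.val ∧ h a = h b)
    fun _ _ _ h1 h2 => ⟨h1.1.trans h2.1, h2.2.1, h1.2.2.trans h2.2.2⟩

/-- Block matrices which differ from the identity only in the upper left rectangle. -/
def JJ (F : Type) [Field F] [Fintype F] (h : Fin n → ℕ) (j : Fin n) : Subgroup (GLn n F) :=
  Pat (fun a b => a < j ∧ b ≤ j ∧ h a = h b)
    fun _ _ _ h1 h2 => ⟨h1.1, h2.2.1, h1.2.2.trans h2.2.2⟩

/-- The column group of the column `j`. -/
def CC (F : Type) [Field F] [Fintype F] (h : Fin n → ℕ) (j : Fin n) : Subgroup (GLn n F) :=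
  Pat (fun a b => a < j ∧ b = j ∧ h a = h b)
    fun _ _ _ h1 h2 => ⟨h1.1, h2.2.1, h1.2.2.trans h2.2.2⟩

/-- The sum of the superdiagonal entries. -/
def sd (u : GLn n F) : F := ∑ b : Fin n, ∑ a : Fin n, if a.val + 1 = b.val then u a b else 0

/-- The linear form on the column `j` with coefficients `y`. -/
def lin (j : Fin n) (y : Fin n → F) (c : GLn n F) : F := ∑ a, if a < j then y a * c a j else 0

lemma HH_le_MM (h : Fin n → ℕ) (t : ℕ) : HH F h t ≤ MM F h := Pat_mono fun _ _ h => h.2.2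
lemma JJ_le_MM (h : Fin n → ℕ) (j : Fin n) : JJ F h j ≤ MM F h := Pat_mono fun _ _ h => h.2.2
lemma CC_le_JJ (h : Fin n → ℕ) (j : Fin n) : CC F h j ≤ JJ F h j :=
  Pat_mono fun _ _ h => ⟨h.1, h.2.1.le, h.2.2⟩
lemma CC_le_HH (h : Fin n → ℕ) (j : Fin n) : CC F h j ≤ HH F h j.val :=
  Pat_mono fun _ _ h => ⟨h.2.1 ▸ h.1, by rw [h.2.1], h.2.2⟩
lemma HH_mono (h : Fin n → ℕ) {t t' : ℕ} (ht : t ≤ t') : HH F h t' ≤ HH F h t :=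
  Pat_mono fun _ _ h => ⟨h.1, ht.trans h.2.1, h.2.2⟩

lemma sd_mul {h : Fin n → ℕ} {u v : GLn n F} (hu : u ∈ HH F h 0) (hv : v ∈ HH F h 0) :
    sd (u * v) = sd u + sd v := by
  rw [HH, mem_Pat] at hu hv
  simp only [sd, ← Finset.sum_add_distrib]
  refine Finset.sum_congr rfl fun b _ => Finset.sum_congr rfl fun a _ => ?_
  split_ifs with hab
  · have hne : a ≠ b := by rintro rfl; omega
    rw [mulEntry, ← Finset.sum_subset (Finset.subset_univ {a, b}) ?_, Finset.sum_pair hne]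
    · rw [hu a a (by simp), hv b b (by simp)]; simp [add_comm]
    · intro l _ hl
      simp only [Finset.mem_insert, Finset.mem_singleton, not_or] at hl
      by_cases h1 : a < l
      · rw [hv l b (fun h2 => by
          have h3 := Fin.lt_def.1 h1; have h4 := Fin.lt_def.1 h2.1; omega), if_neg hl.2, mul_zero]
      · rw [hu a l (fun h2 => h1 h2.1), if_neg (Ne.symm hl.1), zero_mul]
  · simp

lemma lin_mul {h : Fin n → ℕ} {j : Fin n} (y : Fin n → F) {c d : GLn n F} (hc : c ∈ CC F h j)
    (hd : d ∈ CC F h j) : lin j y (c * d) = lin j y c + lin j y d := by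
  rw [CC, mem_Pat] at hc hd
  simp only [lin, ← Finset.sum_add_distrib]
  refine Finset.sum_congr rfl fun a _ => ?_
  split_ifs with haj
  · have hne : a ≠ j := haj.ne
    rw [mulEntry, ← Finset.sum_subset (Finset.subset_univ {a, j}) ?_, Finset.sum_pair hne]
    · rw [hc a a (fun h1 => hne h1.2.1), hd j j (fun h1 => lt_irrefl _ h1.1)]; simp; ring
    · intro l _ hl
      simp only [Finset.mem_insert, Finset.mem_singleton, not_or] at hl
      rw [hc a l (fun h1 => hl.2 h1.2.1), if_neg (Ne.symm hl.1), zero_mul]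
  · simp

lemma sd_one : sd (1 : GLn n F) = 0 := by
  refine Finset.sum_eq_zero fun b _ => Finset.sum_eq_zero fun a _ => ?_
  split_ifs with hab
  · rw [oneEntry, if_neg]; rintro rfl; omega
  · rfl

lemma lin_one (j : Fin n) (y : Fin n → F) : lin j y (1 : GLn n F) = 0 := by
  refine Finset.sum_eq_zero fun a _ => ?_
  split_ifs with hab
  · rw [oneEntry, if_neg hab.ne, mul_zero]
  · rfl

variable (ψ : AddChar F ℂ)

lemma mulOn_sd (h : Fin n → ℕ) (t : ℕ) : MulOn (fun u => ψ (sd u)) (HH F h t) :=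
  MulOn.mono (N := HH F h 0) ⟨by simp [sd_one], fun a ha b hb => by
    simp only [sd_mul ha hb, AddChar.map_add_eq_mul]⟩ (HH_mono h (Nat.zero_le _))

lemma mulOn_lin (h : Fin n → ℕ) (j : Fin n) (y : Fin n → F) :
    MulOn (fun c => ψ (lin j y c)) (CC F h j) :=
  ⟨by simp [lin_one], fun a ha b hb => by simp only [lin_mul y ha hb, AddChar.map_add_eq_mul]⟩

/-- The element of the column group with prescribed entries. -/
def col (h : Fin n → ℕ) (j : Fin n) (x : Fin n → F) : GLn n F :=
  tv (fun a => if a < j ∧ h a = h j then x a else 0) (Pi.single j 1) (by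
    rw [Finset.sum_eq_single j] <;> simp +contextual [Pi.single_apply])

lemma col_mem (h : Fin n → ℕ) (j : Fin n) (x : Fin n → F) : col h j x ∈ CC F h j := by
  rw [CC, mem_Pat]
  intro a b hab
  rw [col, tv_apply]
  by_cases hb : b = j
  · subst hb
    have : ¬ (a < b ∧ h a = h b) := fun h1 => hab ⟨h1.1, rfl, h1.2⟩
    simp [this]
  · simp [Pi.single_apply, hb]

lemma col_apply {h : Fin n → ℕ} {j : Fin n} (x : Fin n → F) {a : Fin n} (haj : a < j) :
    col h j x a j = if h a = h j then x a else 0 := by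
  rw [col, tv_apply]
  simp [haj, haj.ne]

lemma tv_inv (u w : Fin n → F) (h : ∑ l, w l * u l = 0) :
    (tv u w h)⁻¹ = tv (fun i => - u i) w (by simpa using h) := by
  rw [inv_eq_iff_mul_eq_one]
  apply gl_ext
  intro i j
  rw [mul_tv_apply, tv_apply, oneEntry]
  simp only [tv_apply, add_mul, Finset.sum_add_distrib]
  have : ∑ x, u i * w x * -u x = 0 := by
    have : ∑ x, u i * w x * -u x = - u i * ∑ l, w l * u l := by
      rw [Finset.mul_sum]; exact Finset.sum_congr rfl fun l _ => by ring
    rw [this, h, mul_zero]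
  rw [this]
  simp

lemma HH_decomp {h : Fin n → ℕ} {j : Fin n} {u : GLn n F} (hu : u ∈ HH F h j.val) :
    ∃ c ∈ CC F h j, c⁻¹ * u ∈ HH F h (j.val + 1) ∧ ∀ a, a < j → c a j = u a j := by
  have hu' := hu
  rw [HH, mem_Pat] at hu'
  refine ⟨col h j fun a => u a j, col_mem _ _ _, ?_, fun a ha => ?_⟩
  · rw [col, tv_inv, HH, mem_Pat]
    intro a b hab
    rw [tv_mul_apply]
    have h1 : ∑ l, (Pi.single j 1 : Fin n → F) l * u l b = u j b := by
      simp [Pi.single_apply]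
    rw [h1]
    rcases lt_trichotomy b j with hb | hb | hb
    · rw [hu' a b (fun h2 => by have := Fin.lt_def.1 hb; omega),
        hu' j b (fun h2 => by have := Fin.lt_def.1 hb; omega), if_neg hb.ne' ]
      simp
    · subst hb
      rw [hu' b b (by simp)]
      by_cases h2 : a < b ∧ h a = h b
      · simp [h2, h2.1.ne]
      · rw [hu' a b (fun h3 => h2 ⟨h3.1, h3.2.2⟩)]; simp [h2]
    · have hb' := Fin.lt_def.1 hb
      have hab' : ¬ (a < b ∧ h a = h b) := fun h3 => hab ⟨h3.1, hb', h3.2⟩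
      rw [hu' a b (fun h3 => hab' ⟨h3.1, h3.2.2⟩)]
      by_cases h2 : a < j ∧ h a = h j
      · rw [hu' j b (fun h3 => hab' ⟨h2.1.trans hb, h2.2.trans h3.2.2⟩), if_neg hb.ne]
        simp
      · simp [h2]
  · rw [col_apply _ ha]
    split_ifs with h1
    · rfl
    · rw [hu' a j (fun h2 => h1 h2.2.2), if_neg ha.ne]

/-- The group `JJ F h j` normalizes `HH F h (j + 1)` and preserves its character. -/
lemma JJ_conj {h : Fin n → ℕ} {j : Fin n} {g u : GLn n F} (hg : g ∈ JJ F h j)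
    (hu : u ∈ HH F h (j.val + 1)) :
    g⁻¹ * u * g ∈ HH F h (j.val + 1) ∧ sd (g⁻¹ * u * g) = sd u := by
  have hgi := inv_mem hg
  have hu' := hu
  rw [JJ, mem_Pat] at hg hgi
  rw [HH, mem_Pat] at hu'
  have hle : ∀ a b, b ≤ j → (g⁻¹ * u * g) a b = if a = b then 1 else 0 := by
    intro a b hb
    have h1 : ∀ a, (u * g) a b = g a b := by
      intro a
      rw [mulEntry, Finset.sum_eq_single a]
      · rw [hu' a a (by simp), if_pos rfl, one_mul]
      · intro l _ hl
        by_cases hlj : l ≤ j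
        · rw [hu' a l (fun h2 => by have := Fin.le_def.1 hlj; omega), if_neg (Ne.symm hl), zero_mul]
        · rw [hg l b (fun h2 => hlj h2.1.le), if_neg, mul_zero]
          rintro rfl; exact hlj hb
      · simp
    have h2 : (g⁻¹ * u * g) a b = (g⁻¹ * g) a b := by
      rw [mul_assoc, mulEntry, mulEntry]
      exact Finset.sum_congr rfl fun l _ => by rw [h1]
    rw [h2, inv_mul_cancel, oneEntry]
  have hgt : ∀ a b, j < b → (g⁻¹ * u * g) a b = ∑ l, g⁻¹ a l * u l b := by
    intro a b hb
    rw [mulEntry, Finset.sum_eq_single b]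
    · rw [hg b b (fun h1 => absurd h1.1 (not_lt.2 hb.le)), if_pos rfl, mul_one, mulEntry]
    · intro l _ hl
      rw [hg l b (fun h1 => absurd h1.2.1 (not_le.2 hb)), if_neg hl, mul_zero]
    · simp
  have hge : ∀ a b, j < b → j ≤ a → (g⁻¹ * u * g) a b = u a b := by
    intro a b hb ha
    rw [hgt a b hb, Finset.sum_eq_single a]
    · rw [hgi a a (fun h1 => absurd h1.1 (not_lt.2 ha)), if_pos rfl, one_mul]
    · intro l _ hl
      rw [hgi a l (fun h1 => absurd h1.1 (not_lt.2 ha)), if_neg (Ne.symm hl), zero_mul]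
    · simp
  constructor
  · rw [HH, mem_Pat]
    intro a b hab
    by_cases hb : b ≤ j
    · exact hle a b hb
    push Not at hb
    by_cases ha : j ≤ a
    · rw [hge a b hb ha, hu' a b hab]
    · push Not at ha
      have hne : a ≠ b := (ha.trans hb).ne
      have hh : h a ≠ h b := fun h1 => hab ⟨ha.trans hb, Fin.lt_def.1 hb, h1⟩
      rw [hgt a b hb, if_neg hne]
      refine Finset.sum_eq_zero fun l _ => ?_
      by_cases h1 : h a = h l
      · rw [hu' l b (fun h2 => hh (h1.trans h2.2.2)), if_neg, mul_zero]
        rintro rfl; exact hh h1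
      · rw [hgi a l (fun h2 => h1 h2.2.2), if_neg, zero_mul]
        rintro rfl; exact h1 rfl
  · refine Finset.sum_congr rfl fun b _ => Finset.sum_congr rfl fun a _ => ?_
    split_ifs with hab
    · have hne : a ≠ b := by rintro rfl; omega
      by_cases hb : b ≤ j
      · rw [hle a b hb, hu' a b (fun h1 => by have := Fin.le_def.1 hb; omega)]
      · push Not at hb
        exact hge a b hb (Fin.le_def.2 (by have := Fin.lt_def.1 hb; omega))
    · rfl

variable (ρ : Representation ℂ (GLn n F) V)

/-- The space of (degenerate) Whittaker vectors for the group `HH F h t`. -/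
def Wh (h : Fin n → ℕ) (t : ℕ) : Submodule ℂ V where
  carrier := {v | ∀ u ∈ HH F h t, ρ u v = ψ (sd u) • v}
  add_mem' := fun ha hb u hu => by rw [map_add, ha u hu, hb u hu, smul_add]
  zero_mem' := fun u _ => by simp
  smul_mem' := fun c a ha u hu => by rw [map_smul, ha u hu, smul_comm]

lemma mem_Wh {h : Fin n → ℕ} {t : ℕ} {v : V} :
    v ∈ Wh ψ ρ h t ↔ ∀ u ∈ HH F h t, ρ u v = ψ (sd u) • v := Iff.rfl

lemma Wh_top (h : Fin n → ℕ) : Wh ψ ρ h n = ⊤ := by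
  rw [eq_top_iff]
  intro v _ u hu
  have : u = 1 := gl_ext fun a b => by
    rw [HH, mem_Pat] at hu
    rw [hu a b (fun h1 => by have := b.2; omega), oneEntry]
  rw [this, sd_one]; simp

lemma Wh_stable (h : Fin n → ℕ) (j : Fin n) : Stable ρ (JJ F h j) (Wh ψ ρ h (j.val + 1)) := by
  intro g hg v hv u hu
  have e : u * g = g * (g⁻¹ * u * g) := by group
  obtain ⟨h1, h2⟩ := JJ_conj hg hu
  rw [← rho_mul, e, rho_mul, hv _ h1, h2, map_smul]

lemma exists_shift {ψ : AddChar F ℂ} (hψ : ψ ≠ 1) {d : F} (hd : d ≠ 0) : ∃ t, ψ (t * d) ≠ 1 := by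
  obtain ⟨a, ha⟩ := AddChar.ne_one_iff.1 hψ
  exact ⟨a / d, by rwa [div_mul_cancel₀ _ hd]⟩

/-- A nonzero vector has a nonzero component for some character of the column group. -/
lemma exists_component {ψ : AddChar F ℂ} (hψ : ψ ≠ 1) (h : Fin n → ℕ) (j : Fin n) {v : V}
    (hv : v ≠ 0) :
    ∃ y : Fin n → F, act ρ (avg (CC F h j) fun c => ψ (lin j y c)) v ≠ 0 := by
  by_contra hcon
  push Not at hcon
  have h1 : ∀ y : Fin n → F, ∑ c : CC F h j, (ψ (lin j y c))⁻¹ • ρ c v = 0 := by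
    intro y
    have := hcon y
    rw [act_avg] at this
    exact (smul_eq_zero.1 this).resolve_left (inv_ne_zero (card_ne_zero' _))
  have h2 : ∑ y : Fin n → F, ∑ c : CC F h j, (ψ (lin j y c))⁻¹ • ρ c v = 0 :=
    Finset.sum_eq_zero fun y _ => h1 y
  rw [Finset.sum_comm] at h2
  simp only [← Finset.sum_smul] at h2
  rw [Finset.sum_eq_single 1] at h2
  · simp [lin_one] at h2
    exact hv h2
  · intro c _ hc
    have hc' : ∃ a, a < j ∧ (c : GLn n F) a j ≠ 0 := by
      by_contra h3
      push Not at h3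
      refine hc (Subtype.ext (gl_ext fun a b => ?_))
      have h4 := mem_Pat.1 (show (c : GLn n F) ∈ Pat _ _ from c.2)
      by_cases h5 : a < j ∧ b = j
      · rw [h5.2, h3 a h5.1, Subgroup.coe_one, oneEntry, if_neg h5.1.ne]
      · rw [h4 a b (fun h6 => h5 ⟨h6.1, h6.2.1⟩), Subgroup.coe_one, oneEntry]
    obtain ⟨a, ha, hne⟩ := hc'
    obtain ⟨t, ht⟩ := exists_shift hψ hne
    have h5 : ∑ y : Fin n → F, (ψ (lin j y c))⁻¹ =
        (ψ (t * (c : GLn n F) a j))⁻¹ * ∑ y : Fin n → F, (ψ (lin j y c))⁻¹ := by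
      rw [Finset.mul_sum]
      refine (Fintype.sum_equiv (Equiv.addLeft (Pi.single a t : Fin n → F)) _ _ fun y => ?_).symm
      rw [← mul_inv, ← AddChar.map_add_eq_mul]
      congr 2
      simp only [lin, Equiv.coe_addLeft, Pi.add_apply, add_mul]
      have : ∀ x : Fin n, (if x < j then (Pi.single a t : Fin n → F) x * (c : GLn n F) x j +
          y x * (c : GLn n F) x j else 0) =
          (if x = a then t * (c : GLn n F) a j else 0) +
            if x < j then y x * (c : GLn n F) x j else 0 := by
        intro x
        by_cases hx : x = a
        · subst hx; simp [ha]
        · simp [hx]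
      rw [Finset.sum_congr rfl fun x _ => this x, Finset.sum_add_distrib]
      simp
    have h6 : (1 - (ψ (t * (c : GLn n F) a j))⁻¹) * ∑ y : Fin n → F, (ψ (lin j y c))⁻¹ = 0 := by
      rw [sub_mul, one_mul, ← h5, sub_self]
    rcases mul_eq_zero.1 h6 with h7 | h7
    · exact absurd (by rw [sub_eq_zero, eq_comm, inv_eq_one] at h7; exact h7) ht
    · rw [h7, zero_smul]
  · simp

/-- The invertible matrix obtained from the identity by replacing the row `i` by `y`. -/
noncomputable def rowM (i : Fin n) (y : Fin n → F) (hy : y i ≠ 0) : GLn n F :=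
  mkGL (Matrix.updateRow 1 i y) (by
    have : (Matrix.updateRow (1 : Matrix (Fin n) (Fin n) F) i y).det = y i := by
      have h1 := Matrix.cramer_transpose_apply (1 : Matrix (Fin n) (Fin n) F) y i
      rw [← h1]; simp
    rwa [this])

lemma rowM_apply (i : Fin n) (y : Fin n → F) (hy : y i ≠ 0) (a b : Fin n) :
    rowM i y hy a b = if a = i then y b else if a = b then 1 else 0 := by
  rw [rowM, mkGL_apply, Matrix.updateRow_apply]; rfl

/-- There is an element of the Levi subgroup, supported on rows and columns before `j`, with
prescribed nonzero row `j - 1`. -/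
lemma exists_row {h : Fin n → ℕ} {j jm : Fin n} (hj : jm.val + 1 = j.val)
    {y : Fin n → F} (hy0 : ∃ a, y a ≠ 0) (hy : ∀ a, y a ≠ 0 → a < j ∧ h a = h jm) :
    ∃ g ∈ JJ F h j, (∀ a b, ¬ (a < j ∧ b < j) → g a b = if a = b then 1 else 0) ∧
      ∀ b, g jm b = y b := by
  have hjm : jm < j := Fin.lt_def.2 (by omega)
  have main : ∀ y : Fin n → F, (y jm ≠ 0) → (∀ a, y a ≠ 0 → a < j ∧ h a = h jm) →
      ∃ g ∈ JJ F h j, (∀ a b, ¬ (a < j ∧ b < j) → g a b = if a = b then 1 else 0) ∧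
        ∀ b, g jm b = y b := by
    intro y hy1 hy
    have h1 : ∀ a b, ¬ (a < j ∧ b < j ∧ h a = h b) → rowM jm y hy1 a b = if a = b then 1 else 0 := by
      intro a b hab
      rw [rowM_apply]
      by_cases ha : a = jm
      · subst ha
        have h2 : y b = 0 := by
          by_contra h3
          obtain ⟨h4, h5⟩ := hy b h3
          exact hab ⟨hjm, h4, h5.symm⟩
        rw [if_pos rfl, h2, if_neg]
        rintro rfl; exact hy1 h2
      · rw [if_neg ha]
    refine ⟨rowM jm y hy1, ?_, fun a b hab => h1 a b fun h2 => hab ⟨h2.1, h2.2.1⟩, fun b => by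
      rw [rowM_apply, if_pos rfl]⟩
    rw [JJ, mem_Pat]
    exact fun a b hab => h1 a b fun h2 => hab ⟨h2.1, h2.2.1.le, h2.2.2⟩
  obtain ⟨b, hb⟩ := hy0
  obtain ⟨hbj, hhb⟩ := hy b hb
  let s := Equiv.swap b jm
  have hs : ∀ a, a < j ∧ h a = h jm → s a < j ∧ h (s a) = h jm := by
    intro a ha
    simp only [s, Equiv.swap_apply_def]
    split_ifs
    · exact ⟨hjm, rfl⟩
    · exact ⟨hbj, hhb⟩
    · exact ha
  obtain ⟨g, hg, hg1, hg2⟩ := main (fun a => y (s a)) (by simpa [s] using hb) (by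
    intro a ha
    have := hs _ (hy _ ha)
    simpa [s] using this)
  have hs1 : ∀ x y : Fin n, ¬ (x < j ∧ y < j ∧ h x = h y) → pm F s x y = if x = y then 1 else 0 := by
    intro x y hxy
    rw [pm_apply]
    by_cases h1 : y = b
    · subst h1
      have h2 : s y = jm := by simp [s]
      have h3 : x ≠ jm := by rintro rfl; exact hxy ⟨hjm, hbj, hhb.symm⟩
      have h4 : x ≠ y := by rintro rfl; exact hxy ⟨hbj, hbj, rfl⟩
      rw [h2, if_neg h3, if_neg h4]
    by_cases h1' : y = jm
    · subst h1'
      have h2 : s y = b := by simp [s]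
      have h3 : x ≠ b := by rintro rfl; exact hxy ⟨hbj, hjm, hhb⟩
      have h4 : x ≠ y := by rintro rfl; exact hxy ⟨hjm, hjm, rfl⟩
      rw [h2, if_neg h3, if_neg h4]
    · rw [show s y = y from Equiv.swap_apply_of_ne_of_ne h1 h1']
  refine ⟨g * pm F s, mul_mem hg ?_, ?_, fun b => ?_⟩
  · rw [JJ, mem_Pat]
    exact fun a b hab => hs1 a b fun h2 => hab ⟨h2.1, h2.2.1.le, h2.2.2⟩
  · intro x y hxy
    rw [mul_pm_apply]
    by_cases h1 : y < j
    · have hx : ¬ x < j := fun h2 => hxy ⟨h2, h1⟩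
      rw [hg1 _ _ (fun h2 => hx h2.1)]
      have h3 : x ≠ y := by rintro rfl; exact hx h1
      have h4 : s y < j := by
        simp only [s, Equiv.swap_apply_def]
        split_ifs
        · exact hjm
        · exact hbj
        · exact h1
      have h5 : x ≠ s y := by rintro rfl; exact hx h4
      rw [if_neg h3, if_neg h5]
    · have : s y = y := Equiv.swap_apply_of_ne_of_ne (by rintro rfl; exact h1 hbj)
        (by rintro rfl; exact h1 hjm)
      rw [this, hg1 _ _ (fun h2 => h1 h2.2)]
  · rw [mul_pm_apply, hg2]
    simp [s]

end Whittaker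

/-! ### Existence of Whittaker vectors -/

section Whittaker

variable {n : ℕ} {F : Type} [Field F] [Fintype F]
variable {V : Type} [AddCommGroup V] [Module ℂ V] [FiniteDimensional ℂ V]

/-- Block matrices which differ from the identity only in rows and columns before `j`. -/
def KK (F : Type) [Field F] [Fintype F] (h : Fin n → ℕ) (j : Fin n) : Subgroup (GLn n F) :=
  Pat (fun a b => a < j ∧ b < j ∧ h a = h b)
    fun _ _ _ h1 h2 => ⟨h1.1, h2.2.1, h1.2.2.trans h2.2.2⟩

lemma KK_le_JJ (h : Fin n → ℕ) (j : Fin n) : KK F h j ≤ JJ F h j :=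
  Pat_mono fun _ _ h => ⟨h.1, h.2.1.le, h.2.2⟩

lemma KK_conj_CC {h : Fin n → ℕ} {j : Fin n} {g c : GLn n F} (hg : g ∈ KK F h j)
    (hc : c ∈ CC F h j) : g⁻¹ * c * g ∈ CC F h j := by
  have hJ : g⁻¹ * c * g ∈ JJ F h j :=
    mul_mem (mul_mem (inv_mem (KK_le_JJ h j hg)) (CC_le_JJ h j hc)) (KK_le_JJ h j hg)
  rw [KK, mem_Pat] at hg
  rw [CC, mem_Pat] at hc
  rw [JJ, mem_Pat] at hJ
  rw [CC, mem_Pat]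
  intro a b hab
  by_cases hb : b = j
  · exact hJ a b fun h1 => hab ⟨h1.1, hb, h1.2.2⟩
  have h1 : ∀ l, (c * g) l b = g l b := by
    intro l
    rw [mulEntry, Finset.sum_eq_single l]
    · rw [hc l l (fun h1 => by have := h1.1; rw [h1.2.1] at this; exact lt_irrefl _ this),
        if_pos rfl, one_mul]
    · intro k _ hk
      by_cases hkj : k = j
      · subst hkj
        rw [hg k b (fun h1 => lt_irrefl _ h1.1), if_neg (Ne.symm hb), mul_zero]
      · rw [hc l k (fun h1 => hkj h1.2.1), if_neg (Ne.symm hk), zero_mul]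
    · simp
  have h2 : (g⁻¹ * c * g) a b = (g⁻¹ * g) a b := by
    rw [mul_assoc, mulEntry, mulEntry]
    exact Finset.sum_congr rfl fun l _ => by rw [h1]
  rw [h2, inv_mul_cancel, oneEntry]

lemma sd_CC {h : Fin n → ℕ} {j jm : Fin n} (hj : jm.val + 1 = j.val) {c : GLn n F}
    (hc : c ∈ CC F h j) : sd c = c jm j := by
  rw [CC, mem_Pat] at hc
  rw [sd, Finset.sum_eq_single j, Finset.sum_eq_single jm]
  · simp [hj]
  · intro a _ ha
    rw [if_neg]; intro h1; exact ha (Fin.ext (by omega))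
  · simp
  · intro b _ hb
    refine Finset.sum_eq_zero fun a _ => ?_
    split_ifs with hab
    · rw [hc a b (fun h1 => hb h1.2.1), if_neg]; rintro rfl; omega
    · rfl
  · simp

lemma lin_conj {h : Fin n → ℕ} {j jm : Fin n} (hj : jm.val + 1 = j.val) {g c : GLn n F}
    (hg : g ∈ KK F h j) (hc : c ∈ CC F h j) {y : Fin n → F} (hy : ∀ b, g jm b = y b) :
    lin j y (g⁻¹ * c * g) = sd c := by
  rw [sd_CC hj hc]
  have e : (g * (g⁻¹ * c * g)) jm j = (c * g) jm j := by congr 2; group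
  rw [KK, mem_Pat] at hg
  rw [mulEntry, mulEntry] at e
  rw [Finset.sum_eq_single (f := fun l => c jm l * g l j) j] at e
  · rw [hg j j (fun h1 => lt_irrefl _ h1.1), if_pos rfl, mul_one] at e
    rw [← e, lin]
    refine Finset.sum_congr rfl fun l _ => ?_
    split_ifs with hl
    · rw [hy]
    · rw [hg jm l (fun h1 => hl h1.2.1), if_neg, zero_mul]
      rintro rfl; exact hl (Fin.lt_def.2 (by omega))
  · intro l _ hl
    rw [hg l j (fun h1 => lt_irrefl _ h1.2.1), if_neg hl, mul_zero]
  · simp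

lemma exists_rowK {h : Fin n → ℕ} {j jm : Fin n} (hj : jm.val + 1 = j.val)
    {y : Fin n → F} (hy0 : ∃ a, y a ≠ 0) (hy : ∀ a, y a ≠ 0 → a < j ∧ h a = h jm) :
    ∃ g ∈ KK F h j, ∀ b, g jm b = y b := by
  obtain ⟨g, h1, h2, h3⟩ := exists_row hj hy0 hy
  refine ⟨g, ?_, h3⟩
  rw [JJ, mem_Pat] at h1
  rw [KK, mem_Pat]
  intro a b hab
  by_cases h4 : a < j ∧ b < j
  · exact h1 a b fun h5 => hab ⟨h4.1, h4.2, h5.2.2⟩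
  · exact h2 a b h4

variable {ψ : AddChar F ℂ} {ρ : Representation ℂ (GLn n F) V}

/-- Vectors of the eigenspace of the column group for the character attached to `y` are carried to
Whittaker vectors. -/
lemma move {h : Fin n → ℕ} {j jm : Fin n} (hj : jm.val + 1 = j.val) {g : GLn n F}
    (hg : g ∈ KK F h j) {y : Fin n → F} (hy : ∀ b, g jm b = y b) {v : V}
    (hv : v ∈ Wh ψ ρ h (j.val + 1)) (hv' : ∀ c ∈ CC F h j, ρ c v = ψ (lin j y c) • v) :
    ρ g v ∈ Wh ψ ρ h j.val := by
  intro u hu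
  obtain ⟨c, hc, hu', -⟩ := HH_decomp hu
  have e : u = c * (c⁻¹ * u) := by group
  have h1 := Wh_stable ψ ρ h j g (KK_le_JJ h j hg) v hv _ hu'
  have h2 : c * g = g * (g⁻¹ * c * g) := by group
  rw [e, sd_mul (HH_mono h (Nat.zero_le _) (CC_le_HH h j hc)) (HH_mono h (Nat.zero_le _) hu'),
    rho_mul, h1, map_smul, ← rho_mul, h2, rho_mul, hv' _ (KK_conj_CC hg hc),
    lin_conj hj hg hc hy, map_smul, smul_smul, AddChar.map_add_eq_mul, mul_comm]

lemma move_back {h : Fin n → ℕ} {j jm : Fin n} (hj : jm.val + 1 = j.val) {g : GLn n F}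
    (hg : g ∈ KK F h j) {y : Fin n → F} (hy : ∀ b, g jm b = y b) {v : V}
    (hv : v ∈ Wh ψ ρ h j.val) :
    ρ g⁻¹ v ∈ Wh ψ ρ h (j.val + 1) ∧
      ∀ c ∈ CC F h j, ρ c (ρ g⁻¹ v) = ψ (lin j y c) • ρ g⁻¹ v := by
  constructor
  · exact Wh_stable ψ ρ h j g⁻¹ (inv_mem (KK_le_JJ h j hg)) v
      fun u hu => hv u (HH_mono h (Nat.le_succ _) hu)
  · intro c hc
    have h1 : g * c * g⁻¹ ∈ CC F h j := by
      have := KK_conj_CC (inv_mem hg) hc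
      rwa [inv_inv] at this
    have h2 := lin_conj hj hg h1 hy
    have h3 : g⁻¹ * (g * c * g⁻¹) * g = c := by group
    rw [h3] at h2
    have h4 : c * g⁻¹ = g⁻¹ * (g * c * g⁻¹) := by group
    rw [← rho_mul, h4, rho_mul, hv _ (CC_le_HH h j h1), map_smul, h2]

lemma lin_congr {h : Fin n → ℕ} {j : Fin n} {y y' : Fin n → F}
    (hy : ∀ a, a < j → h a = h j → y a = y' a) {c : GLn n F} (hc : c ∈ CC F h j) :
    lin j y c = lin j y' c := by
  rw [CC, mem_Pat] at hc
  refine Finset.sum_congr rfl fun a _ => ?_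
  split_ifs with ha
  · by_cases h1 : h a = h j
    · rw [hy a ha h1]
    · rw [hc a j (fun h2 => h1 h2.2.2), if_neg ha.ne]; simp
  · rfl

/-- One step of the construction of Whittaker vectors. -/
lemma wh_step (hψ : ψ ≠ 1) {h : Fin n → ℕ} {Y : Submodule ℂ V} (hY : Stable ρ (MM F h) Y)
    (hcusp : ∀ f : Fin n → ℕ, (∃ i j, h i = h j ∧ f i ≠ f j) → ∀ y ∈ Y,
      (∀ u ∈ NM F f h, ρ u y = y) → y = 0)
    {j : Fin n} (hadj : ∀ i, i < j → h i = h j → ∃ jm : Fin n, jm.val + 1 = j.val ∧ h jm = h j)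
    {v : V} (hv : v ∈ Y) (hv0 : v ≠ 0) (hw : v ∈ Wh ψ ρ h (j.val + 1)) :
    ∃ v' ∈ Y, v' ≠ 0 ∧ v' ∈ Wh ψ ρ h j.val := by
  by_cases hR : ∃ i, i < j ∧ h i = h j
  · obtain ⟨i, hij, hhi⟩ := hR
    obtain ⟨jm, hjm, hhjm⟩ := hadj i hij hhi
    obtain ⟨y, hy⟩ := exists_component ρ hψ h j hv0
    set v1 := act ρ (avg (CC F h j) fun c => ψ (lin j y c)) v with hv1
    have hv1Y : v1 ∈ Y := hY.act_mem (Supp_mono ((CC_le_JJ h j).trans (JJ_le_MM h j))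
      (avg_mem_Supp _ _)) hv
    have hv1W : v1 ∈ Wh ψ ρ h (j.val + 1) := (Wh_stable ψ ρ h j).act_mem
      (Supp_mono (CC_le_JJ h j) (avg_mem_Supp _ _)) hw
    have hv1c : ∀ c ∈ CC F h j, ρ c v1 = ψ (lin j y c) • v1 := fun c hc =>
      rho_act_avg ρ (mulOn_lin ψ h j y) hc v
    let z : Fin n → F := fun a => if a < j ∧ h a = h j then y a else 0
    have hyz : ∀ a, a < j → h a = h j → y a = z a := fun a h1 h2 => by simp [z, h1, h2]
    by_cases hz : ∃ a, z a ≠ 0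
    · obtain ⟨g, hg, hgz⟩ := exists_rowK (h := h) hjm hz (by
        intro a ha
        by_contra h1
        rw [hhjm] at h1
        exact ha (by simp only [z]; rw [if_neg h1]))
      refine ⟨ρ g v1, hY g (JJ_le_MM h j (KK_le_JJ h j hg)) _ hv1Y, ?_, move hjm hg hgz hv1W ?_⟩
      · intro h0
        apply hy
        rw [← rho_inv_self ρ g v1, h0, map_zero]
      · intro c hc
        rw [hv1c c hc, lin_congr hyz hc]
    · exfalso
      push Not at hz
      refine hy (hcusp (fun a => if j ≤ a then 1 else 0) ⟨i, j, hhi, by simp [hij]⟩ v1 hv1Y ?_)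
      intro u hu
      rw [NM, mem_Pat] at hu
      have hu1 : ∀ a b, ¬ (a < j ∧ j ≤ b ∧ h a = h b) → u a b = if a = b then 1 else 0 := by
        intro a b hab
        refine hu a b fun h1 => hab ?_
        have h2 := h1.1
        by_cases ha : j ≤ a <;> by_cases hb : j ≤ b <;> simp [ha, hb] at h2
        exact ⟨not_le.1 ha, hb, h1.2⟩
      have hu2 : u ∈ HH F h j.val := by
        rw [HH, mem_Pat]
        exact fun a b hab => hu1 a b fun h1 => hab ⟨h1.1.trans_le h1.2.1, Fin.le_def.1 h1.2.1, h1.2.2⟩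
      obtain ⟨c, hc, hu', hcu⟩ := HH_decomp hu2
      have e : u = c * (c⁻¹ * u) := by group
      have h0 : ∀ t, HH F h t ≤ HH F h 0 := fun t => HH_mono h (Nat.zero_le t)
      have hsd : sd (c⁻¹ * u) = 0 := by
        have h3 : sd u = sd c + sd (c⁻¹ * u) := by
          conv_lhs => rw [e]
          rw [sd_mul (h0 _ (CC_le_HH h j hc)) (h0 _ hu')]
        have h4 : sd u = u jm j := by
          rw [sd, Finset.sum_eq_single j, Finset.sum_eq_single jm]
          · simp [hjm]
          · intro a _ ha
            rw [if_neg]; intro h1; exact ha (Fin.ext (by omega))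
          · simp
          · intro b _ hb
            refine Finset.sum_eq_zero fun a _ => ?_
            split_ifs with hab
            · rw [hu1 a b, if_neg]
              · rintro rfl; omega
              · intro h1
                have h5 := Fin.lt_def.1 h1.1
                have h6 := Fin.le_def.1 h1.2.1
                exact hb (Fin.ext (by omega))
            · rfl
          · simp
        rw [sd_CC hjm hc, hcu jm (Fin.lt_def.2 (by omega)), h4] at h3
        simpa using h3
      have hlin : lin j y c = 0 := by
        rw [lin_congr hyz hc]
        simp [lin, hz]
      rw [e, rho_mul, hv1W _ hu', hsd, AddChar.map_zero_eq_one, one_smul, hv1c c hc, hlin,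
        AddChar.map_zero_eq_one, one_smul]
  · refine ⟨v, hv, hv0, fun u hu => hw u ?_⟩
    push Not at hR
    rw [HH, mem_Pat] at hu ⊢
    intro a b hab
    refine hu a b fun h1 => ?_
    rcases h1.2.1.lt_or_eq with h2 | h2
    · exact hab ⟨h1.1, h2, h1.2.2⟩
    · have : j = b := Fin.ext h2
      subst this
      exact hR a h1.1 h1.2.2

/-- Cuspidal representations of Levi subgroups have (partial) Whittaker vectors. -/
lemma exists_wh (hψ : ψ ≠ 1) {h : Fin n → ℕ} {Y : Submodule ℂ V} (hY : Stable ρ (MM F h) Y)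
    (hY0 : Y ≠ ⊥)
    (hcusp : ∀ f : Fin n → ℕ, (∃ i j, h i = h j ∧ f i ≠ f j) → ∀ y ∈ Y,
      (∀ u ∈ NM F f h, ρ u y = y) → y = 0) {t : ℕ} (ht : t ≤ n)
    (hadj : ∀ i j : Fin n, t ≤ j.val → i < j → h i = h j →
      ∃ jm : Fin n, jm.val + 1 = j.val ∧ h jm = h j) :
    ∃ v ∈ Y, v ≠ 0 ∧ v ∈ Wh ψ ρ h t := by
  induction ht using Nat.decreasingInduction with
  | self =>
    obtain ⟨v, hv, hv0⟩ := Submodule.exists_mem_ne_zero_of_ne_bot hY0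
    exact ⟨v, hv, hv0, by rw [Wh_top]; trivial⟩
  | of_succ k hk ih =>
    obtain ⟨v, hv, hv0, hw⟩ := ih fun i j hj => hadj i j (by omega)
    exact wh_step (j := ⟨k, hk⟩) hψ hY hcusp (fun i => hadj i ⟨k, hk⟩ le_rfl) hv hv0 hw

end Whittaker

/-! ### Dimension bounds from Whittaker vectors -/

section Dim

variable {n : ℕ} {F : Type} [Field F] [Fintype F]
variable {V : Type} [AddCommGroup V] [Module ℂ V] [FiniteDimensional ℂ V]

lemma act_avg_eq_zero {G : Type} [Group G] [Fintype G] (ρ : Representation ℂ G V)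
    {N : Subgroup G} {θ θ' : G → ℂ} (h : MulOn θ N)
    {v : V} (hv : ∀ n ∈ N, ρ n v = θ' n • v) {c : G} (hc : c ∈ N) (hne : θ c ≠ θ' c) :
    act ρ (avg N θ) v = 0 := by
  have h1 : act ρ (avg N θ) (ρ c v) = θ c • act ρ (avg N θ) v := by
    rw [← act_of ρ c, ← act_mul, avg_mul_of h hc]; simp [act]
  rw [hv c hc, map_smul, ← sub_eq_zero, ← sub_smul] at h1
  exact (smul_eq_zero.1 h1).resolve_left (sub_ne_zero.2 hne.symm)

variable {ψ : AddChar F ℂ} {ρ : Representation ℂ (GLn n F) V}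

lemma lin_col {h : Fin n → ℕ} {j a : Fin n} (ha : a < j) (hh : h a = h j) (y : Fin n → F) (t : F) :
    lin j y (col h j (Pi.single a t)) = y a * t := by
  rw [lin, Finset.sum_eq_single a]
  · rw [if_pos ha, col_apply _ ha, if_pos hh, Pi.single_eq_same]
  · intro b _ hb
    split_ifs with h1
    · rw [col_apply _ h1, Pi.single_eq_of_ne hb]; simp
    · rfl
  · simp

/-- The Whittaker vectors for the columns `≥ j` sit inside those for the columns `≥ j + 1`, which are
stable under the matrices in the first `j` coordinates. The latter permute the nontrivial characters
of the column `j` transitively; there are `q ^ j - 1` of these, and their eigenspaces are independent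
and of equal dimension. -/
lemma dim_step (hψ : ψ ≠ 1) {Y : Submodule ℂ V} (hY : Stable ρ ⊤ Y) {j jm : Fin n}
    (hj : jm.val + 1 = j.val) :
    (Fintype.card F ^ j.val - 1) * Module.finrank ℂ (Y ⊓ Wh ψ ρ (fun _ => 0) j.val : Submodule ℂ V) ≤
      Module.finrank ℂ (Y ⊓ Wh ψ ρ (fun _ => 0) (j.val + 1) : Submodule ℂ V) := by
  let ex : (Fin j.val → F) → Fin n → F := fun z a => if ha : a.val < j.val then z ⟨a.val, ha⟩ else 0
  let I := {z : Fin j.val → F // z ≠ 0}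
  have hex : ∀ z : I, ∃ g ∈ KK F (fun _ : Fin n => 0) j, ∀ b, g jm b = ex z.1 b := by
    intro z
    apply exists_rowK hj
    · by_contra h1
      push Not at h1
      refine z.2 (funext fun a => ?_)
      have := h1 ⟨a.val, a.2.trans j.2⟩
      rwa [show ex z.1 ⟨a.val, a.2.trans j.2⟩ = z.1 a from dif_pos a.2] at this
    · intro a ha
      by_contra h1
      refine ha (dif_neg fun h2 => h1 ⟨h2, rfl⟩)
  choose g hg hgz using hex
  let Φ : (I → (Y ⊓ Wh ψ ρ (fun _ => 0) j.val : Submodule ℂ V)) →ₗ[ℂ] V :=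
    ∑ z : I, (ρ (g z)⁻¹).comp ((Submodule.subtype _).comp (LinearMap.proj z))
  have hΦ : ∀ v, Φ v = ∑ z : I, ρ (g z)⁻¹ (v z : V) := by
    intro v; simp [Φ]
  have hker : LinearMap.ker Φ = ⊥ := by
    rw [LinearMap.ker_eq_bot']
    intro v hv
    funext z0
    rw [hΦ] at hv
    have h1 := congrArg (act ρ (avg (CC F (fun _ : Fin n => 0) j) fun c => ψ (lin j (ex z0.1) c))) hv
    rw [map_sum, map_zero, Finset.sum_eq_single z0] at h1
    · rw [act_avg_eq_self ρ (mulOn_lin ψ _ j _) (move_back hj (hg z0) (hgz z0) (v z0).2.2).2] at h1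
      apply Subtype.ext
      rw [← rho_self_inv ρ (g z0) (v z0 : V), h1, map_zero]; rfl
    · intro z _ hz
      have h2 : ∃ a, z.1 a ≠ z0.1 a := by
        by_contra h3
        push Not at h3
        exact hz (Subtype.ext (funext h3))
      obtain ⟨a, ha⟩ := h2
      obtain ⟨t, ht⟩ := exists_shift hψ (sub_ne_zero.2 ha)
      let a' : Fin n := ⟨a.val, a.2.trans j.2⟩
      have ha' : a' < j := a.2
      refine act_avg_eq_zero ρ (mulOn_lin ψ _ j _) (move_back hj (hg z) (hgz z) (v z).2.2).2
        (col_mem _ j (Pi.single a' t)) ?_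
      rw [lin_col ha' rfl, lin_col ha' rfl]
      have e1 : ex z.1 a' = z.1 a := dif_pos a.2
      have e2 : ex z0.1 a' = z0.1 a := dif_pos a.2
      rw [e1, e2]
      intro h3
      apply ht
      have h4 : t * (z.1 a - z0.1 a) = z.1 a * t - z0.1 a * t := by ring
      rw [h4, AddChar.map_sub_eq_div, ← h3, div_self]
      exact (mulOn_lin ψ (fun _ => 0) j (ex z0.1)).ne_zero (col_mem _ j (Pi.single a' t)) |> fun h5 => by
        rwa [lin_col ha' rfl, e2] at h5
    · simp
  have hrange : LinearMap.range Φ ≤ (Y ⊓ Wh ψ ρ (fun _ => 0) (j.val + 1) : Submodule ℂ V) := by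
    rintro _ ⟨v, rfl⟩
    rw [hΦ]
    exact Submodule.sum_mem _ fun z _ => ⟨hY _ (Subgroup.mem_top _) _ (v z).2.1,
      (move_back hj (hg z) (hgz z) (v z).2.2).1⟩
  have h1 := Submodule.finrank_mono hrange
  rw [LinearMap.finrank_range_of_inj (LinearMap.ker_eq_bot.1 hker), Module.finrank_pi_fintype] at h1
  simp only [Finset.sum_const, smul_eq_mul, Finset.card_univ] at h1
  have h2 : Fintype.card I = Fintype.card F ^ j.val - 1 := by
    rw [Fintype.card_subtype_compl]; simp
  rwa [h2] at h1

/-- A nonzero space of partial Whittaker vectors forces a large dimension. -/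
lemma dim_wh (hψ : ψ ≠ 1) {Y : Submodule ℂ V} (hY : Stable ρ ⊤ Y) {t : ℕ} (ht : t ≤ n)
    (ht1 : 1 ≤ t) :
    (∏ j ∈ Finset.Ico t n, (Fintype.card F ^ j - 1)) *
      Module.finrank ℂ (Y ⊓ Wh ψ ρ (fun _ => 0) t : Submodule ℂ V) ≤ Module.finrank ℂ Y := by
  induction ht using Nat.decreasingInduction with
  | self => simpa using Submodule.finrank_mono inf_le_left
  | of_succ k hk ih =>
    have h1 := dim_step hψ hY (j := ⟨k, hk⟩) (jm := ⟨k - 1, by omega⟩) (by simp; omega)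
    rw [Finset.prod_eq_prod_Ico_succ_bot hk]
    calc _ = (∏ j ∈ Finset.Ico (k + 1) n, (Fintype.card F ^ j - 1)) *
          ((Fintype.card F ^ k - 1) *
          Module.finrank ℂ (Y ⊓ Wh ψ ρ (fun _ => 0) k : Submodule ℂ V)) := by ring
      _ ≤ _ := (Nat.mul_le_mul_left _ h1).trans (ih (by omega))

lemma dim_wh' (hψ : ψ ≠ 1) {Y : Submodule ℂ V} (hY : Stable ρ ⊤ Y) {t : ℕ} (ht : t ≤ n)
    (ht1 : 1 ≤ t) {v : V} (hv : v ∈ Y) (hv0 : v ≠ 0) (hw : v ∈ Wh ψ ρ (fun _ => 0) t) :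
    (∏ j ∈ Finset.Ico t n, (Fintype.card F ^ j - 1)) ≤ Module.finrank ℂ Y := by
  refine le_trans ?_ (dim_wh hψ hY ht ht1)
  refine Nat.le_mul_of_pos_right _ ?_
  have : Nontrivial (Y ⊓ Wh ψ ρ (fun _ => 0) t : Submodule ℂ V) :=
    ⟨⟨⟨v, hv, hw⟩, 0, fun h => hv0 (congrArg Subtype.val h)⟩⟩
  exact Module.finrank_pos

end Dim

/-! ### Dimension bounds from cuspidal data -/

section DimE

variable {n : ℕ} {F : Type} [Field F] [Fintype F]
variable {V : Type} [AddCommGroup V] [Module ℂ V] [FiniteDimensional ℂ V]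
variable {ρ : Representation ℂ (GLn n F) V}

lemma exists_ne_one (F : Type) [Field F] [Fintype F] : ∃ ψ : AddChar F ℂ, ψ ≠ 1 := by
  obtain ⟨ψ, hψ⟩ := AddChar.exists_apply_ne_zero (α := F) |>.2 (one_ne_zero)
  exact ⟨ψ, fun h => hψ (by rw [h]; rfl)⟩

lemma HH_const_le {t : ℕ} (h : Fin n → ℕ) : HH F h t ≤ HH F (fun _ : Fin n => 0) t :=
  Pat_mono fun _ _ h => ⟨h.1, h.2.1, rfl⟩

/-- The lower bound for the dimension in terms of the tail of inequivalent cuspidal blocks. -/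
lemma dim_tail {h : Fin n → ℕ} {Y : Submodule ℂ V} {ω : GLn n F → ℂ} (hc : CuspSub ρ h Y ω)
    (hn : ∀ i, h i < n) {t : ℕ} (ht : t < n)
    (h1 : ∀ i j : Fin n, i.val < t → t ≤ j.val → h i < h j)
    (h2 : ∀ i j : Fin n, t ≤ i.val → i ≤ j → h j ≤ h i)
    (h3 : ∀ i j : Fin n, t ≤ i.val → t ≤ j.val → Eqv F h ω (h i) (h j) → h i = h j) :
    ∏ j ∈ Finset.Ico (t + 1) n, (Fintype.card F ^ j - 1) ≤ Module.finrank ℂ V := by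
  obtain ⟨ψ, hψ⟩ := exists_ne_one F
  obtain ⟨v, hv, hv0, hw⟩ := exists_wh hψ hc.irr.stable hc.irr.ne_bot hc.cusp (t := t + 1) ht (by
    intro i j hj hij hh
    have hti : t ≤ i.val := by
      by_contra h4
      have := h1 i j (by omega) (by omega)
      omega
    refine ⟨⟨j.val - 1, by omega⟩, by simp; omega, ?_⟩
    have h5 := h2 i ⟨j.val - 1, by omega⟩ hti (Fin.le_def.2 (by have := Fin.lt_def.1 hij; simp; omega))
    have h6 := h2 ⟨j.val - 1, by omega⟩ j (by simp; omega) (Fin.le_def.2 (by simp))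
    omega)
  obtain ⟨p, hp⟩ := hc.irr.exists_rankOne hv hv0
  let f : Fin n → ℕ := fun i => if i.val < t then h i else n
  have hf : ∀ i j, h i ≤ h j → f i ≤ f j := by
    intro i j hij
    have := hn i
    have := hn j
    by_cases hi : i.val < t <;> by_cases hj : j.val < t <;> simp only [f, hi, hj, if_true, if_false]
    · exact hij
    · omega
    · have := h1 j i hj (by omega); omega
    · exact le_rfl
  have hne : ∀ i j, f i = f j → h i ≠ h j → ¬ Eqv F h ω (h i) (h j) := by
    intro i j hij hhij he
    have := hn i
    have := hn j
    by_cases hi : i.val < t <;> by_cases hj : j.val < t <;>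
      simp only [f, hi, hj, if_true, if_false] at hij
    · exact hhij hij
    · omega
    · omega
    · exact hhij (h3 i j (by omega) (by omega) he)
  set U := HH F (fun _ : Fin n => 0) (t + 1) with hU
  have hUP : U ≤ PP F f := Pat_mono (by
    rintro a b ⟨-, hb, -⟩
    have := hn a
    by_cases ha : a.val < t <;> simp [f, ha, show ¬ b.val < t by omega]
    omega)
  have hθ : MulOn (fun u => ψ (sd u)) U := mulOn_sd ψ _ _
  have ha : act ρ (avg U fun u => ψ (sd u)) v ≠ 0 := by
    refine act_ne_zero_of_coeff (epsi_idem hp) (fun g hg => mackey_min hc hv hp hf hne hg)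
      (Supp_mono hUP (avg_mem_Supp _ _)) ?_
      (by rw [act_epsi hp.supp hc.fixN hv, hp.fix]) hv0
    refine coeff_avg_avg hp.supp hp.one hθ fun x hx y hy hxy => ?_
    have hxP : x ∈ PP F h := by
      have := mul_mem (MM_le_PP h hxy) (inv_mem (NN_le_PP h hy))
      rwa [mul_inv_cancel_right] at this
    obtain ⟨m, hm, hm1, hm2, -⟩ := PP_decomp hxP
    have hxm : x * y = m := by
      have e : m⁻¹ * (x * y) = (m⁻¹ * x) * y := by group
      have h4 : m⁻¹ * (x * y) = 1 := MM_inf_NN (mul_mem (inv_mem hm) hxy)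
        (by rw [e]; exact mul_mem hm2 hy)
      rw [inv_mul_eq_one] at h4
      exact h4.symm
    have hx' := hx
    rw [hU, HH, mem_Pat] at hx'
    have hmH : m ∈ HH F h (t + 1) := by
      rw [HH, mem_Pat]
      intro a b hab
      by_cases hh : h a = h b
      · rw [hm1 a b hh, hx' a b fun h4 => hab ⟨h4.1, h4.2.1, hh⟩]
      · rw [MM, mem_Pat] at hm
        exact hm a b hh
    have hsd : sd x = sd m := by
      refine Finset.sum_congr rfl fun b _ => Finset.sum_congr rfl fun a _ => ?_
      split_ifs with hab
      · by_cases hh : h a = h b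
        · rw [hm1 a b hh]
        · have hne : a ≠ b := by rintro rfl; omega
          rw [MM, mem_Pat] at hm
          rw [hm a b hh, if_neg hne]
          by_cases hb : t + 1 ≤ b.val
          · have h4 := h2 a b (by omega) (Fin.le_def.2 (by omega))
            exact (mem_PP.1 hxP) a b (by omega)
          · rw [hx' a b (fun h5 => hb h5.2.1), if_neg hne]
      · rfl
    have h5 : of ℂ _ m * p = ψ (sd m) • p := by
      have h6 := hp.left (of ℂ _ m - ψ (sd m) • 1) (Subalgebra.sub_mem _ (of_mem_Supp hm)
        (Subalgebra.smul_mem _ (one_mem _) _)) (by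
          simp only [act, map_sub, map_smul, map_one]
          rw [LinearMap.sub_apply]
          have h7 := act_of ρ m
          simp only [act] at h7
          rw [h7, hw m hmH]; simp)
      rw [sub_mul, smul_mul_assoc, one_mul, sub_eq_zero] at h6
      exact h6
    have h8 := congrArg (fun z => z.coeff 1) h5
    simp only [coeff_of_mul, mul_one, MonoidAlgebra.coeff_smul, Finsupp.smul_apply, smul_eq_mul] at h8
    rw [hxm, h8, hsd]
  have h9 := dim_wh' hψ (Y := (⊤ : Submodule ℂ V)) (fun _ _ _ _ => trivial) ht (Nat.succ_pos t)
    (v := act ρ (avg U fun u => ψ (sd u)) v) trivial ha (fun u hu => rho_act_avg ρ hθ hu v)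
  rwa [finrank_top] at h9

end DimE

/-! ### Generation by transvections and linear characters -/

section Gen

variable {n : ℕ} {F : Type} [Field F] [Fintype F]

/-- Diagonal matrices. -/
def dg : (Fin n → Fˣ) →* GLn n F :=
  (Units.map (Matrix.diagonalRingHom (Fin n) F).toMonoidHom).comp
    (MulEquiv.piUnits (M := fun _ : Fin n => F)).symm.toMonoidHom

lemma dg_apply (d : Fin n → Fˣ) (i j : Fin n) : dg d i j = if i = j then (d i : F) else 0 := by
  show Matrix.diagonal _ i j = _
  rw [Matrix.diagonal_apply]; rfl

/-- Elementary transvections. -/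
def etv (a b : Fin n) (hab : a ≠ b) (x : F) : GLn n F :=
  tv (Pi.single a x) (Pi.single b 1) (by
    rw [Finset.sum_eq_single b] <;> simp +contextual [Pi.single_apply, hab.symm])

lemma etv_apply {a b : Fin n} (hab : a ≠ b) (x : F) (i j : Fin n) :
    etv a b hab x i j = (if i = j then 1 else 0) + if i = a ∧ j = b then x else 0 := by
  rw [etv, tv_apply]
  by_cases h1 : i = a <;> by_cases h2 : j = b <;> simp [h1, h2]

/-- Modulo a normal subgroup containing the elementary transvections every invertible matrix is
diagonal. -/
lemma gl_gen {K : Subgroup (GLn n F)} (hK : K.Normal)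
    (h : ∀ a b (hab : a ≠ b) (x : F), etv a b hab x ∈ K) (g : GLn n F) :
    ∃ d : Fin n → Fˣ, g * (dg d)⁻¹ ∈ K := by
  suffices H : ∃ g' : GLn n F, (g' : Matrix (Fin n) (Fin n) F) = g ∧
      ∃ d : Fin n → Fˣ, g' * (dg d)⁻¹ ∈ K by
    obtain ⟨g', h1, h2⟩ := H
    rwa [Units.ext h1] at h2
  have hdet : (g : Matrix (Fin n) (Fin n) F).det ≠ 0 := by
    have := (Matrix.isUnit_iff_isUnit_det _).1 g.isUnit
    exact this.ne_zero
  refine Matrix.diagonal_transvection_induction_of_det_ne_zero (fun M =>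
    ∃ g' : GLn n F, (g' : Matrix (Fin n) (Fin n) F) = M ∧ ∃ d : Fin n → Fˣ, g' * (dg d)⁻¹ ∈ K)
    _ hdet ?_ ?_ ?_
  · intro D hD
    rw [Matrix.det_diagonal, Finset.prod_ne_zero_iff] at hD
    refine ⟨dg fun i => Units.mk0 (D i) (hD i (Finset.mem_univ _)), ?_, _, by
      rw [mul_inv_cancel]; exact one_mem _⟩
    ext i j
    rw [dg_apply, Matrix.diagonal_apply]; rfl
  · intro t
    refine ⟨etv t.i t.j t.hij t.c, ?_, 1, by rw [map_one, inv_one, mul_one]; exact h _ _ _ _⟩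
    ext i j
    rw [etv_apply, Matrix.TransvectionStruct.toMatrix, Matrix.transvection, Matrix.add_apply,
      Matrix.one_apply, Matrix.single_apply]
    simp only [eq_comm]
  · rintro A B hA hB ⟨a, rfl, d, hd⟩ ⟨b, rfl, e, he⟩
    refine ⟨a * b, rfl, d * e, ?_⟩
    have e1 : a * b * (dg (d * e))⁻¹ =
        (a * (dg d)⁻¹) * (dg d * (b * (dg e)⁻¹) * (dg d)⁻¹) := by
      rw [map_mul]; group
    rw [e1]
    exact mul_mem hd (hK.conj_mem _ he _)

/-- A normal subgroup containing the group of the last column contains all elementary transvections,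
which are conjugate to elements of it by permutation matrices. -/
lemma etv_mem_of_CC {K : Subgroup (GLn n F)} (hK : K.Normal) {j : Fin n} (hj : ∀ i, i ≤ j)
    (h : CC F (fun _ => 0) j ≤ K) (a b : Fin n) (hab : a ≠ b) (x : F) : etv a b hab x ∈ K := by
  let σ := Equiv.swap b j
  have h1 : σ b = j := by simp [σ]
  have h2 : σ a < j := lt_of_le_of_ne (hj _) fun h3 => hab (σ.injective (h3.trans h1.symm))
  have h3 : pm F σ * etv a b hab x * (pm F σ)⁻¹ ∈ K := by
    apply h
    rw [CC, mem_Pat]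
    intro i k hik
    have hne : ¬ (σ.symm i = a ∧ σ.symm k = b) := by
      rintro ⟨h4, h5⟩
      apply hik
      rw [(Equiv.symm_apply_eq _).1 h4, (Equiv.symm_apply_eq _).1 h5]
      simp [h1, h2]
    rw [pm_conj_apply, etv_apply, if_neg hne]
    simp
  have h4 := hK.conj_mem _ h3 (pm F σ)⁻¹
  have e : (pm F σ)⁻¹ * (pm F σ * etv a b hab x * (pm F σ)⁻¹) * (pm F σ)⁻¹⁻¹ = etv a b hab x := by
    group
  rwa [e] at h4

lemma etv_comm {a b : Fin n} (hab : a ≠ b) (x : F) (t : Fˣ) :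
    dg (Pi.mulSingle a t) * etv a b hab x = etv a b hab (t * x) * dg (Pi.mulSingle a t) := by
  apply gl_ext
  intro i j
  rw [mulEntry, mulEntry, Finset.sum_eq_single i, Finset.sum_eq_single j]
  · rw [dg_apply, dg_apply, if_pos rfl, if_pos rfl, etv_apply, etv_apply]
    by_cases h1 : i = j
    · subst h1
      have : ¬ (i = a ∧ i = b) := fun h2 => hab (h2.1.symm.trans h2.2)
      simp [this]
    · by_cases h2 : i = a ∧ j = b
      · obtain ⟨rfl, rfl⟩ := h2; simp [hab, hab.symm]
      · simp [h1, h2]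
  · intro k _ hk; rw [dg_apply, if_neg hk, mul_zero]
  · simp
  · intro k _ hk; rw [dg_apply, if_neg hk.symm, zero_mul]
  · simp

/-- For `q > 2` a homomorphism from `GL_n` to an abelian group is trivial on the special linear
group. -/
lemma hom_det {A : Type} [CommGroup A] (l : GLn n F →* A) (hF : 2 < Fintype.card F)
    {g : GLn n F} (hg : (g : Matrix (Fin n) (Fin n) F).det = 1) : l g = 1 := by
  have ht : ∃ t : Fˣ, t ≠ 1 := by
    have : 1 < Fintype.card Fˣ := by rw [Fintype.card_units]; omega
    haveI := Fintype.one_lt_card_iff_nontrivial.1 this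
    exact exists_ne 1
  obtain ⟨t, ht⟩ := ht
  have ht' : (t : F) - 1 ≠ 0 := fun h => ht (Units.ext (by simpa [sub_eq_zero] using h))
  have hetv : ∀ a b (hab : a ≠ b) (x : F), etv a b hab x ∈ l.ker := by
    intro a b hab x
    have h1 := congrArg l (etv_comm hab (x / ((t : F) - 1)) t)
    rw [map_mul, map_mul, mul_comm, mul_left_inj] at h1
    have h2 : etv a b hab (t * (x / ((t : F) - 1))) =
        etv a b hab x * etv a b hab (x / ((t : F) - 1)) := by
      apply gl_ext
      intro i j
      rw [show etv a b hab (x / ((t : F) - 1)) = tv _ _ _ from rfl, mul_tv_apply]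
      have h3 : ∑ k, etv a b hab x i k * (Pi.single a (x / ((t : F) - 1)) : Fin n → F) k =
          etv a b hab x i a * (x / ((t : F) - 1)) := by
        rw [Finset.sum_eq_single a]
        · simp
        · intro k _ hk; simp [hk]
        · simp
      rw [h3, etv_apply, etv_apply, etv_apply]
      by_cases h2 : i = a ∧ j = b
      · obtain ⟨rfl, rfl⟩ := h2; simp [hab]; field_simp; ring
      · by_cases h1 : i = a
        · subst h1
          have : j ≠ b := fun h4 => h2 ⟨rfl, h4⟩
          simp [this]
        · simp [h1]
    rw [h2, map_mul] at h1
    rw [MonoidHom.mem_ker]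
    exact (mul_eq_right.1 h1.symm)
  let K : Subgroup (GLn n F) := l.ker ⊓ (Matrix.GeneralLinearGroup.det : GLn n F →* Fˣ).ker
  have hKn : K.Normal := inferInstance
  have hK : ∀ a b (hab : a ≠ b) (x : F), etv a b hab x ∈ K := by
    intro a b hab x
    refine ⟨hetv a b hab x, ?_⟩
    refine MonoidHom.mem_ker.2 (Units.ext ?_)
    show ((etv a b hab x : GLn n F) : Matrix (Fin n) (Fin n) F).det = 1
    rw [← Matrix.det_transvection_of_ne a b hab x]
    congr 1
    ext i j
    rw [etv_apply, Matrix.transvection, Matrix.add_apply,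
      Matrix.one_apply, Matrix.single_apply]
    simp only [eq_comm]
  obtain ⟨d, hd1, hd2⟩ := gl_gen hKn hK g
  have h0 : l g = l (dg d) := by
    replace hd1 := MonoidHom.mem_ker.1 hd1
    rw [map_mul, map_inv, mul_inv_eq_one] at hd1; exact hd1
  have hprod : ∏ i, d i = 1 := by
    replace hd2 := MonoidHom.mem_ker.1 hd2
    rw [map_mul, map_inv, mul_inv_eq_one] at hd2
    have h1 := congrArg (fun u : Fˣ => (u : F)) hd2
    have h2 : ((dg d : GLn n F) : Matrix (Fin n) (Fin n) F) = Matrix.diagonal fun i => (d i : F) := by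
      ext i j
      rw [dg_apply, Matrix.diagonal_apply]
    have h3 : ((dg d : GLn n F) : Matrix (Fin n) (Fin n) F).det = ∏ i, (d i : F) := by
      rw [h2, Matrix.det_diagonal]
    apply Units.ext
    rw [Units.coe_prod, ← h3, Units.val_one, ← hg]
    exact h1.symm
  rcases Nat.eq_zero_or_pos n with hn | hn
  · subst hn
    rw [show g = 1 from gl_ext fun i => i.elim0, map_one]
  let z : Fin n := ⟨0, hn⟩
  have h1 : ∀ i x, l (dg (Pi.mulSingle i x)) = l (dg (Pi.mulSingle z x)) := by
    intro i x
    have h2 : dg (Pi.mulSingle i x) =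
        pm F (Equiv.swap i z) * dg (Pi.mulSingle z x) * (pm F (Equiv.swap i z))⁻¹ := by
      apply gl_ext
      intro a b
      rw [pm_conj_apply, dg_apply, dg_apply]
      simp only [EmbeddingLike.apply_eq_iff_eq]
      split_ifs with hab
      · congr 1
        simp only [Pi.mulSingle_apply]
        congr 1
        rw [Equiv.symm_apply_eq]; simp
      · rfl
    rw [h2, map_mul, map_mul, map_inv, mul_comm, inv_mul_cancel_left]
  have h4 : l (dg d) = ∏ i, l (dg (Pi.mulSingle i (d i))) := by
    have h5 := map_prod (l.comp dg) (fun i => Pi.mulSingle i (d i)) Finset.univ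
    rw [Finset.univ_prod_mulSingle d] at h5
    exact h5
  rw [h0, h4, Finset.prod_congr rfl fun i _ => h1 i (d i)]
  have h3 : ∏ i, l (dg (Pi.mulSingle z (d i))) =
      (l.comp (dg.comp (MonoidHom.mulSingle (fun _ : Fin n => Fˣ) z))) (∏ i, d i) := by
    rw [map_prod]; rfl
  rw [h3, hprod, map_one]

end Gen

/-! ### Lower bounds for the degrees -/

section BigDim

variable {n : ℕ} {F : Type} [Field F] [Fintype F]
variable {V : Type} [AddCommGroup V] [Module ℂ V] [FiniteDimensional ℂ V]

lemma finrank_eq_one_of_comm {G : Type} [Group G] [Fintype G] {ρ : Representation ℂ G V}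
    (h : IrrSub ρ ⊤ ⊤) (hc : ∀ a b v, ρ a (ρ b v) = ρ b (ρ a v)) : Module.finrank ℂ V = 1 := by
  have h1 : ∀ a, ∃ c : ℂ, ∀ v, ρ a v = c • v := by
    intro a
    obtain ⟨c, hc⟩ := h.schur (ρ a) (fun _ _ => trivial) (fun m _ y _ => hc a m y)
    exact ⟨c, fun v => hc v trivial⟩
  obtain ⟨v, -, hv⟩ := Submodule.exists_mem_ne_zero_of_ne_bot h.ne_bot
  have h2 := h.minimal (Submodule.span ℂ {v}) le_top (by
    intro m _ y hy
    obtain ⟨c, hc⟩ := h1 m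
    rw [hc]; exact Submodule.smul_mem _ _ hy)
  rcases h2 with h2 | h2
  · exact absurd (Submodule.span_singleton_eq_bot.1 h2) hv
  · rw [← finrank_top ℂ V, ← h2, finrank_span_singleton hv]

/-- A nonlinear irreducible representation has dimension at least `q ^ (n - 1) - 1`. -/
lemma dim_ge_of_ne_one {ρ : Representation ℂ (GLn n F) V} (h : IrrSub ρ ⊤ ⊤) (hn : 2 ≤ n)
    (h1 : Module.finrank ℂ V ≠ 1) : Fintype.card F ^ (n - 1) - 1 ≤ Module.finrank ℂ V := by
  let j : Fin n := ⟨n - 1, by omega⟩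
  let jm : Fin n := ⟨n - 2, by omega⟩
  have hjm : jm.val + 1 = j.val := by simp only [j, jm]; omega
  obtain ⟨ψ, hψ⟩ := exists_ne_one F
  by_cases hfix : ∀ c ∈ CC F (fun _ => 0) j, ∀ v, ρ c v = v
  · exfalso
    apply h1
    have hK : (MonoidHom.ker ρ).Normal := MonoidHom.normal_ker ρ
    have hC : CC F (fun _ => 0) j ≤ MonoidHom.ker ρ := fun c hc =>
      MonoidHom.mem_ker.2 (LinearMap.ext fun v => hfix c hc v)
    have hd : ∀ g, ∃ d : Fin n → Fˣ, ρ g = ρ (dg d) := by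
      intro g
      obtain ⟨d, hd⟩ := gl_gen hK (etv_mem_of_CC hK (fun i => by
        show i.val ≤ n - 1
        omega) hC) g
      refine ⟨d, ?_⟩
      have h2 : ρ (g * (dg d)⁻¹) = 1 := MonoidHom.mem_ker.1 hd
      have h3 : g = g * (dg d)⁻¹ * dg d := by group
      rw [h3, map_mul, h2, one_mul]
    refine finrank_eq_one_of_comm h fun a b v => ?_
    obtain ⟨d, hd1⟩ := hd a
    obtain ⟨e, he⟩ := hd b
    rw [hd1, he, ← rho_mul, ← rho_mul, ← map_mul, ← map_mul, mul_comm]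
  · push Not at hfix
    obtain ⟨c0, hc0, v0, hv0⟩ := hfix
    obtain ⟨y, hy⟩ := exists_component (ρ := ρ) hψ (fun _ => 0) j (sub_ne_zero.2 hv0)
    set w := act ρ (avg (CC F (fun _ => 0) j) fun c => ψ (lin j y c)) (ρ c0 v0 - v0) with hw
    let z : Fin n → F := fun a => if a < j then y a else 0
    have hlin : ∀ c, lin j y c = lin j z c := by
      intro c
      refine Finset.sum_congr rfl fun a _ => ?_
      simp only [z]; split_ifs <;> rfl
    have hz : ∃ a, z a ≠ 0 := by
      by_contra hcon
      push Not at hcon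
      apply hy
      have hl0 : ∀ c, lin j y c = 0 := by
        intro c; rw [hlin, lin]; simp [hcon]
      have hMO := mulOn_lin ψ (fun _ => 0) j y
      rw [hw, map_sub, ← act_of ρ c0, ← act_mul, avg_mul_of hMO hc0, hl0]
      simp
    have hw' : ∀ c ∈ CC F (fun _ => 0) j, ρ c w = ψ (lin j z c) • w := by
      intro c hc
      rw [hw, rho_act_avg ρ (mulOn_lin ψ (fun _ => 0) j y) hc, hlin]
    obtain ⟨g, hg, hgz⟩ := exists_rowK (h := fun _ => 0) hjm hz (by
      intro a ha
      refine ⟨?_, rfl⟩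
      by_contra h5
      exact ha (if_neg h5))
    have hWn : j.val + 1 = n := by simp only [j]; omega
    have h4 := move hjm hg hgz (v := w) (ψ := ψ) (ρ := ρ) (by rw [hWn, Wh_top]; trivial) hw'
    have h5 := dim_wh' hψ h.stable (t := j.val) j.2.le (by rw [← hjm]; omega) (v := ρ g w) trivial (by
      intro h6
      apply hy
      rw [← rho_inv_self ρ g w, h6, map_zero]) h4
    rw [finrank_top] at h5
    refine le_trans (le_of_eq ?_) h5
    have h6 : Finset.Ico j.val n = {n - 1} := by
      ext k; rw [Finset.mem_Ico, Finset.mem_singleton]; omega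
    rw [h6, Finset.prod_singleton]

/-- The number of positions whose block label is a chosen representative. -/
def rk (h : Fin n → Fin n) (D : Finset (Fin n)) : ℕ := (Finset.univ.filter fun i => h i ∈ D).card

/-- If the representative labels are the largest ones, the positions they occupy can be sorted to
the end, and the degenerate Whittaker vectors on these `rk h D` positions give the bound. -/
lemma dim_rk {ρ : Representation ℂ (GLn n F) V} {h : Fin n → Fin n} {Y : Submodule ℂ V}
    {ω : GLn n F → ℂ} {D : Finset (Fin n)} (hc : CuspSub ρ (fun i => (h i).val) Y ω)
    (hD : Transv F h ω D) (hup : ∀ k ∈ D, ∀ l, k ≤ l → l ∈ D) (hV : 1 ≤ Module.finrank ℂ V) :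
    ∏ j ∈ Finset.Ico (n - rk h D + 1) n, (Fintype.card F ^ j - 1) ≤ Module.finrank ℂ V := by
  let κ : Fin n → ℕ := fun i => if h i ∈ D then 2 * n - (h i).val else (h i).val
  let τ : Equiv.Perm (Fin n) := Tuple.sort κ
  have hmono : ∀ i j, i ≤ j → κ (τ i) ≤ κ (τ j) := fun i j hij => Tuple.monotone_sort κ hij
  have hκ1 : ∀ i, h i ∈ D → n < κ i := fun i hi => by
    simp only [κ, if_pos hi]; have := (h i).2; omega
  have hκ2 : ∀ i, h i ∉ D → κ i < n := fun i hi => by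
    simp only [κ, if_neg hi]; exact (h i).2
  set r := rk h D with hr
  have hrn : r ≤ n := by
    rw [hr, rk]; exact (Finset.card_le_univ _).trans (by simp)
  -- positions after sorting whose label lies in `D` form the final segment
  have hseg : ∀ i : Fin n, n - r ≤ i.val ↔ h (τ i) ∈ D := by
    let S : Finset (Fin n) := Finset.univ.filter fun i => h (τ i) ∈ D
    have hS : S.card = r := by
      rw [hr, rk]
      refine Finset.card_bij (fun i _ => τ i) ?_ ?_ ?_
      · intro a ha; simpa [S] using ha
      · intro a _ b _ hab; exact τ.injective hab
      · intro b hb; exact ⟨τ.symm b, by simpa [S] using hb, by simp⟩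
    have hSup : ∀ i ∈ S, ∀ j, i ≤ j → j ∈ S := by
      intro i hi j hij
      simp only [S, Finset.mem_filter, Finset.mem_univ, true_and] at hi ⊢
      by_contra hj
      have := hmono i j hij
      have := hκ1 _ hi
      have := hκ2 _ hj
      omega
    intro i
    have : h (τ i) ∈ D ↔ i ∈ S := by simp [S]
    rw [this]
    constructor
    · intro hi
      by_contra hiS
      have h2 : S ⊆ Finset.Ioi i := by
        intro k hk
        rw [Finset.mem_Ioi]
        by_contra hk'
        exact hiS (hSup k hk i (not_lt.1 hk'))
      have := Finset.card_le_card h2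
      rw [hS, Fin.card_Ioi] at this
      omega
    · intro hi
      have h2 : Finset.Ici i ⊆ S := fun k hk => hSup i hi k (Finset.mem_Ici.1 hk)
      have := Finset.card_le_card h2
      rw [hS, Fin.card_Ici] at this
      omega
  rcases Nat.eq_zero_or_pos r with hr0 | hr0
  · rw [hr0, Finset.Ico_eq_empty (by omega), Finset.prod_empty]; exact hV
  · have hc' := hc.conj τ⁻¹
    refine dim_tail hc' (fun i => (h _).2) (t := n - r) (by omega) ?_ ?_ ?_
    · intro i j hi hj
      have h1 : h (τ i) ∉ D := fun h2 => by have := (hseg i).2 h2; omega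
      have h2 := (hseg j).1 hj
      show (h (τ i)).val < (h (τ j)).val
      by_contra h3
      exact h1 (hup _ h2 _ (not_lt.1 h3))
    · intro i j hi hij
      have h1 := (hseg i).1 hi
      have h2 := (hseg j).1 (hi.trans hij)
      have h3 := hmono i j hij
      show (h (τ j)).val ≤ (h (τ i)).val
      simp only [κ, if_pos h1, if_pos h2] at h3
      have := (h (τ i)).2
      have := (h (τ j)).2
      omega
    · intro i j hi hj he
      have h1 := (hseg i).1 hi
      have h2 := (hseg j).1 hj
      have h3 := hD.1 _ h1 _ h2 (Eqv.of_conj τ⁻¹ he)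
      exact congrArg Fin.val h3

end BigDim

/-! ### Counting cuspidal characters -/

lemma finite_of_card_le {α : Type} {S : Set α} {N : ℕ}
    (h : ∀ T : Finset α, (T : Set α) ⊆ S → T.card ≤ N) : S.Finite ∧ S.ncard ≤ N := by
  have hfin : S.Finite := by
    by_contra hinf
    obtain ⟨T, hT, hc⟩ := Set.Infinite.exists_subset_card_eq hinf (N + 1)
    have := h T hT
    omega
  refine ⟨hfin, ?_⟩
  rw [Set.ncard_eq_toFinset_card S hfin]
  exact h _ (by simp)

section Om

variable {d : ℕ} {F : Type} [Field F] [Fintype F]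

/-- Normalized characters of cuspidal irreducible representations of `GL_d`. -/
def Om (d : ℕ) (F : Type) [Field F] [Fintype F] : Set (GLn d F → ℂ) :=
  {ω | ∃ R : FRep (GLn d F), IrrSub R.ρ ⊤ R.Y ∧ Cent R.ρ ⊤ R.Y ω ∧
    ∀ f : Fin d → ℕ, (∃ i j, f i ≠ f j) → ∀ y ∈ R.Y,
      (∀ u ∈ NM F f (fun _ => 0), R.ρ u y = y) → y = 0}

lemma card_HH_ge : ∏ i : Fin d, Fintype.card F ^ i.val ≤ Nat.card (HH F (fun _ : Fin d => 0) 1) := by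
  let A : (∀ j : Fin d, Fin j.val → F) → Matrix (Fin d) (Fin d) F := fun x =>
    Matrix.of fun i j => if hij : i < j then x j ⟨i.val, hij⟩ else if i = j then 1 else 0
  have hA : ∀ x, (A x).det = 1 := by
    intro x
    rw [Matrix.det_of_upperTriangular]
    · simp [A]
    · intro i j hij
      have h1 : ¬ i < j := not_lt.2 (le_of_lt hij)
      have h2 : i ≠ j := fun h => lt_irrefl _ (h ▸ hij)
      simp [A, h1, h2]
  let φ : (∀ j : Fin d, Fin j.val → F) → HH F (fun _ : Fin d => 0) 1 := fun x =>
    ⟨mkGL (A x) (by rw [hA]; exact one_ne_zero), by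
      rw [HH, mem_Pat]
      intro i j hij
      have h1 : ¬ i < j := fun h2 => hij ⟨h2, by have : i.val < j.val := h2; omega, rfl⟩
      rw [mkGL_apply]
      simp [A, h1]⟩
  have hφ : Function.Injective φ := by
    intro x y hxy
    funext j i
    have h1 : A x ⟨i.val, i.2.trans j.2⟩ j = A y ⟨i.val, i.2.trans j.2⟩ j := by
      have := congrArg (fun g : HH F (fun _ : Fin d => 0) 1 =>
        (g : GLn d F) ⟨i.val, i.2.trans j.2⟩ j) hxy
      exact this
    have h2 : (⟨i.val, i.2.trans j.2⟩ : Fin d) < j := i.2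
    simpa [A, h2] using h1
  have h3 := Nat.card_le_card_of_injective φ hφ
  refine le_trans (le_of_eq ?_) h3
  rw [Nat.card_eq_fintype_card, Fintype.card_pi]
  simp

/-- There are at most `q ^ d` normalized characters of irreducible cuspidal representations of
`GL_d`. Each of these contains a Whittaker vector, so by Frobenius reciprocity the sum of their
degrees is at most the index of the unitriangular group, while each degree is at least
`∏ (q ^ j - 1)`. -/
lemma Om_card (d : ℕ) (F : Type) [Field F] [Fintype F] :
    (Om d F).Finite ∧ (Om d F).ncard ≤ Fintype.card F ^ d := by
  apply finite_of_card_le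
  intro T hT
  have hT' : ∀ x : T, ∃ R : FRep (GLn d F), IrrSub R.ρ ⊤ R.Y ∧ Cent R.ρ ⊤ R.Y x.1 ∧
    ∀ f : Fin d → ℕ, (∃ i j, f i ≠ f j) → ∀ y ∈ R.Y,
      (∀ u ∈ NM F f (fun _ => 0), R.ρ u y = y) → y = 0 := fun x => hT x.2
  choose R hirr hcent hcusp using hT'
  have hq : 2 ≤ Fintype.card F := Fintype.one_lt_card
  set q := Fintype.card F with hqdef
  have hno : ∀ i j, i ≠ j → NoHom (R i).ρ (R j).ρ ⊤ (R i).Y (R j).Y := fun i j hij =>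
    noHom_of_cent (hcent i) (hcent j) fun h => hij (Subtype.ext h)
  rcases Nat.eq_zero_or_pos d with hd | hd
  · subst hd
    have hε : ∀ i, ∃ y ∈ (R i).Y, y ≠ 0 ∧ ∀ k ∈ (⊥ : Subgroup (GLn 0 F)),
        (R i).ρ k y = (1 : ℂ) • y := by
      intro i
      obtain ⟨y, hy, hy0⟩ := Submodule.exists_mem_ne_zero_of_ne_bot (hirr i).ne_bot
      refine ⟨y, hy, hy0, fun k hk => ?_⟩
      rw [Subgroup.mem_bot.1 hk]; simp
    have h1 := sum_finrank_le_index R hirr hno ⊥ (fun _ => 1) (MulOn.trivial _) hε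
    have h2 : Nat.card (GLn 0 F) = 1 := by
      rw [Nat.card_eq_one_iff_unique]
      exact ⟨⟨fun a b => gl_ext fun i => i.elim0⟩, ⟨1⟩⟩
    rw [h2, Subgroup.card_bot, mul_one] at h1
    rw [pow_zero]
    refine le_trans ?_ h1
    rw [← Fintype.card_coe, ← Finset.card_univ, Finset.card_eq_sum_ones]
    refine Finset.sum_le_sum fun i _ => ?_
    have := (hirr i).finrank_ne_zero
    exact Nat.one_le_iff_ne_zero.2 (by exact_mod_cast this)
  · obtain ⟨ψ, hψ⟩ := exists_ne_one F
    have hMM : MM F (fun _ : Fin d => 0) = ⊤ := by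
      rw [eq_top_iff]; intro g _; rw [mem_MM]; simp
    have hv : ∀ i, ∃ v ∈ (R i).Y, v ≠ 0 ∧ v ∈ Wh ψ (R i).ρ (fun _ => 0) 1 := by
      intro i
      refine exists_wh hψ (by rw [hMM]; exact (hirr i).stable) (hirr i).ne_bot ?_ hd ?_
      · rintro f ⟨a, b, -, hab⟩
        exact hcusp i f ⟨a, b, hab⟩
      · intro a b hb _ _
        exact ⟨⟨b.val - 1, by omega⟩, by simp; omega, rfl⟩
    have hdim : ∀ i, ∏ j ∈ Finset.Ico 1 d, (q ^ j - 1) ≤ Module.finrank ℂ (R i).Y := by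
      intro i
      obtain ⟨v, hv, hv0, hw⟩ := hv i
      exact dim_wh' hψ (hirr i).stable hd le_rfl hv hv0 hw
    have h1 := sum_finrank_le_index R hirr hno (HH F (fun _ => 0) 1) (fun u => ψ (sd u))
      (mulOn_sd ψ _ _) (fun i => hv i)
    rw [Matrix.card_GL_field] at h1
    set P := ∏ j ∈ Finset.Ico 1 d, (q ^ j - 1) with hP
    set Q := ∏ i : Fin d, q ^ i.val with hQ
    have hP0 : 0 < P := Finset.prod_pos fun j hj => by
      have hj1 := (Finset.mem_Ico.1 hj).1
      have : 1 < q ^ j := Nat.one_lt_pow (by omega) hq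
      omega
    have hQ0 : 0 < Q := Finset.prod_pos fun j hj => by positivity
    have h2 : T.card * P ≤ ∑ i, Module.finrank ℂ (R i).Y := by
      rw [← Fintype.card_coe, ← Finset.card_univ, ← smul_eq_mul, ← Finset.sum_const]
      exact Finset.sum_le_sum fun i _ => hdim i
    have h3 : ∏ i : Fin d, (q ^ d - q ^ i.val) = Q * (P * (q ^ d - 1)) := by
      have e1 : ∀ i : Fin d, q ^ d - q ^ i.val = q ^ i.val * (q ^ (d - i.val) - 1) := by
        intro i
        rw [Nat.mul_sub, ← pow_add, mul_one, Nat.add_sub_cancel' i.2.le]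
      rw [Finset.prod_congr rfl fun i _ => e1 i, Finset.prod_mul_distrib]
      congr 1
      rw [Fin.prod_univ_eq_prod_range (fun i => q ^ (d - i) - 1) d, hP,
        ← Finset.prod_range_reflect, Finset.prod_Ico_eq_prod_range]
      obtain ⟨e, rfl⟩ : ∃ e, d = e + 1 := ⟨d - 1, by omega⟩
      rw [Finset.prod_range_succ]
      simp only [Nat.add_sub_cancel]
      congr 1
      · refine Finset.prod_congr rfl fun i hi => ?_
        have := Finset.mem_range.1 hi
        congr 2; omega
      · congr 2; omega
    have h4 : (T.card * P) * Q ≤ Q * (P * (q ^ d - 1)) := by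
      calc (T.card * P) * Q ≤ (∑ i, Module.finrank ℂ (R i).Y) * Nat.card (HH F (fun _ : Fin d => 0) 1) :=
            Nat.mul_le_mul h2 card_HH_ge
        _ ≤ _ := by
          refine h1.trans (le_of_eq ?_)
          rw [← h3]
    have h5 : T.card * (P * Q) ≤ (q ^ d - 1) * (P * Q) := by
      calc _ = (T.card * P) * Q := by ring
        _ ≤ _ := h4
        _ = _ := by ring
    have := Nat.le_of_mul_le_mul_right h5 (Nat.mul_pos hP0 hQ0)
    omega

end Om

/-! ### Factors of a Levi subgroup -/

section Emb

variable {n : ℕ} {F : Type} [Field F] [Fintype F]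

/-- The size of the block with label `k`. -/
noncomputable def bd (h : Fin n → ℕ) (k : ℕ) : ℕ := Fintype.card {i : Fin n // h i = k}

/-- An enumeration of the block with label `k`. -/
noncomputable def be (h : Fin n → ℕ) (k : ℕ) : {i : Fin n // h i = k} ≃ Fin (bd h k) :=
  Fintype.equivFin _

/-- Block embedding of square matrices. -/
noncomputable def embM (F : Type) [Field F] [Fintype F] (h : Fin n → ℕ) (k : ℕ) :
    Matrix (Fin (bd h k)) (Fin (bd h k)) F →* Matrix (Fin n) (Fin n) F where
  toFun A := (Matrix.fromBlocks (A.submatrix (be h k) (be h k)) 0 0 1).submatrix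
    (Equiv.sumCompl fun i => h i = k).symm (Equiv.sumCompl fun i => h i = k).symm
  map_one' := by simp
  map_mul' A B := by
    rw [Matrix.submatrix_mul_equiv, Matrix.fromBlocks_multiply]
    simp

/-- The embedding of a smaller general linear group as the factor `BB F h k`. -/
noncomputable def emb (F : Type) [Field F] [Fintype F] (h : Fin n → ℕ) (k : ℕ) :
    GLn (bd h k) F →* GLn n F := Units.map (embM F h k)

lemma emb_in {h : Fin n → ℕ} {k : ℕ} (g : GLn (bd h k) F) {i j : Fin n} (hi : h i = k)
    (hj : h j = k) : emb F h k g i j = g (be h k ⟨i, hi⟩) (be h k ⟨j, hj⟩) := by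
  show Matrix.submatrix _ _ _ i j = _
  rw [Matrix.submatrix_apply, Equiv.sumCompl_symm_apply_of_pos (p := fun i => h i = k) hi,
    Equiv.sumCompl_symm_apply_of_pos (p := fun i => h i = k) hj]
  rfl

lemma emb_out {h : Fin n → ℕ} {k : ℕ} (g : GLn (bd h k) F) {i j : Fin n}
    (hij : ¬ (h i = k ∧ h j = k)) : emb F h k g i j = if i = j then 1 else 0 := by
  show Matrix.submatrix _ _ _ i j = _
  rw [Matrix.submatrix_apply]
  by_cases hi : h i = k
  · have hj : ¬ h j = k := fun hj => hij ⟨hi, hj⟩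
    rw [Equiv.sumCompl_symm_apply_of_pos (p := fun i => h i = k) hi,
      Equiv.sumCompl_symm_apply_of_neg (p := fun i => h i = k) hj, if_neg]
    · rfl
    · rintro rfl; exact hj hi
  · rw [Equiv.sumCompl_symm_apply_of_neg (p := fun i => h i = k) hi]
    by_cases hj : h j = k
    · rw [Equiv.sumCompl_symm_apply_of_pos (p := fun i => h i = k) hj, if_neg]
      · rfl
      · rintro rfl; exact hi hj
    · rw [Equiv.sumCompl_symm_apply_of_neg (p := fun i => h i = k) hj, Matrix.fromBlocks_apply₂₂,
        Matrix.one_apply]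
      simp

lemma emb_mem_BB (h : Fin n → ℕ) (k : ℕ) (g : GLn (bd h k) F) : emb F h k g ∈ BB F h k := by
  rw [BB, mem_Pat]
  exact fun i j hij => emb_out g hij

lemma emb_mem_MM (h : Fin n → ℕ) (k : ℕ) (g : GLn (bd h k) F) : emb F h k g ∈ MM F h :=
  BB_le_MM h k (emb_mem_BB h k g)

/-- Restriction of a sum to one block. -/
lemma sum_block {h : Fin n → ℕ} {k : ℕ} {f : Fin n → F} (hf : ∀ l, h l ≠ k → f l = 0) :
    ∑ l, f l = ∑ p : Fin (bd h k), f ((be h k).symm p) := by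
  rw [Fintype.sum_equiv (be h k).symm (fun p => f ((be h k).symm p)) (fun l => f l) fun _ => rfl]
  rw [← Finset.sum_subtype (Finset.univ.filter fun l => h l = k) (by simp) f]
  refine (Finset.sum_subset (Finset.filter_subset _ _) fun l _ hl => hf l ?_).symm
  simpa using hl

/-- The block with label `k` of an element of the Levi subgroup. -/
noncomputable def sub (h : Fin n → ℕ) (k : ℕ) (m : GLn n F) :
    Matrix (Fin (bd h k)) (Fin (bd h k)) F :=
  Matrix.of fun p r => m ((be h k).symm p) ((be h k).symm r)

lemma sub_mul {h : Fin n → ℕ} {k : ℕ} {m m' : GLn n F} (hm : m ∈ MM F h) :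
    sub h k (m * m') = sub h k m * sub h k m' := by
  ext p r
  rw [Matrix.mul_apply]
  show (m * m') _ _ = _
  rw [mulEntry]
  refine sum_block (k := k) (f := fun l => m ((be h k).symm p) l * m' l ((be h k).symm r)) ?_
  intro l hl
  rw [mem_MM.1 hm, zero_mul]
  rw [((be h k).symm p).2]; exact hl.symm

lemma sub_one (h : Fin n → ℕ) (k : ℕ) : sub h k (1 : GLn n F) = 1 := by
  ext p r
  show (1 : GLn n F) _ _ = _
  rw [oneEntry, Matrix.one_apply]
  simp [Subtype.ext_iff.symm]

/-- An element of the Levi subgroup is the product of its block with label `k` and an element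
trivial on that block. -/
lemma exists_block {h : Fin n → ℕ} (k : ℕ) {m : GLn n F} (hm : m ∈ MM F h) :
    ∃ a : GLn (bd h k) F, ∃ m' ∈ MM F h, (∀ i j, h i = k → m' i j = if i = j then 1 else 0) ∧
      m = emb F h k a * m' := by
  have hm' : m⁻¹ ∈ MM F h := inv_mem hm
  let a : GLn (bd h k) F := ⟨sub h k m, sub h k m⁻¹, by rw [← sub_mul hm, mul_inv_cancel, sub_one],
    by rw [← sub_mul hm', inv_mul_cancel, sub_one]⟩
  refine ⟨a, (emb F h k a)⁻¹ * m, mul_mem (inv_mem (emb_mem_MM h k a)) hm, ?_, by group⟩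
  intro i j hi
  rw [← map_inv, mulEntry, sum_block (k := k)]
  · by_cases hj : h j = k
    · have h1 : ∀ p, emb F h k a⁻¹ i ((be h k).symm p) * m ((be h k).symm p) j =
          a⁻¹ (be h k ⟨i, hi⟩) p * a p (be h k ⟨j, hj⟩) := by
        intro p
        rw [emb_in _ hi ((be h k).symm p).2]
        congr 1
        · simp
        · show _ = m _ _
          simp
      rw [Finset.sum_congr rfl fun p _ => h1 p, ← mulEntry, inv_mul_cancel, oneEntry]
      simp
    · rw [if_neg (by rintro rfl; exact hj hi)]
      refine Finset.sum_eq_zero fun p _ => ?_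
      rw [mem_MM.1 hm, mul_zero]
      rw [((be h k).symm p).2]; exact fun h => hj h.symm
  · intro l hl
    rw [emb_out _ (fun h2 => hl h2.2), if_neg (by rintro rfl; exact hl hi), zero_mul]

lemma emb_comm {h : Fin n → ℕ} {k : ℕ} {m : GLn n F} (hm : m ∈ MM F h)
    (h1 : ∀ i j, h i = k → m i j = if i = j then 1 else 0) (b : GLn (bd h k) F) :
    m * emb F h k b = emb F h k b * m := by
  apply gl_ext
  intro i j
  rw [mulEntry, mulEntry]
  by_cases hi : h i = k
  · have e1 : ∑ l, m i l * emb F h k b l j = emb F h k b i j := by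
      rw [Finset.sum_eq_single i]
      · rw [h1 i i hi]; simp
      · intro l _ hl; rw [h1 i l hi, if_neg hl.symm, zero_mul]
      · simp
    rw [e1, Finset.sum_eq_single j]
    · by_cases hj : h j = k
      · rw [h1 j j hj]; simp
      · rw [emb_out b (fun h => hj h.2), if_neg (by rintro rfl; exact hj hi), zero_mul]
    · intro l _ hl
      by_cases hl' : h l = k
      · rw [h1 l j hl', if_neg hl, mul_zero]
      · rw [emb_out b (fun h => hl' h.2), if_neg (by rintro rfl; exact hl' hi), zero_mul]
    · simp
  · rw [Finset.sum_eq_single j, Finset.sum_eq_single i]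
    · rw [emb_out b (fun h => hi h.1)]
      by_cases hj : h j = k
      · rw [mem_MM.1 hm i j (by rw [hj]; exact hi)]; simp
      · rw [emb_out b (fun h => hj h.1)]; simp
    · intro l _ hl; rw [emb_out b (fun h => hi h.1), if_neg hl.symm, zero_mul]
    · simp
    · intro l _ hl
      by_cases hl' : h l = k
      · rw [mem_MM.1 hm i l (by rw [hl']; exact hi), zero_mul]
      · rw [emb_out b (fun h => hl' h.1), if_neg hl, mul_zero]
    · simp

lemma emb_surj {h : Fin n → ℕ} {k : ℕ} {x : GLn n F} (hx : x ∈ BB F h k) :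
    ∃ a, emb F h k a = x := by
  obtain ⟨a, m', hm', h1, h2⟩ := exists_block k (BB_le_MM h k hx)
  refine ⟨a, ?_⟩
  have h3 : m' ∈ BB F h k := by
    have : m' = (emb F h k a)⁻¹ * x := by rw [h2]; group
    rw [this]; exact mul_mem (inv_mem (emb_mem_BB h k a)) hx
  rw [h2, show m' = 1 from gl_ext fun i j => ?_, mul_one]
  rw [oneEntry]
  by_cases hi : h i = k
  · exact h1 i j hi
  · rw [BB, mem_Pat] at h3
    exact h3 i j fun h => hi h.1

end Emb

section Fac

variable {n : ℕ} {F : Type} [Field F] [Fintype F]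
variable {V : Type} [AddCommGroup V] [Module ℂ V] [FiniteDimensional ℂ V]
variable {ρ : Representation ℂ (GLn n F) V} {h : Fin n → ℕ} {Y : Submodule ℂ V} {ω : GLn n F → ℂ}

/-- The class sums of a factor of the Levi subgroup act by the scalars given by `ω`. -/
lemma emb_sum (hY : IrrSub ρ (MM F h) Y) (hω : Cent ρ (MM F h) Y ω) (k : ℕ)
    (x : GLn (bd h k) F) {y : V} (hy : y ∈ Y) :
    ∑ b : GLn (bd h k) F, ρ (emb F h k (b * x * b⁻¹)) y =
      ((Fintype.card (GLn (bd h k) F) : ℂ) * ω (emb F h k x)) • y := by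
  let T : V →ₗ[ℂ] V := ∑ b : GLn (bd h k) F, ρ (emb F h k (b * x * b⁻¹))
  have hT : ∀ y, T y = ∑ b : GLn (bd h k) F, ρ (emb F h k (b * x * b⁻¹)) y := fun y => by
    simp [T, LinearMap.sum_apply]
  have hcomm : ∀ m ∈ MM F h, ∀ y ∈ Y, T (ρ m y) = ρ m (T y) := by
    intro m hm y hy
    obtain ⟨a, m', hm', h1, h2⟩ := exists_block k hm
    rw [hT, hT, map_sum, ← Equiv.sum_comp (Equiv.mulLeft a)]
    refine Finset.sum_congr rfl fun b _ => ?_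
    rw [← rho_mul, ← rho_mul]
    congr 2
    have e1 : emb F h k (a * b * x * (a * b)⁻¹) =
        emb F h k a * emb F h k (b * x * b⁻¹) * (emb F h k a)⁻¹ := by
      rw [← map_inv, ← map_mul, ← map_mul]
      congr 1; group
    have e2 : Equiv.mulLeft a b = a * b := rfl
    rw [e2, e1, h2, mul_assoc (emb F h k a) m', emb_comm hm' h1]
    group
  obtain ⟨c, hc⟩ := hY.schur T (fun y hy => by
    rw [hT]; exact sum_mem fun b _ => hY.stable _ (emb_mem_MM h k _) y hy) hcomm
  obtain ⟨z, hz, hz0⟩ := Submodule.exists_mem_ne_zero_of_ne_bot hY.ne_bot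
  have h1 : ∑ m : MM F h, ρ (m : GLn n F) (T (ρ (m : GLn n F)⁻¹ z)) =
      ((Fintype.card (MM F h) : ℂ) * c) • z := by
    have : ∀ m : MM F h, ρ (m : GLn n F) (T (ρ (m : GLn n F)⁻¹ z)) = c • z := by
      intro m
      rw [hc _ (hY.stable _ (inv_mem m.2) z hz), map_smul, rho_self_inv]
    rw [Finset.sum_congr rfl fun m _ => this m, Finset.sum_const, Finset.card_univ,
      ← Nat.cast_smul_eq_nsmul ℂ, smul_smul]
  have h2 : ∑ m : MM F h, ρ (m : GLn n F) (T (ρ (m : GLn n F)⁻¹ z)) =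
      ((Fintype.card (GLn (bd h k) F) : ℂ) * ((Fintype.card (MM F h) : ℂ) * ω (emb F h k x))) • z := by
    have : ∀ m : MM F h, ρ (m : GLn n F) (T (ρ (m : GLn n F)⁻¹ z)) =
        ∑ b : GLn (bd h k) F, ρ ((m : GLn n F) * emb F h k (b * x * b⁻¹) * (m : GLn n F)⁻¹) z := by
      intro m
      rw [hT, map_sum]
      refine Finset.sum_congr rfl fun b _ => ?_
      rw [rho_mul, rho_mul]
    rw [Finset.sum_congr rfl fun m _ => this m, Finset.sum_comm]
    have h3 : ∀ b : GLn (bd h k) F, ∑ m : MM F h,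
        ρ ((m : GLn n F) * emb F h k (b * x * b⁻¹) * (m : GLn n F)⁻¹) z =
        ((Fintype.card (MM F h) : ℂ) * ω (emb F h k x)) • z := by
      intro b
      rw [hω.sum_eq _ (emb_mem_MM h k _) z hz]
      congr 2
      rw [map_mul, map_mul, map_inv]
      exact hω.conj hY.ne_bot (emb_mem_MM h k b)
    rw [Finset.sum_congr rfl fun b _ => h3 b, Finset.sum_const, Finset.card_univ,
      ← Nat.cast_smul_eq_nsmul ℂ, smul_smul]
  rw [h1] at h2
  have h4 := smul_left_injective ℂ hz0 h2
  have h5 : c = (Fintype.card (GLn (bd h k) F) : ℂ) * ω (emb F h k x) := by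
    apply mul_left_cancel₀ (card_ne_zero' (MM F h))
    rw [h4]; ring
  rw [← hT, hc y hy, h5]

/-- The normalized character of a Levi subgroup is multiplicative over its factors. -/
lemma omega_mul (hY : IrrSub ρ (MM F h) Y) (hω : Cent ρ (MM F h) Y ω) (k : ℕ)
    (x : GLn (bd h k) F) {m : GLn n F} (hm : m ∈ MM F h)
    (h1 : ∀ i j, h i = k → m i j = if i = j then 1 else 0) :
    ω (emb F h k x * m) = ω (emb F h k x) * ω m := by
  obtain ⟨z, hz, hz0⟩ := Submodule.exists_mem_ne_zero_of_ne_bot hY.ne_bot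
  have hconj : ∀ b, ω (emb F h k (b * x * b⁻¹) * m) = ω (emb F h k x * m) := by
    intro b
    rw [← hω.conj hY.ne_bot (emb_mem_MM h k b) (x := emb F h k x * m)]
    congr 1
    have := emb_comm hm h1 b⁻¹
    rw [map_mul, map_mul, mul_assoc, ← this, map_inv]
    group
  have e1 : ∑ l : MM F h, ∑ b : GLn (bd h k) F,
      ρ ((l : GLn n F) * (emb F h k (b * x * b⁻¹) * m) * (l : GLn n F)⁻¹) z =
      ((Fintype.card (GLn (bd h k) F) : ℂ) * ((Fintype.card (MM F h) : ℂ) *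
        ω (emb F h k x * m))) • z := by
    rw [Finset.sum_comm]
    have h3 : ∀ b : GLn (bd h k) F, ∑ l : MM F h,
        ρ ((l : GLn n F) * (emb F h k (b * x * b⁻¹) * m) * (l : GLn n F)⁻¹) z =
        ((Fintype.card (MM F h) : ℂ) * ω (emb F h k x * m)) • z := by
      intro b
      rw [hω.sum_eq _ (mul_mem (emb_mem_MM h k _) hm) z hz, hconj]
    rw [Finset.sum_congr rfl fun b _ => h3 b, Finset.sum_const, Finset.card_univ,
      ← Nat.cast_smul_eq_nsmul ℂ, smul_smul]
  have e2 : ∑ l : MM F h, ∑ b : GLn (bd h k) F,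
      ρ ((l : GLn n F) * (emb F h k (b * x * b⁻¹) * m) * (l : GLn n F)⁻¹) z =
      ((Fintype.card (GLn (bd h k) F) : ℂ) * ω (emb F h k x) *
        ((Fintype.card (MM F h) : ℂ) * ω m)) • z := by
    have h3 : ∀ l : MM F h, ∑ b : GLn (bd h k) F,
        ρ ((l : GLn n F) * (emb F h k (b * x * b⁻¹) * m) * (l : GLn n F)⁻¹) z =
        ((Fintype.card (GLn (bd h k) F) : ℂ) * ω (emb F h k x)) •
          ρ ((l : GLn n F) * m * (l : GLn n F)⁻¹) z := by
      intro l
      have h4 : ρ (m * (l : GLn n F)⁻¹) z ∈ Y := hY.stable _ (mul_mem hm (inv_mem l.2)) z hz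
      have h5 := congrArg (ρ (l : GLn n F)) (emb_sum hY hω k x h4)
      rw [map_sum, map_smul, ← rho_mul] at h5
      rw [mul_assoc (l : GLn n F) m, ← h5]
      refine Finset.sum_congr rfl fun b _ => ?_
      rw [← rho_mul, ← rho_mul]
      congr 2
      group
    rw [Finset.sum_congr rfl fun l _ => h3 l, ← Finset.smul_sum, hω.sum_eq m hm z hz, smul_smul]
  rw [e1] at e2
  have h4 := smul_left_injective ℂ hz0 e2
  have hc1 := card_ne_zero' (MM F h)
  have hc2 : (Fintype.card (GLn (bd h k) F) : ℂ) ≠ 0 := by exact_mod_cast Fintype.card_ne_zero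
  apply mul_left_cancel₀ hc1
  apply mul_left_cancel₀ hc2
  rw [h4]; ring

end Fac

/-! ### Counting representations with given combinatorial data -/

section CountGL

variable {n : ℕ} {F : Type} [Field F] [Fintype F]
variable {V : Type} [AddCommGroup V] [Module ℂ V] [FiniteDimensional ℂ V]
variable {ρ : Representation ℂ (GLn n F) V} {h : Fin n → ℕ} {Y : Submodule ℂ V} {ω : GLn n F → ℂ}

/-- The restriction of a cuspidal datum to a block is a cuspidal normalized character. -/
lemma emb_Om (hc : CuspSub ρ h Y ω) (k : ℕ) : (fun x => ω (emb F h k x)) ∈ Om (bd h k) F := by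
  let ρ' : Representation ℂ (GLn (bd h k) F) V := ρ.comp (emb F h k)
  have hρ' : ∀ g v, ρ' g v = ρ (emb F h k g) v := fun _ _ => rfl
  obtain ⟨Y', hY', hirr⟩ := exists_irrSub ρ' ⊤ Y hc.irr.ne_bot
    (fun m _ y hy => hc.irr.stable _ (emb_mem_MM h k m) y hy)
  refine ⟨⟨V, ρ', Y'⟩, hirr, ⟨?_, fun x hx => absurd trivial hx⟩, ?_⟩
  · intro x _ y hy
    have h1 := emb_sum hc.irr hc.cent k x (hY' hy)
    have h2 : Fintype.card (⊤ : Subgroup (GLn (bd h k) F)) = Fintype.card (GLn (bd h k) F) :=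
      Fintype.card_congr Subgroup.topEquiv.toEquiv
    show ∑ m : (⊤ : Subgroup (GLn (bd h k) F)), ρ' ((m : GLn (bd h k) F) * x * (m : GLn (bd h k) F)⁻¹) y = _
    rw [h2, ← h1]
    exact Fintype.sum_equiv Subgroup.topEquiv.toEquiv _
      (fun b => ρ (emb F h k (b * x * b⁻¹)) y) fun b => rfl
  · rintro f ⟨a, b, hab⟩ y hy hfix
    let f' : Fin n → ℕ := fun i => if hi : h i = k then f (be h k ⟨i, hi⟩) else 0
    have hf' : ∀ i (hi : h i = k), f' i = f (be h k ⟨i, hi⟩) := fun i hi => dif_pos hi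
    refine hc.cusp f' ⟨(be h k).symm a, (be h k).symm b, ?_, ?_⟩ y (hY' hy) ?_
    · rw [((be h k).symm a).2, ((be h k).symm b).2]
    · rw [hf' _ ((be h k).symm a).2, hf' _ ((be h k).symm b).2]
      simpa using hab
    · intro u hu
      have hu2 := mem_Pat.1 (show u ∈ Pat _ _ from hu)
      have huB : u ∈ BB F h k := by
        rw [BB, mem_Pat]
        intro i j hij
        apply hu2
        rintro ⟨h1, h2⟩
        by_cases hi : h i = k
        · exact hij ⟨hi, h2 ▸ hi⟩
        · have hj : h j ≠ k := h2 ▸ hi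
          simp [f', hi, hj] at h1
      obtain ⟨a, rfl⟩ := emb_surj huB
      refine hfix a ?_
      rw [NM, mem_Pat]
      intro i j hij
      have h3 := hu2 ((be h k).symm i) ((be h k).symm j) (by
        rintro ⟨h1, h2⟩
        rw [hf' _ ((be h k).symm i).2, hf' _ ((be h k).symm j).2] at h1
        exact hij ⟨by simpa using h1, rfl⟩)
      rw [emb_in _ ((be h k).symm i).2 ((be h k).symm j).2] at h3
      simpa [Subtype.ext_iff.symm] using h3

/-- A normalized character of the Levi subgroup is determined by its restrictions to the factors. -/
lemma omega_ext {V' : Type} [AddCommGroup V'] [Module ℂ V'] [FiniteDimensional ℂ V']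
    {ρ' : Representation ℂ (GLn n F) V'} {Y' : Submodule ℂ V'} {ω' : GLn n F → ℂ}
    (hc : CuspSub ρ h Y ω) (hc' : CuspSub ρ' h Y' ω')
    (hk : ∀ i x, ω (emb F h (h i) x) = ω' (emb F h (h i) x)) : ω = ω' := by
  have key : ∀ S : Finset (Fin n), ∀ m ∈ MM F h,
      (∀ i j, (∀ l ∈ S, h i ≠ h l) → m i j = if i = j then 1 else 0) → ω m = ω' m := by
    intro S
    induction S using Finset.induction_on with
    | empty =>
      intro m hm h1
      rw [show m = 1 from gl_ext fun i j => by rw [h1 i j (by simp), oneEntry],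
        hc.cent.one hc.irr.ne_bot, hc'.cent.one hc'.irr.ne_bot]
    | insert k S _ ih =>
      intro m hm h1
      obtain ⟨a, m', hm', h2, h3⟩ := exists_block (h k) hm
      rw [h3, omega_mul hc.irr hc.cent _ a hm' h2, omega_mul hc'.irr hc'.cent _ a hm' h2, hk k a,
        ih m' hm' ?_]
      intro i j hi
      by_cases hik : h i = h k
      · exact h2 i j hik
      · rw [← h1 i j ?_, h3, mulEntry, Finset.sum_eq_single i]
        · rw [emb_out a (fun h => hik h.1)]; simp
        · intro l _ hl; rw [emb_out a (fun h => hik h.1), if_neg hl.symm, zero_mul]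
        · simp
        · intro l hl
          rcases Finset.mem_insert.1 hl with rfl | hl
          · exact hik
          · exact hi l hl
  funext m
  by_cases hm : m ∈ MM F h
  · exact key Finset.univ m hm fun i j hi => absurd rfl (hi i (Finset.mem_univ _))
  · rw [hc.cent.eq_zero m hm, hc'.cent.eq_zero m hm]

/-- Combinatorial data attached to an irreducible representation: the labelling, the set of
representatives of equivalence classes of labels, and for each label its representative together
with a permutation realising the equivalence. -/
abbrev Key (n : ℕ) : Type :=
  (Fin n → Fin n) × Finset (Fin n) × (Fin n → Fin n) × (Fin n → Equiv.Perm (Fin n))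

/-- The cuspidal datum `ω` of `ρ` is compatible with the given combinatorial data. -/
structure HasKey (ρ : Representation ℂ (GLn n F) V) (K : Key n) (ω : GLn n F → ℂ) : Prop where
  cusp : ∃ Y, CuspSub ρ (fun i => (K.1 i).val) Y ω
  mem : ∀ k, K.2.2.1 k ∈ K.2.1
  perm : ∀ k i, (K.1 i).val = k.val ↔ (K.1 (K.2.2.2 k i)).val = (K.2.2.1 k).val
  eq : ∀ k : Fin n, ∀ x ∈ BB F (fun i => (K.1 i).val) k.val,
    ω (pm F (K.2.2.2 k) * x * (pm F (K.2.2.2 k))⁻¹) = ω x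

/-- Every nonzero representation of `GL_n` has a key whose rank `rk` bounds the degree from below. -/
lemma exists_key (ρ : Representation ℂ (GLn n F) V) (hV : ∃ v : V, v ≠ 0) :
    ∃ K ω, HasKey ρ K ω ∧
      ∏ j ∈ Finset.Ico (n - rk K.1 K.2.1 + 1) n, (Fintype.card F ^ j - 1) ≤ Module.finrank ℂ V := by
  obtain ⟨h, Y, ω, D, hc, hT, hup⟩ := exists_good ρ hV
  choose r hr hE using hT.2
  choose W hW1 hW2 using hE
  refine ⟨(h, D, r, W), ω, ⟨⟨Y, hc⟩, hr, fun k i => hW1 k i, fun k => hW2 k⟩, ?_⟩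
  refine dim_rk hc hT hup ?_
  obtain ⟨v, hv⟩ := hV
  have : Nontrivial V := ⟨v, 0, hv⟩
  exact Module.finrank_pos

/-- For a given key, the normalized character is determined by its restrictions to the factors with
representative labels, since all other factors are conjugate to these. -/
lemma HasKey.ext {V' : Type} [AddCommGroup V'] [Module ℂ V'] [FiniteDimensional ℂ V']
    {ρ' : Representation ℂ (GLn n F) V'} {ω' : GLn n F → ℂ} {K : Key n}
    (hc : HasKey ρ K ω) (hc' : HasKey ρ' K ω')
    (hk : ∀ k ∈ K.2.1, ∀ x, ω (emb F (fun i => (K.1 i).val) k.val x) =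
      ω' (emb F (fun i => (K.1 i).val) k.val x)) : ω = ω' := by
  obtain ⟨Y, h1⟩ := hc.cusp
  obtain ⟨Y', h1'⟩ := hc'.cusp
  refine omega_ext h1 h1' fun i x => ?_
  have hx := emb_mem_BB (fun i => (K.1 i).val) (K.1 i).val x
  rw [← hc.eq (K.1 i) _ hx, ← hc'.eq (K.1 i) _ hx]
  have h2 := (conj_mem_BB (hc.perm (K.1 i)) _).1 hx
  obtain ⟨a, ha⟩ := emb_surj h2
  rw [← ha]
  exact hk _ (hc.mem _) a

/-- The number of normalized characters with a given key is at most `q ^ rk`: each representative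
block of size `d` contributes at most `q ^ d` cuspidal characters. -/
lemma count_omega {ι : Type} [Fintype ι] (R : ι → FRep (GLn n F)) (K : Key n)
    (ω : ι → GLn n F → ℂ) (hK : ∀ i, HasKey (R i).ρ K (ω i)) :
    (Finset.univ.image ω).card ≤ Fintype.card F ^ rk K.1 K.2.1 := by
  let h : Fin n → ℕ := fun i => (K.1 i).val
  let B : (k : {k // k ∈ K.2.1}) → Finset (GLn (bd h k.1.val) F → ℂ) := fun k =>
    (Om_card (bd h k.1.val) F).1.toFinset
  let Φ : (GLn n F → ℂ) → ((k : {k // k ∈ K.2.1}) → (GLn (bd h k.1.val) F → ℂ)) :=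
    fun ω k x => ω (emb F h k.1.val x)
  have h1 : (Finset.univ.image ω).card ≤ (Fintype.piFinset B).card := by
    refine Finset.card_le_card_of_injOn Φ ?_ ?_
    · intro w hw
      obtain ⟨i, -, rfl⟩ := Finset.mem_image.1 hw
      refine Finset.mem_coe.2 (Fintype.mem_piFinset.2 fun k => ?_)
      obtain ⟨Y, hc⟩ := (hK i).cusp
      rw [Set.Finite.mem_toFinset]
      exact emb_Om hc _
    · intro w hw w' hw' he
      obtain ⟨i, -, rfl⟩ := Finset.mem_image.1 hw
      obtain ⟨i', -, rfl⟩ := Finset.mem_image.1 hw'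
      refine (hK i).ext (hK i') fun k hk x => ?_
      exact congrFun (congrFun he ⟨k, hk⟩) x
  refine h1.trans ?_
  rw [Fintype.card_piFinset]
  have h2 : ∀ k : {k // k ∈ K.2.1}, (B k).card ≤ Fintype.card F ^ bd h k.1.val := by
    intro k
    rw [← Set.ncard_eq_toFinset_card _ (Om_card (bd h k.1.val) F).1]
    exact (Om_card _ F).2
  refine (Finset.prod_le_prod' fun k _ => h2 k).trans ?_
  rw [Finset.prod_pow_eq_pow_sum]
  refine le_of_eq ?_
  congr 1
  rw [Finset.univ_eq_attach, Finset.sum_attach K.2.1 fun k => bd h k.val, rk,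
    Finset.card_eq_sum_card_fiberwise (f := K.1) (t := K.2.1)]
  · refine Finset.sum_congr rfl fun k hk => ?_
    rw [bd, Fintype.card_subtype]
    congr 1
    ext i
    simp only [Finset.mem_filter, Finset.mem_univ, true_and, h]
    constructor
    · intro h3
      have : K.1 i = k := Fin.ext h3
      exact ⟨this ▸ hk, this⟩
    · rintro ⟨-, h3⟩; rw [h3]
  · intro i hi
    simpa using hi

/-- At most `n!` inequivalent irreducible representations contain a given cuspidal datum: the
idempotent `epsi` is nonzero on each of them, and it cuts out an algebra of dimension at most `n!`. -/
lemma count_fixed {ι : Type} [Fintype ι] (R : ι → FRep (GLn n F)) (h : Fin n → ℕ)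
    (ω : GLn n F → ℂ) (hirr : ∀ i, IrrSub (R i).ρ ⊤ (R i).Y)
    (hno : ∀ i j, i ≠ j → NoHom (R i).ρ (R j).ρ ⊤ (R i).Y (R j).Y) (hY : ∀ i, (R i).Y = ⊤)
    (hK : ∀ i, ∃ Y, CuspSub (R i).ρ h Y ω) : Fintype.card ι ≤ n.factorial := by
  rcases isEmpty_or_nonempty ι with he | ⟨⟨i0⟩⟩
  · rw [Fintype.card_eq_zero]; exact Nat.zero_le _
  obtain ⟨Y, hc⟩ := hK i0
  obtain ⟨v, hv, hv0⟩ := Submodule.exists_mem_ne_zero_of_ne_bot hc.irr.ne_bot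
  obtain ⟨p, hp⟩ := hc.irr.exists_rankOne hv hv0
  obtain ⟨S, hS, hS'⟩ := mackey_span hc hv hp
  refine (count_le_of_span R hirr hno (epsi h p) ?_ S hS').trans hS
  intro i
  obtain ⟨Y', hc'⟩ := hK i
  obtain ⟨y, hy, hy0⟩ := hp.nonzero ω hc.cent _ (R i).ρ Y' hc'.irr.ne_bot hc'.irr.stable hc'.cent
  refine ⟨y, by rw [hY]; trivial, ?_⟩
  rw [act_epsi hp.supp hc'.fixN hy]
  exact hy0

/-- The number of inequivalent irreducible representations with a given key. -/
lemma count_key {ι : Type} [Fintype ι] (R : ι → FRep (GLn n F)) (K : Key n)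
    (hirr : ∀ i, IrrSub (R i).ρ ⊤ (R i).Y)
    (hno : ∀ i j, i ≠ j → NoHom (R i).ρ (R j).ρ ⊤ (R i).Y (R j).Y) (hY : ∀ i, (R i).Y = ⊤)
    (ω : ι → GLn n F → ℂ) (hK : ∀ i, HasKey (R i).ρ K (ω i)) :
    Fintype.card ι ≤ n.factorial * Fintype.card F ^ rk K.1 K.2.1 := by
  have h1 := Finset.card_le_mul_card_image (f := ω) Finset.univ n.factorial (by
    intro w hw
    rw [← Fintype.card_coe]
    refine count_fixed (fun i : {i // i ∈ Finset.univ.filter fun i => ω i = w} => R i)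
      (fun i => (K.1 i).val) w (fun i => hirr i) ?_ (fun i => hY i) ?_
    · intro i j hij; exact hno _ _ fun h => hij (Subtype.ext h)
    · intro i
      have h2 : ω i = w := (Finset.mem_filter.1 i.2).2
      have h3 := (hK i).cusp
      rw [h2] at h3
      exact h3)
  rw [Finset.card_univ] at h1
  exact h1.trans (Nat.mul_le_mul_left _ (count_omega R K ω hK))

end CountGL

/-! ### The estimate for the general linear group -/

section Analysis

lemma sum_range_real (n : ℕ) : ∑ i ∈ Finset.range n, (i : ℝ) = n * (n - 1) / 2 := by
  induction n with
  | zero => simp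
  | succ n ih => rw [Finset.sum_range_succ, ih]; push_cast; ring

lemma sum_Ico_ge {n r : ℕ} (hr : 2 ≤ r) (hrn : r ≤ n) :
    (r : ℝ) * (n - 1) / 2 ≤ ((∑ j ∈ Finset.Ico (n - r + 1) n, j : ℕ) : ℝ) := by
  obtain ⟨e, rfl⟩ : ∃ e, n = e + r := ⟨n - r, by omega⟩
  rw [show e + r - r + 1 = e + 1 by omega]
  push_cast
  rw [Finset.sum_Ico_eq_sub (fun j : ℕ => (j : ℝ)) (by omega : e + 1 ≤ e + r), sum_range_real,
    sum_range_real]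
  push_cast
  have h1 : (2 : ℝ) ≤ r := by exact_mod_cast hr
  have h2 : (0 : ℝ) ≤ e := by positivity
  nlinarith [mul_nonneg (sub_nonneg.2 h1) h2]

lemma prod_ge {q : ℕ} (hq : 2 ≤ q) {n a : ℕ} (ha : 1 ≤ a) :
    (q : ℝ) ^ (∑ j ∈ Finset.Ico a n, j) / 2 ^ n ≤
      ((∏ j ∈ Finset.Ico a n, (q ^ j - 1) : ℕ) : ℝ) := by
  have hq' : (2 : ℝ) ≤ q := by exact_mod_cast hq
  have h1 : ∏ j ∈ Finset.Ico a n, ((q : ℝ) ^ j / 2) ≤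
      ((∏ j ∈ Finset.Ico a n, (q ^ j - 1) : ℕ) : ℝ) := by
    rw [Nat.cast_prod]
    refine Finset.prod_le_prod (fun j _ => by positivity) fun j hj => ?_
    have hj1 : 1 ≤ j := ha.trans (Finset.mem_Ico.1 hj).1
    have h2 : 1 ≤ q ^ j := Nat.one_le_pow _ _ (by omega)
    rw [Nat.cast_sub h2]
    push_cast
    have h3 : (2 : ℝ) ≤ (q : ℝ) ^ j := by
      calc (2 : ℝ) ≤ q := hq'
        _ = (q : ℝ) ^ 1 := (pow_one _).symm
        _ ≤ (q : ℝ) ^ j := pow_le_pow_right₀ (by linarith) hj1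
    linarith
  refine le_trans ?_ h1
  rw [Finset.prod_div_distrib, Finset.prod_pow_eq_pow_sum, Finset.prod_const]
  refine div_le_div_of_nonneg_left (by positivity) (by positivity) ?_
  refine pow_le_pow_right₀ (by norm_num) ?_
  simp

/-- The numerical heart: a family of `q ^ r` representations whose degree `m` satisfies both lower
bounds contributes `O(q ^ (-δ))`, where `δ = s - 2 / (n - 1)`. For `r ≥ 2` the exponents in the
product add up to at least `r (n - 1) / 2`; for `r ≤ 1` the second bound serves as the case `r = 2`. -/
lemma term_le {n : ℕ} (hn : 2 ≤ n) {s : ℝ} (hs : 2 / ((n : ℝ) - 1) < s) {q : ℕ} (hq : 2 ≤ q)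
    {r m : ℕ} (hr : r ≤ n) (h1 : ∏ j ∈ Finset.Ico (n - r + 1) n, (q ^ j - 1) ≤ m)
    (h2 : q ^ (n - 1) - 1 ≤ m) :
    (q : ℝ) ^ r * (m : ℝ) ^ (-s) ≤ (2 ^ n) ^ s * (q : ℝ) ^ (-(s - 2 / ((n : ℝ) - 1))) := by
  have hq' : (2 : ℝ) ≤ q := by exact_mod_cast hq
  have hn' : (2 : ℝ) ≤ n := by exact_mod_cast hn
  have hn1 : (0 : ℝ) < (n : ℝ) - 1 := by linarith
  have hs0 : 0 < s := lt_trans (by positivity) hs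
  set r' := max r 2 with hr'
  have hr2 : 2 ≤ r' := le_max_right _ _
  have hrn : r' ≤ n := max_le hr hn
  have h3 : ∏ j ∈ Finset.Ico (n - r' + 1) n, (q ^ j - 1) ≤ m := by
    rcases le_total 2 r with h | h
    · rw [hr', max_eq_left h]; exact h1
    · rw [hr', max_eq_right h]
      have h6 : Finset.Ico (n - 2 + 1) n = {n - 1} := by
        ext k; rw [Finset.mem_Ico, Finset.mem_singleton]; omega
      rw [h6, Finset.prod_singleton]; exact h2
  set E := ∑ j ∈ Finset.Ico (n - r' + 1) n, j with hE
  have h4 : (q : ℝ) ^ E / 2 ^ n ≤ m :=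
    (prod_ge hq (by omega)).trans (by exact_mod_cast h3)
  have hE1 := sum_Ico_ge hr2 hrn
  rw [← hE] at hE1
  have h5 : (m : ℝ) ^ (-s) ≤ ((q : ℝ) ^ E / 2 ^ n) ^ (-s) :=
    Real.rpow_le_rpow_of_nonpos (by positivity) h4 (by linarith)
  have h6 : ((q : ℝ) ^ E / 2 ^ n) ^ (-s) = (2 ^ n) ^ s * (q : ℝ) ^ (-(s * E)) := by
    rw [Real.rpow_neg (by positivity), Real.div_rpow (by positivity) (by positivity), inv_div,
      div_eq_mul_inv]
    congr 1
    rw [← Real.rpow_natCast, ← Real.rpow_mul (by positivity), ← Real.rpow_neg (by positivity)]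
    congr 1; ring
  have h7 : (q : ℝ) ^ r ≤ (q : ℝ) ^ (r' : ℝ) := by
    rw [Real.rpow_natCast]
    exact pow_le_pow_right₀ (by linarith) (le_max_left _ _)
  have hδ : 0 < s - 2 / ((n : ℝ) - 1) := by linarith
  have h8 : (r' : ℝ) + (s - 2 / ((n : ℝ) - 1)) ≤ s * E := by
    have hr2' : (2 : ℝ) ≤ r' := by exact_mod_cast hr2
    have e1 : s * E = (2 / ((n : ℝ) - 1)) * E + (s - 2 / ((n : ℝ) - 1)) * E := by ring
    have e2 : (r' : ℝ) ≤ (2 / ((n : ℝ) - 1)) * E := by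
      calc (r' : ℝ) = (2 / ((n : ℝ) - 1)) * (r' * (n - 1) / 2) := by field_simp
        _ ≤ _ := mul_le_mul_of_nonneg_left hE1 (by positivity)
    have e3 : (1 : ℝ) ≤ E := by nlinarith
    have e4 : (s - 2 / ((n : ℝ) - 1)) * 1 ≤ (s - 2 / ((n : ℝ) - 1)) * E :=
      mul_le_mul_of_nonneg_left e3 hδ.le
    linarith
  calc (q : ℝ) ^ r * (m : ℝ) ^ (-s)
      ≤ (q : ℝ) ^ (r' : ℝ) * ((2 ^ n) ^ s * (q : ℝ) ^ (-(s * E))) := by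
        rw [← h6]
        exact mul_le_mul h7 h5 (by positivity) (by positivity)
    _ = (2 ^ n) ^ s * (q : ℝ) ^ ((r' : ℝ) - s * E) := by
        rw [sub_eq_add_neg, Real.rpow_add (by positivity)]; ring
    _ ≤ _ := by
        refine mul_le_mul_of_nonneg_left ?_ (by positivity)
        exact Real.rpow_le_rpow_of_exponent_le (by linarith) (by linarith)

/-- The constant in the estimate for nonlinear irreducible representations of `GL_n`. -/
noncomputable def CGL (n : ℕ) (s : ℝ) : ℝ :=
  Fintype.card (Key n) * (n.factorial * (2 ^ n) ^ s)

/-- The contribution of the representations of `GL_n` of degree greater than one to the zeta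
function is `O(q ^ (-δ))`, where `δ = s - 2 / (n - 1)`. -/
lemma sum_GL {n : ℕ} {F : Type} [Field F] [Fintype F] (hn : 2 ≤ n) {s : ℝ}
    (hs : 2 / ((n : ℝ) - 1) < s) {ι : Type} [Fintype ι] (R : ι → FRep (GLn n F))
    (hirr : ∀ i, IrrSub (R i).ρ ⊤ (R i).Y)
    (hno : ∀ i j, i ≠ j → NoHom (R i).ρ (R j).ρ ⊤ (R i).Y (R j).Y) (hY : ∀ i, (R i).Y = ⊤)
    (h1 : ∀ i, Module.finrank ℂ (R i).V ≠ 1) :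
    ∑ i, (Module.finrank ℂ (R i).V : ℝ) ^ (-s) ≤
      CGL n s * (Fintype.card F : ℝ) ^ (-(s - 2 / ((n : ℝ) - 1))) := by
  have hq : 2 ≤ Fintype.card F := Fintype.one_lt_card
  set q := Fintype.card F with hqd
  have hex : ∀ i, ∃ K ω, HasKey (R i).ρ K ω ∧
      ∏ j ∈ Finset.Ico (n - rk K.1 K.2.1 + 1) n, (q ^ j - 1) ≤ Module.finrank ℂ (R i).V := by
    intro i
    obtain ⟨v, -, hv⟩ := Submodule.exists_mem_ne_zero_of_ne_bot (hirr i).ne_bot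
    exact exists_key _ ⟨v, hv⟩
  choose K ω hK hdim using hex
  set c : ℝ := (2 ^ n) ^ s * (q : ℝ) ^ (-(s - 2 / ((n : ℝ) - 1))) with hc
  have hc0 : 0 ≤ c := by positivity
  have hterm : ∀ i, (Module.finrank ℂ (R i).V : ℝ) ^ (-s) ≤ c / (q : ℝ) ^ rk (K i).1 (K i).2.1 := by
    intro i
    rw [le_div_iff₀ (by positivity), mul_comm]
    refine term_le hn hs hq ?_ (hdim i) (dim_ge_of_ne_one (ρ := (R i).ρ) ?_ hn (h1 i))
    · exact (Finset.card_le_univ _).trans (by simp)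
    · rw [← hY i]; exact hirr i
  calc ∑ i, (Module.finrank ℂ (R i).V : ℝ) ^ (-s)
      ≤ ∑ i, c / (q : ℝ) ^ rk (K i).1 (K i).2.1 := Finset.sum_le_sum fun i _ => hterm i
    _ = ∑ κ : Key n, ∑ i ∈ Finset.univ.filter (fun i => K i = κ),
          c / (q : ℝ) ^ rk (K i).1 (K i).2.1 :=
        (Finset.sum_fiberwise _ _ _).symm
    _ ≤ ∑ κ : Key n, n.factorial * c := by
        refine Finset.sum_le_sum fun κ _ => ?_
        have e1 : ∑ i ∈ Finset.univ.filter (fun i => K i = κ),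
            c / (q : ℝ) ^ rk (K i).1 (K i).2.1 =
            ∑ i ∈ Finset.univ.filter (fun i => K i = κ), c / (q : ℝ) ^ rk κ.1 κ.2.1 :=
          Finset.sum_congr rfl fun i hi => by rw [(Finset.mem_filter.1 hi).2]
        rw [e1, Finset.sum_const, nsmul_eq_mul]
        have h2 := count_key (fun i : {i // i ∈ Finset.univ.filter fun i => K i = κ} => R i) κ
          (fun i => hirr i) (fun i j hij => hno _ _ fun h => hij (Subtype.ext h)) (fun i => hY i)
          (fun i => ω i) (fun i => by
            have h3 := hK i
            rw [(Finset.mem_filter.1 i.2).2] at h3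
            exact h3)
        rw [Fintype.card_coe] at h2
        have h3 : ((Finset.univ.filter fun i => K i = κ).card : ℝ) ≤
            n.factorial * (q : ℝ) ^ rk κ.1 κ.2.1 := by exact_mod_cast h2
        calc _ ≤ (n.factorial * (q : ℝ) ^ rk κ.1 κ.2.1) * (c / (q : ℝ) ^ rk κ.1 κ.2.1) :=
              mul_le_mul_of_nonneg_right h3 (by positivity)
          _ = n.factorial * c := by
              have : (q : ℝ) ^ rk κ.1 κ.2.1 ≠ 0 := by positivity
              field_simp
    _ = _ := by
        rw [Finset.sum_const, Finset.card_univ, nsmul_eq_mul, CGL, hc]; ring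

end Analysis

/-! ### Simple objects and irreducible subspaces -/

section Simple

open CategoryTheory

variable {G : Type} [Group G] [Fintype G]
variable {V : Type} [AddCommGroup V] [Module ℂ V] [FiniteDimensional ℂ V]

/-- The representation on a stable subspace. -/
noncomputable def subRep (ρ : Representation ℂ G V) {W : Submodule ℂ V} (hW : Stable ρ ⊤ W) :
    Representation ℂ G W where
  toFun g := (ρ g).restrict fun w hw => hW g trivial w hw
  map_one' := by ext w; simp
  map_mul' a b := by ext w; simp

lemma subRep_apply (ρ : Representation ℂ G V) {W : Submodule ℂ V} (hW : Stable ρ ⊤ W) (g : G)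
    (w : W) : (subRep ρ hW g w : V) = ρ g w := rfl

lemma subRep_irr {ρ : Representation ℂ G V} {W : Submodule ℂ V} (h : IrrSub ρ ⊤ W) :
    IrrSub (subRep ρ h.stable) ⊤ ⊤ := by
  refine ⟨?_, fun _ _ _ _ => trivial, fun X _ hX => ?_⟩
  · intro h0
    apply h.ne_bot
    rw [Submodule.eq_bot_iff]
    intro w hw
    have : (⟨w, hw⟩ : W) ∈ (⊤ : Submodule ℂ W) := trivial
    rw [h0] at this
    simpa using this
  · have hs : Stable ρ ⊤ (X.map W.subtype) := by
      rintro m hm _ ⟨x, hx, rfl⟩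
      exact ⟨_, hX m hm x hx, rfl⟩
    rcases h.minimal (X.map W.subtype) (Submodule.map_subtype_le W X) hs with h1 | h1
    · left
      exact Submodule.map_injective_of_injective W.injective_subtype (by rw [h1, Submodule.map_bot])
    · right
      rw [eq_top_iff]
      rintro ⟨w, hw⟩ -
      have h2 : w ∈ X.map W.subtype := by rw [h1]; exact hw
      obtain ⟨x, hx, hxw⟩ := h2
      have : x = ⟨w, hw⟩ := Subtype.ext hxw
      rwa [← this]

lemma irr_of_simple (V : FDRep ℂ G) (hV : Simple V) :
    IrrSub (V := V) (FDRep.ρ V) ⊤ ⊤ := by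
  refine ⟨?_, fun _ _ _ _ => trivial, fun W _ hW => ?_⟩
  · intro h0
    apply id_nonzero V
    apply Action.Hom.ext
    apply InducedCategory.hom_ext
    apply ModuleCat.hom_ext
    apply LinearMap.ext
    intro v
    have : v ∈ (⊤ : Submodule ℂ V) := trivial
    rw [h0, Submodule.mem_bot] at this
    rw [this]; simp
  · let f : FDRep.of (subRep (V := V) (FDRep.ρ V) hW) ⟶ V :=
      { hom := InducedCategory.homMk (ModuleCat.ofHom W.subtype)
        comm := fun g => by
          apply InducedCategory.hom_ext
          apply ModuleCat.hom_ext
          apply LinearMap.ext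
          intro w
          rfl }
    have hf : ∀ w : W, (ConcreteCategory.hom f : _ → _) w = (w : V) := fun w => rfl
    haveI : Mono f := ConcreteCategory.mono_of_injective f (fun a b hab => Subtype.ext hab)
    by_cases h0 : f = 0
    · left
      rw [Submodule.eq_bot_iff]
      intro w hw
      have := congrArg (fun f' => (ConcreteCategory.hom f' : _ → _) (⟨w, hw⟩ : W)) h0
      exact this
    · right
      have h1 := (Simple.mono_isIso_iff_nonzero f).2 h0
      have h2 := (ConcreteCategory.isIso_iff_bijective f).1 h1
      rw [eq_top_iff]
      intro v _
      obtain ⟨w, hw⟩ := h2.2 v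
      rw [← hw]
      exact w.2

end Simple

/-! ### Representations covering a representation of a subgroup -/

section Cover

variable {S G : Type} [Group S] [Fintype S] [Group G] [Fintype G]
variable {V : Type} [AddCommGroup V] [Module ℂ V] [FiniteDimensional ℂ V]
variable {W : Type} [AddCommGroup W] [Module ℂ W] [FiniteDimensional ℂ W]

/-- A nonzero map from the representation `ρ` of `G`, restricted along `φ`, to the
representation `σ` of `S`. -/
structure Cover (φ : S →* G) (σ : Representation ℂ S V) (ρ : Representation ℂ G W)
    (T : W →ₗ[ℂ] V) : Prop where
  ne_zero : T ≠ 0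
  comm : ∀ h w, T (ρ (φ h) w) = σ h (T w)

/-- The right regular action on functions with values in `V`. -/
def rightReg (G V : Type) [Group G] [AddCommGroup V] [Module ℂ V] :
    Representation ℂ G (G → V) where
  toFun g := { toFun := fun f x => f (x * g), map_add' := fun _ _ => rfl,
               map_smul' := fun _ _ => rfl }
  map_one' := by ext; simp
  map_mul' a b := by
    apply LinearMap.ext; intro f; funext x
    simp [mul_assoc]

lemma rightReg_apply (g : G) (f : G → V) (x : G) : rightReg G V g f x = f (x * g) := rfl

/-- Frobenius reciprocity: an irreducible subrepresentation of the coinduced representation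
covers the original one, by evaluation at `1`. -/
lemma exists_cover (φ : S →* G) (hφ : Function.Injective φ) (σ : Representation ℂ S V)
    (hV : ∃ v : V, v ≠ 0) :
    ∃ (R : FRep G) (T : R.V →ₗ[ℂ] V), IrrSub R.ρ ⊤ ⊤ ∧ Cover φ σ R.ρ T := by
  let C : Submodule ℂ (G → V) :=
    { carrier := {f | ∀ h x, f (φ h * x) = σ h (f x)}
      add_mem' := fun {a b} ha hb h x => by simp [ha h x, hb h x]
      zero_mem' := fun h x => by simp
      smul_mem' := fun c a ha h x => by simp [ha h x] }
  have hC : ∀ f, f ∈ C ↔ ∀ h x, f (φ h * x) = σ h (f x) := fun f => Iff.rfl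
  have hs : Stable (rightReg G V) ⊤ C := by
    intro g _ f hf h x
    rw [rightReg_apply, rightReg_apply, mul_assoc]
    exact hf h _
  obtain ⟨v, hv⟩ := hV
  have h0 : C ≠ ⊥ := by
    rw [Submodule.ne_bot_iff]
    refine ⟨fun x => if hx : ∃ h, φ h = x then σ hx.choose v else 0, ?_, ?_⟩
    · intro h x
      by_cases hx : ∃ k, φ k = x
      · have hx' : ∃ k, φ k = φ h * x := by
          obtain ⟨k, hk⟩ := hx
          exact ⟨h * k, by rw [map_mul, hk]⟩
        have e : hx'.choose = h * hx.choose :=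
          hφ (by rw [hx'.choose_spec, map_mul, hx.choose_spec])
        simp only [dif_pos hx, dif_pos hx', e, rho_mul]
      · have hx' : ¬ ∃ k, φ k = φ h * x := by
          rintro ⟨k, hk⟩
          exact hx ⟨h⁻¹ * k, by rw [map_mul, hk, map_inv]; group⟩
        simp only [dif_neg hx, dif_neg hx', map_zero]
    · intro h1
      have h2 := congrFun h1 1
      have hx : ∃ k, φ k = 1 := ⟨1, map_one φ⟩
      have e : hx.choose = 1 := hφ (by rw [hx.choose_spec, map_one])
      simp only [dif_pos hx, e, map_one] at h2
      exact hv h2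
  obtain ⟨Y, hYC, hY⟩ := exists_irrSub (rightReg G V) ⊤ C h0 hs
  refine ⟨⟨Y, subRep _ hY.stable, ⊤⟩, (LinearMap.proj 1).comp Y.subtype, subRep_irr hY, ?_, ?_⟩
  · intro hT
    obtain ⟨f, hf, hf0⟩ := Submodule.exists_mem_ne_zero_of_ne_bot hY.ne_bot
    apply hf0
    funext x
    have := LinearMap.congr_fun hT ⟨rightReg G V x f, hY.stable x trivial f hf⟩
    simpa [rightReg_apply] using this
  · intro h w
    have := hYC w.2 h 1
    simpa [rightReg_apply, subRep_apply] using this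

lemma Cover.surjective {φ : S →* G} {σ : Representation ℂ S V} {ρ : Representation ℂ G W}
    {T : W →ₗ[ℂ] V} (h : Cover φ σ ρ T) (hσ : IrrSub σ ⊤ ⊤) : Function.Surjective T := by
  rw [← LinearMap.range_eq_top]
  refine (hσ.minimal _ le_top ?_).resolve_left fun h0 => h.ne_zero (LinearMap.range_eq_bot.1 h0)
  rintro m - _ ⟨w, rfl⟩
  exact ⟨_, h.comm m w⟩

/-- If `G` is covered by finitely many cosets `Z φ(S) x k` with `Z` acting by scalars, then the
maps `T ∘ ρ (x k)` embed `W` into a power of `V`. -/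
lemma Cover.finrank_le {φ : S →* G} {σ : Representation ℂ S V} {ρ : Representation ℂ G W}
    {T : W →ₗ[ℂ] V} (h : Cover φ σ ρ T) (hρ : IrrSub ρ ⊤ ⊤) {n : ℕ} (x : Fin n → G)
    (hx : ∀ g, ∃ z k s, (∀ y, z * y = y * z) ∧ g = z * φ s * x k) :
    Module.finrank ℂ W ≤ n * Module.finrank ℂ V := by
  let A : W →ₗ[ℂ] (Fin n → V) := LinearMap.pi fun k => T ∘ₗ ρ (x k)
  have hA : ∀ w, A w = 0 ↔ ∀ k, T (ρ (x k) w) = 0 := fun w => funext_iff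
  have hz : ∀ w, A w = 0 → ∀ g, T (ρ g w) = 0 := by
    intro w hw g
    obtain ⟨z, k, s, hz, rfl⟩ := hx g
    obtain ⟨c, hc⟩ := hρ.schur (ρ z) (fun _ _ => trivial)
      (fun m _ y _ => by rw [← rho_mul, ← rho_mul, hz])
    rw [mul_assoc, rho_mul, hc _ trivial, map_smul, rho_mul, h.comm, (hA w).1 hw k]
    simp
  have hker : LinearMap.ker A = ⊥ := by
    refine (hρ.minimal _ le_top ?_).resolve_right ?_
    · intro m _ w hw
      rw [LinearMap.mem_ker] at hw ⊢
      rw [hA]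
      intro k
      rw [← rho_mul]
      exact hz w hw _
    · intro h1
      apply h.ne_zero
      ext w
      have : w ∈ LinearMap.ker A := by rw [h1]; trivial
      simpa using hz w this 1
  have := LinearMap.finrank_le_finrank_of_injective (LinearMap.ker_eq_bot.1 hker)
  simpa [Module.finrank_pi_fintype] using this

/-- Pairwise disjoint irreducible representations covered by `W` have total degree at most
`dim W`. -/
lemma sum_finrank_cover_le {φ : S →* G} {ρ : Representation ℂ G W} {ι : Type} [Fintype ι]
    (R : ι → FRep S) (T : ∀ i, W →ₗ[ℂ] (R i).V) (hT : ∀ i, Cover φ (R i).ρ ρ (T i))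
    (hirr : ∀ i, IrrSub (R i).ρ ⊤ ⊤) (hno : ∀ i j, i ≠ j → NoHom (R i).ρ (R j).ρ ⊤ ⊤ ⊤) :
    ∑ i, Module.finrank ℂ (R i).V ≤ Module.finrank ℂ W := by
  let A : W →ₗ[ℂ] (∀ i, (R i).V) := LinearMap.pi T
  have hact : ∀ i (a : MonoidAlgebra ℂ S) w,
      T i (act (ρ.comp φ) a w) = act (R i).ρ a (T i w) := by
    intro i a w
    induction a using alg_induction with
    | h0 => simp [act]
    | hadd a b ha hb => simp only [act, map_add, LinearMap.add_apply] at ha hb ⊢; rw [ha, hb]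
    | hs c a ha => simp only [act, map_smul, LinearMap.smul_apply] at ha ⊢; rw [ha]
    | hof m => rw [act_of, act_of]; exact (hT i).comm m w
  have hsurj : Function.Surjective A := by
    rw [← LinearMap.range_eq_top, eq_top_iff]
    rintro v -
    rw [← Finset.univ_sum_single v]
    refine sum_mem fun i _ => ?_
    obtain ⟨u, -, hu⟩ := Submodule.exists_mem_ne_zero_of_ne_bot (hirr i).ne_bot
    obtain ⟨ℓ, hℓ⟩ := exists_functional hu
    obtain ⟨w, hw⟩ := (hT i).surjective (hirr i) u
    set c : ℂ := (Fintype.card (⊤ : Subgroup S) : ℂ) /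
      (Module.finrank ℂ (⊤ : Submodule ℂ (R i).V) : ℂ) with hc
    have hc0 : c ≠ 0 := div_ne_zero (card_ne_zero' _)
      (by exact_mod_cast (hirr i).finrank_ne_zero)
    refine ⟨c⁻¹ • act (ρ.comp φ) (mc (R i).ρ ⊤ ℓ (v i)) w, ?_⟩
    funext j
    show T j (c⁻¹ • act (ρ.comp φ) (mc (R i).ρ ⊤ ℓ (v i)) w) = _
    rw [map_smul, hact]
    by_cases hij : i = j
    · subst hij
      rw [act_mc_irr (hirr i) ℓ trivial trivial, hw, hℓ, mul_one, ← hc, smul_smul,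
        inv_mul_cancel₀ hc0, one_smul, Pi.single_eq_same]
    · rw [act_mc_noHom (hno i j hij) (fun _ _ _ _ => trivial) ℓ trivial trivial,
        Pi.single_eq_of_ne (fun h => hij h.symm), smul_zero]
  have := LinearMap.finrank_le_finrank_of_surjective hsurj
  rwa [Module.finrank_pi_fintype] at this

/-- Twist of a representation by a linear character. -/
noncomputable def twist (ρ : Representation ℂ G W) (l : G →* ℂ) : Representation ℂ G W where
  toFun g := l g • ρ g
  map_one' := by simp
  map_mul' a b := by
    ext w
    simp [smul_smul, mul_comm]

lemma twist_apply (ρ : Representation ℂ G W) (l : G →* ℂ) (g : G) (w : W) :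
    twist ρ l g w = l g • ρ g w := rfl

lemma twist_irr {ρ : Representation ℂ G W} (h : IrrSub ρ ⊤ ⊤) (l : G →* ℂ) :
    IrrSub (twist ρ l) ⊤ ⊤ := by
  refine ⟨h.ne_bot, fun _ _ _ _ => trivial, fun X _ hX => h.minimal X le_top fun m _ x hx => ?_⟩
  have h1 : l m⁻¹ * l m = 1 := by rw [← map_mul]; simp
  have h2 := X.smul_mem (l m⁻¹) (hX m trivial x hx)
  rwa [twist_apply, smul_smul, h1, one_smul] at h2

lemma twist_character (ρ : Representation ℂ G W) (l : G →* ℂ) (g : G) :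
    (twist ρ l).character g = l g * ρ.character g := by
  show LinearMap.trace ℂ W (l g • ρ g) = _
  rw [map_smul]; rfl

lemma Cover.twist {φ : S →* G} {σ : Representation ℂ S V} {ρ : Representation ℂ G W}
    {T : W →ₗ[ℂ] V} (h : Cover φ σ ρ T) (l : G →* ℂ) (hl : ∀ s, l (φ s) = 1) :
    Cover φ σ (twist ρ l) T :=
  ⟨h.ne_zero, fun s w => by rw [twist_apply, hl, one_smul, h.comm]⟩

/-- The character of an irreducible representation does not vanish at a central element. -/
lemma character_central_ne_zero {ρ : Representation ℂ G W} (h : IrrSub ρ ⊤ ⊤) {z : G}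
    (hz : ∀ y, z * y = y * z) : ρ.character z ≠ 0 := by
  obtain ⟨c, hc⟩ := h.schur (ρ z) (fun _ _ => trivial)
      (fun m _ y _ => by rw [← rho_mul, ← rho_mul, hz])
  have e : ρ z = c • LinearMap.id := LinearMap.ext fun w => hc w trivial
  have hW : Module.finrank ℂ W ≠ 0 := by
    have := h.finrank_ne_zero
    rw [finrank_top] at this
    exact_mod_cast this
  have hc0 : c ≠ 0 := by
    rintro rfl
    obtain ⟨w, -, hw⟩ := Submodule.exists_mem_ne_zero_of_ne_bot h.ne_bot
    apply hw
    rw [← rho_inv_self ρ z w, e]; simp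
  show LinearMap.trace ℂ W (ρ z) ≠ 0
  rw [e, map_smul, LinearMap.trace_id]
  simp [hc0, hW]

end Cover

/-! ### From the general to the special linear group -/

section Iso

variable {G : Type} [Group G] [Fintype G]
variable {V : Type} [AddCommGroup V] [Module ℂ V] [FiniteDimensional ℂ V]
variable {V' : Type} [AddCommGroup V'] [Module ℂ V'] [FiniteDimensional ℂ V']

/-- Isomorphism of representations. -/
def IsoRep (ρ : Representation ℂ G V) (ρ' : Representation ℂ G V') : Prop :=
  ∃ e : V ≃ₗ[ℂ] V', ∀ g v, e (ρ g v) = ρ' g (e v)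

lemma IsoRep.symm {ρ : Representation ℂ G V} {ρ' : Representation ℂ G V'} (h : IsoRep ρ ρ') :
    IsoRep ρ' ρ := by
  obtain ⟨e, he⟩ := h
  exact ⟨e.symm, fun g v => e.injective (by rw [he]; simp)⟩

lemma IsoRep.character {ρ : Representation ℂ G V} {ρ' : Representation ℂ G V'}
    (h : IsoRep ρ ρ') : ρ.character = ρ'.character := by
  obtain ⟨e, he⟩ := h
  funext g
  show LinearMap.trace ℂ V (ρ g) = LinearMap.trace ℂ V' (ρ' g)
  rw [← LinearMap.trace_conj' (ρ g) e]
  congr 1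
  ext v
  rw [LinearEquiv.conj_apply_apply, he]; simp

/-- Schur's lemma: a nonzero equivariant map between irreducible representations is an isomorphism. -/
lemma noHom_of_not_isoRep {ρ : Representation ℂ G V} {ρ' : Representation ℂ G V'}
    (h : IrrSub ρ ⊤ ⊤) (h' : IrrSub ρ' ⊤ ⊤) (hne : ¬ IsoRep ρ ρ') : NoHom ρ ρ' ⊤ ⊤ ⊤ := by
  intro T _ hc y _
  by_contra hy
  apply hne
  have hker : LinearMap.ker T = ⊥ := by
    refine (h.minimal _ le_top ?_).resolve_right ?_
    · intro m hm z hz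
      rw [LinearMap.mem_ker] at hz ⊢
      rw [hc m hm z trivial, hz, map_zero]
    · intro h1
      exact hy (LinearMap.mem_ker.1 (h1 ▸ (trivial : y ∈ (⊤ : Submodule ℂ V))))
  have hran : LinearMap.range T = ⊤ := by
    refine (h'.minimal _ le_top ?_).resolve_left ?_
    · rintro m hm _ ⟨z, rfl⟩
      exact ⟨_, hc m hm z trivial⟩
    · intro h1
      exact hy (by rw [LinearMap.range_eq_bot.1 h1]; rfl)
  exact ⟨LinearEquiv.ofBijective T ⟨LinearMap.ker_eq_bot.1 hker, LinearMap.range_eq_top.1 hran⟩,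
    fun g v => hc g trivial v trivial⟩

end Iso

section SLGL

variable {n : ℕ} {F : Type} [Field F] [Fintype F]

lemma dg_const_comm (t : Fˣ) (y : GLn n F) : dg (fun _ => t) * y = y * dg (fun _ => t) := by
  apply gl_ext
  intro i j
  simp [mulEntry, dg_apply, mul_comm]

lemma det_dg (d : Fin n → Fˣ) : Matrix.GeneralLinearGroup.det (dg d) = ∏ i, d i := by
  ext
  have : ((dg d : GLn n F) : Matrix (Fin n) (Fin n) F) = Matrix.diagonal fun i => (d i : F) := by
    ext i j
    rw [Matrix.diagonal_apply]
    exact dg_apply d i j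
  rw [Matrix.GeneralLinearGroup.val_det_apply, this, Matrix.det_diagonal]
  simp

/-- `GL_n` is the union of `n` cosets of the subgroup generated by the scalars and `SL_n`. -/
lemma exists_cosets (hn : 1 ≤ n) : ∃ x : Fin n → GLn n F, ∀ g : GLn n F,
    ∃ (z : GLn n F) (k : Fin n) (s : Matrix.SpecialLinearGroup (Fin n) F),
      (∀ y, z * y = y * z) ∧ g = z * Matrix.SpecialLinearGroup.toGL s * x k := by
  obtain ⟨g0, hg0⟩ := IsCyclic.exists_generator (α := Fˣ)
  refine ⟨fun k => dg (Function.update 1 ⟨0, hn⟩ (g0 ^ (k : ℕ))), fun g => ?_⟩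
  obtain ⟨m, hm⟩ := (mem_powers_iff_mem_zpowers.2 (hg0 (Matrix.GeneralLinearGroup.det g)))
  have hm : g0 ^ m = Matrix.GeneralLinearGroup.det g := hm
  set z : GLn n F := dg (fun _ => g0 ^ (m / n)) with hz
  set x : GLn n F := dg (Function.update 1 ⟨0, hn⟩ (g0 ^ (m % n))) with hx
  have hdz : Matrix.GeneralLinearGroup.det z = g0 ^ (m / n * n) := by
    rw [hz, det_dg]; simp [pow_mul]
  have hdx : Matrix.GeneralLinearGroup.det x = g0 ^ (m % n) := by
    rw [hx, det_dg, Finset.prod_update_of_mem (Finset.mem_univ _)]; simp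
  have hd : Matrix.GeneralLinearGroup.det (z⁻¹ * g * x⁻¹) = 1 := by
    have e : Matrix.GeneralLinearGroup.det g =
        Matrix.GeneralLinearGroup.det z * Matrix.GeneralLinearGroup.det x := by
      rw [hdz, hdx, ← pow_add, ← hm, Nat.div_add_mod']
    rw [map_mul, map_mul, map_inv, map_inv, e]
    group
  refine ⟨z, ⟨m % n, Nat.mod_lt _ hn⟩, ⟨(z⁻¹ * g * x⁻¹ : GLn n F), ?_⟩, dg_const_comm _, ?_⟩
  · have := congrArg Units.val hd
    rwa [Matrix.GeneralLinearGroup.val_det_apply] at this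
  · have e : Matrix.SpecialLinearGroup.toGL
        (⟨((z⁻¹ * g * x⁻¹ : GLn n F) : Matrix (Fin n) (Fin n) F), by
          have := congrArg Units.val hd
          rwa [Matrix.GeneralLinearGroup.val_det_apply] at this⟩ :
            Matrix.SpecialLinearGroup (Fin n) F) = z⁻¹ * g * x⁻¹ := Units.ext rfl
    rw [e]
    show g = z * (z⁻¹ * g * x⁻¹) * x
    group

/-- The linear character of `GL_n` obtained from a multiplicative character of the field. -/
noncomputable def detChar (n : ℕ) (χ : MulChar F ℂ) : GLn n F →* ℂ :=
  (χ.toMonoidHom.comp (Units.coeHom F)).comp Matrix.GeneralLinearGroup.det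

lemma detChar_apply (χ : MulChar F ℂ) (g : GLn n F) :
    detChar n χ g = χ (Matrix.GeneralLinearGroup.det g : F) := rfl

lemma detChar_SL (χ : MulChar F ℂ) (s : Matrix.SpecialLinearGroup (Fin n) F) :
    detChar n χ (Matrix.SpecialLinearGroup.toGL s) = 1 := by
  rw [detChar_apply, Matrix.GeneralLinearGroup.val_det_apply]
  have : ((Matrix.SpecialLinearGroup.toGL s : GLn n F) : Matrix (Fin n) (Fin n) F).det = 1 := s.2
  rw [this, map_one]

/-- Twists of an irreducible representation by small powers of a faithful character differ on
scalar matrices. -/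
lemma twist_not_iso {W : Type} [AddCommGroup W] [Module ℂ W] [FiniteDimensional ℂ W]
    {ρ : Representation ℂ (GLn n F) W} (h : IrrSub ρ ⊤ ⊤) {χ : MulChar F ℂ}
    (hχ : orderOf χ = Fintype.card F - 1) {k k' : ℕ} (hk : n * k < Fintype.card F - 1)
    (hk' : n * k' < Fintype.card F - 1) (hn : 1 ≤ n) (hkk : k ≠ k') :
    (twist ρ (detChar n (χ ^ k))).character ≠ (twist ρ (detChar n (χ ^ k'))).character := by
  intro heq
  have h1 : χ ^ (n * k) ≠ χ ^ (n * k') := by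
    intro h2
    have := pow_injOn_Iio_orderOf (x := χ) (by simpa [hχ] using hk) (by simpa [hχ] using hk') h2
    exact hkk (Nat.eq_of_mul_eq_mul_left hn this)
  apply h1
  ext t
  have h3 := congrFun heq (dg fun _ => t)
  rw [twist_character, twist_character] at h3
  have h4 := mul_right_cancel₀ (character_central_ne_zero h (dg_const_comm t)) h3
  rw [detChar_apply, detChar_apply, det_dg] at h4
  simpa [MulChar.pow_apply_coe, pow_mul, Finset.prod_const, pow_right_comm _ n] using h4

/-- A representation of `GL_n` covering a nontrivial irreducible representation of `SL_n` is not
one-dimensional, since linear characters of `GL_n` are trivial on `SL_n`. -/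
lemma finrank_ne_one_of_cover (hF : 2 < Fintype.card F)
    {V : Type} [AddCommGroup V] [Module ℂ V] [FiniteDimensional ℂ V]
    {W : Type} [AddCommGroup W] [Module ℂ W] [FiniteDimensional ℂ W]
    [Fintype (Matrix.SpecialLinearGroup (Fin n) F)]
    {σ : Representation ℂ (Matrix.SpecialLinearGroup (Fin n) F) V}
    {ρ : Representation ℂ (GLn n F) W} {T : W →ₗ[ℂ] V}
    (h : Cover Matrix.SpecialLinearGroup.toGL σ ρ T) (hσ : IrrSub σ ⊤ ⊤)
    (hnt : ∃ g, σ g ≠ 1) : Module.finrank ℂ W ≠ 1 := by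
  intro h1
  obtain ⟨g, hg⟩ := hnt
  apply hg
  ext v
  obtain ⟨w, rfl⟩ := h.surjective hσ v
  rw [← h.comm]
  have hl := hom_det (((LinearMap.det : (W →ₗ[ℂ] W) →* ℂ).comp ρ).toHomUnits) hF
    (g := Matrix.SpecialLinearGroup.toGL g) g.2
  have hl' : LinearMap.det (ρ (Matrix.SpecialLinearGroup.toGL g)) = 1 := congrArg Units.val hl
  obtain ⟨c, hc⟩ : ∃ c : ℂ, ρ (Matrix.SpecialLinearGroup.toGL g) = c • LinearMap.id := by
    obtain ⟨u, hu, hspan⟩ := finrank_eq_one_iff'.1 h1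
    obtain ⟨c, hc⟩ := hspan (ρ (Matrix.SpecialLinearGroup.toGL g) u)
    refine ⟨c, LinearMap.ext fun y => ?_⟩
    obtain ⟨d, rfl⟩ := hspan y
    simp [← hc, smul_smul, mul_comm]
  rw [hc, LinearMap.det_smul, h1, LinearMap.det_id, pow_one, mul_one] at hl'
  rw [hc, hl']
  simp

end SLGL

/-! ### The estimate for the special linear group -/

section Main

variable {n : ℕ} {F : Type} [Field F] [Fintype F]

lemma rpow_neg_le_of_le_mul {a b m : ℕ} {s : ℝ} (hs : 0 < s) (hb : b ≠ 0) (ha : a ≠ 0)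
    (h : b ≤ m * a) : (a : ℝ) ^ (-s) ≤ (m : ℝ) ^ s * (b : ℝ) ^ (-s) := by
  have ha' : (0 : ℝ) < a := by positivity
  have hb' : (0 : ℝ) < b := by positivity
  have h1 : (b : ℝ) ^ s ≤ (m : ℝ) ^ s * (a : ℝ) ^ s := by
    rw [← Real.mul_rpow (by positivity) (by positivity)]
    exact Real.rpow_le_rpow hb'.le (by exact_mod_cast h) hs.le
  rw [Real.rpow_neg ha'.le, Real.rpow_neg hb'.le, ← div_eq_mul_inv,
    inv_le_comm₀ (by positivity) (by
      have : (0 : ℝ) < (b : ℝ) ^ s := by positivity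
      have h2 : (0 : ℝ) < (m : ℝ) ^ s := by
        by_contra h3
        have h4 : (m : ℝ) ^ s * (a : ℝ) ^ s ≤ 0 :=
          mul_nonpos_of_nonpos_of_nonneg (not_lt.1 h3) (by positivity)
        linarith
      positivity), inv_div]
  refine div_le_of_le_mul₀ (by positivity) (by positivity) ?_
  linarith [mul_comm ((m : ℝ) ^ s) ((a : ℝ) ^ s)]

/-- The estimate for `SL_n`, deduced from that for `GL_n`: every irreducible representation of
`SL_n` is covered by `K` inequivalent irreducible representations of `GL_n`, each of which
covers at most `n` of them and has degree at most `n` times as large. -/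
lemma sum_SL (hn : 2 ≤ n) {s : ℝ} (hs : 2 / ((n : ℝ) - 1) < s) (hF : 2 < Fintype.card F)
    [Fintype (Matrix.SpecialLinearGroup (Fin n) F)] {ι : Type} [Fintype ι]
    (R : ι → FRep (Matrix.SpecialLinearGroup (Fin n) F)) (hirr : ∀ i, IrrSub (R i).ρ ⊤ ⊤)
    (hno : ∀ i j, i ≠ j → NoHom (R i).ρ (R j).ρ ⊤ ⊤ ⊤) (hnt : ∀ i, ∃ g, (R i).ρ g ≠ 1) :
    (((Fintype.card F - 2) / n + 1 : ℕ) : ℝ) * ∑ i, (Module.finrank ℂ (R i).V : ℝ) ^ (-s) ≤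
      (n : ℝ) ^ s * (n * (CGL n s * (Fintype.card F : ℝ) ^ (-(s - 2 / ((n : ℝ) - 1))))) := by
  set q := Fintype.card F with hq
  set K := (q - 2) / n + 1 with hK
  have hn0 : 0 < n := by omega
  have hs0 : 0 < s := lt_of_le_of_lt (by
    have : (2 : ℝ) ≤ n := by exact_mod_cast hn
    exact div_nonneg (by norm_num) (by linarith)) hs
  have hV : ∀ i, Module.finrank ℂ (R i).V ≠ 0 := by
    intro i
    have := (hirr i).finrank_ne_zero
    rw [finrank_top] at this
    exact_mod_cast this
  have hex : ∀ i, ∃ (Q : FRep (GLn n F)) (T : Q.V →ₗ[ℂ] (R i).V), IrrSub Q.ρ ⊤ ⊤ ∧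
      Cover Matrix.SpecialLinearGroup.toGL (R i).ρ Q.ρ T := by
    intro i
    obtain ⟨v, -, hv⟩ := Submodule.exists_mem_ne_zero_of_ne_bot (hirr i).ne_bot
    exact exists_cover _ Matrix.SpecialLinearGroup.toGL_injective _ ⟨v, hv⟩
  choose Q T hQ hT using hex
  obtain ⟨χ, hχ⟩ : ∃ χ : MulChar F ℂ, orderOf χ = Fintype.card F - 1 :=
    MulChar.exists_mulChar_orderOf F dvd_rfl
      (Complex.isPrimitiveRoot_exp (Fintype.card F - 1) (by omega))
  obtain ⟨x, hx⟩ := exists_cosets (n := n) (F := F) hn0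
  let E : ι × Fin K → FRep (GLn n F) := fun p =>
    ⟨(Q p.1).V, twist (Q p.1).ρ (detChar n (χ ^ (p.2 : ℕ))), ⊤⟩
  have hEirr : ∀ p, IrrSub (E p).ρ ⊤ ⊤ := fun p => twist_irr (hQ p.1) _
  have hEcov : ∀ p, Cover Matrix.SpecialLinearGroup.toGL (R p.1).ρ (E p).ρ (T p.1) :=
    fun p => (hT p.1).twist _ (detChar_SL _)
  have hkK : ∀ k : Fin K, n * (k : ℕ) < Fintype.card F - 1 := by
    intro k
    have h1 : (k : ℕ) ≤ (q - 2) / n := Nat.lt_succ_iff.1 k.2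
    have h2 := Nat.mul_le_mul_left n h1
    have h3 := Nat.mul_div_le (q - 2) n
    omega
  have hE1 : ∀ p p', p.1 = p'.1 → IsoRep (E p).ρ (E p').ρ → p = p' := by
    rintro ⟨i, k⟩ ⟨j, k'⟩ (rfl : i = j) hiso
    by_contra hne
    refine twist_not_iso (hQ i) hχ (hkK k) (hkK k') hn0 (fun h => hne ?_) hiso.character
    rw [Fin.ext h]
  let st : Setoid (ι × Fin K) :=
    { r := fun p p' => IsoRep (E p).ρ (E p').ρ
      iseqv := ⟨fun p => ⟨LinearEquiv.refl ℂ _, fun _ _ => rfl⟩, fun h => h.symm,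
        fun {a b c} ⟨e, he⟩ ⟨e', he'⟩ => ⟨e.trans e', fun g v => by
          rw [LinearEquiv.trans_apply, he, he']; rfl⟩⟩ }
  have hst : ∀ p : ι × Fin K, IsoRep (E (Quotient.mk st p).out).ρ (E p).ρ :=
    fun p => Quotient.exact (s := st) (Quotient.out_eq _)
  let D : Quotient st → ℕ := fun c => Module.finrank ℂ (E c.out).V
  have hdim : ∀ p, Module.finrank ℂ (E p).V = D (Quotient.mk st p) := by
    intro p
    obtain ⟨e, -⟩ := hst p
    exact e.finrank_eq.symm
  have hle : ∀ p, Module.finrank ℂ (E p).V ≤ n * Module.finrank ℂ (R p.1).V :=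
    fun p => (hEcov p).finrank_le (hEirr p) x hx
  have hE0 : ∀ p, Module.finrank ℂ (E p).V ≠ 0 := by
    intro p
    have := (hEirr p).finrank_ne_zero
    rw [finrank_top] at this
    exact_mod_cast this
  -- isomorphic twists cover distinct representations of `SL_n` by `hE1`; the degrees of these add up
  -- to at most the common degree of the twists, and each is at least `1 / n` of it by `hle`
  have hfib : ∀ c : Quotient st,
      (Finset.univ.filter fun p => Quotient.mk st p = c).card ≤ n := by
    intro c
    set P := Finset.univ.filter fun p => Quotient.mk st p = c with hP
    by_contra! hcon
    have hmem : ∀ p : P, Quotient.mk st p.1 = c := fun p => (Finset.mem_filter.1 p.2).2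
    have hiso : ∀ p : P, IsoRep (E c.out).ρ (E p.1).ρ := by
      intro p
      have := hst p.1
      rwa [hmem p] at this
    choose e he using hiso
    have hsum := sum_finrank_cover_le (φ := Matrix.SpecialLinearGroup.toGL) (ρ := (E c.out).ρ)
      (fun p : P => R p.1.1) (fun p => T p.1.1 ∘ₗ (e p).toLinearMap)
      (fun p => ⟨fun h0 => (hEcov p.1).ne_zero (by
          ext w
          have := LinearMap.congr_fun h0 ((e p).symm w)
          simpa using this), fun g w => by
          show T p.1.1 (e p ((E c.out).ρ _ w)) = (R p.1.1).ρ g (T p.1.1 (e p w))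
          rw [he]
          exact (hEcov p.1).comm g (e p w)⟩)
      (fun p => hirr _) (fun p p' hpp => hno _ _ fun h => hpp (Subtype.ext (hE1 _ _ h
        (Quotient.exact (s := st) ((hmem p).trans (hmem p').symm)))))
    have hPne : P.Nonempty := Finset.card_pos.1 (by omega)
    haveI : Nonempty P := hPne.to_subtype
    obtain ⟨p0, hp0⟩ := Finite.exists_min fun p : P => Module.finrank ℂ (R p.1.1).V
    have h2 : P.card * Module.finrank ℂ (R p0.1.1).V ≤
        ∑ p : P, Module.finrank ℂ (R p.1.1).V := by
      have := Finset.card_nsmul_le_sum (Finset.univ : Finset P)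
        (fun p => Module.finrank ℂ (R p.1.1).V) _ (fun p _ => hp0 p)
      simpa using this
    have h3 := hle p0.1
    rw [hdim, hmem p0] at h3
    have h4 : P.card * Module.finrank ℂ (R p0.1.1).V ≤ n * Module.finrank ℂ (R p0.1.1).V :=
      h2.trans (hsum.trans h3)
    exact absurd (Nat.le_of_mul_le_mul_right h4 (Nat.pos_of_ne_zero (hV _))) (by omega)
  have hGL := sum_GL hn hs (fun c : Quotient st => E c.out) (fun c => hEirr _)
    (fun c c' hcc => noHom_of_not_isoRep (hEirr _) (hEirr _) fun h => hcc (by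
      rw [← Quotient.out_eq c, ← Quotient.out_eq c']
      exact Quotient.sound (s := st) h)) (fun _ => rfl)
    (fun c => finrank_ne_one_of_cover hF (hEcov _) (hirr _) (hnt _))
  calc (K : ℝ) * ∑ i, (Module.finrank ℂ (R i).V : ℝ) ^ (-s)
      = ∑ p : ι × Fin K, (Module.finrank ℂ (R p.1).V : ℝ) ^ (-s) := by
        rw [Fintype.sum_prod_type, Finset.mul_sum]
        refine Finset.sum_congr rfl fun i _ => ?_
        show _ = ∑ _y : Fin K, (Module.finrank ℂ (R i).V : ℝ) ^ (-s)
        rw [Finset.sum_const, Finset.card_univ, Fintype.card_fin, nsmul_eq_mul]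
    _ ≤ ∑ p : ι × Fin K, (n : ℝ) ^ s * (D (Quotient.mk st p) : ℝ) ^ (-s) := by
        refine Finset.sum_le_sum fun p _ => ?_
        rw [← hdim]
        exact rpow_neg_le_of_le_mul hs0 (hE0 p) (hV _) (hle p)
    _ = (n : ℝ) ^ s * ∑ c, ∑ p ∈ Finset.univ.filter (fun p => Quotient.mk st p = c),
          (D (Quotient.mk st p) : ℝ) ^ (-s) := by
        rw [Finset.sum_fiberwise, Finset.mul_sum]
    _ ≤ (n : ℝ) ^ s * ∑ c, n * (D c : ℝ) ^ (-s) := by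
        refine mul_le_mul_of_nonneg_left (Finset.sum_le_sum fun c _ => ?_) (by positivity)
        rw [Finset.sum_congr rfl (g := fun _ => (D c : ℝ) ^ (-s)) fun p hp => by
          rw [(Finset.mem_filter.1 hp).2], Finset.sum_const, nsmul_eq_mul]
        exact mul_le_mul_of_nonneg_right (by exact_mod_cast hfib c) (by positivity)
    _ ≤ _ := by
        rw [← Finset.mul_sum]
        gcongr

/-- Sum over a finite set of nontrivial irreducible characters. -/
lemma sum_chars (hn : 2 ≤ n) {s : ℝ} (hs : 2 / ((n : ℝ) - 1) < s) (hF : 2 < Fintype.card F)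
    (A : Finset (Matrix.SpecialLinearGroup (Fin n) F → ℂ))
    (hA : ∀ f ∈ A, ∃ V : FDRep ℂ (Matrix.SpecialLinearGroup (Fin n) F),
      CategoryTheory.Simple V ∧ f = V.character) (h1 : ∀ f ∈ A, f ≠ 1) :
    (Fintype.card F : ℝ) * ∑ f ∈ A, ((f 1).re) ^ (-s) ≤
      2 * n * ((n : ℝ) ^ s * (n * (CGL n s *
        (Fintype.card F : ℝ) ^ (-(s - 2 / ((n : ℝ) - 1)))))) := by
  haveI : Fintype (Matrix.SpecialLinearGroup (Fin n) F) := Fintype.ofFinite _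
  choose V hVs hVc using hA
  let R : A → FRep (Matrix.SpecialLinearGroup (Fin n) F) := fun f => ⟨V f f.2, (V f f.2).ρ, ⊤⟩
  have hirr : ∀ f, IrrSub (R f).ρ ⊤ ⊤ := fun f => irr_of_simple _ (hVs f f.2)
  have hchar : ∀ f : A, (R f).ρ.character = f := fun f => (hVc f f.2).symm
  have hdim : ∀ f : A, ((f : Matrix.SpecialLinearGroup (Fin n) F → ℂ) 1).re = Module.finrank ℂ (R f).V := by
    intro f
    have : (R f).ρ.character 1 = Module.finrank ℂ (R f).V := by
      show LinearMap.trace ℂ _ ((R f).ρ 1) = _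
      rw [map_one, LinearMap.trace_one]
    rw [hchar f] at this
    rw [this]; simp
  have hnt : ∀ f, ∃ g, (R f).ρ g ≠ 1 := by
    intro f
    by_contra! hcon
    apply h1 f f.2
    have hd : Module.finrank ℂ (R f).V = 1 :=
      finrank_eq_one_of_comm (hirr f) fun a b v => by rw [hcon a, hcon b]
    rw [← hchar f]
    funext g
    show LinearMap.trace ℂ _ ((R f).ρ g) = _
    rw [hcon, LinearMap.trace_one, hd]; simp
  have h2 := sum_SL hn hs hF R hirr (fun f f' hff => noHom_of_character (hirr f) (hirr f')
    (by rw [hchar, hchar]; exact fun h => hff (Subtype.ext h))) hnt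
  have h3 : ∑ f ∈ A, ((f 1).re) ^ (-s) = ∑ f : A, (Module.finrank ℂ (R f).V : ℝ) ^ (-s) := by
    rw [← Finset.sum_coe_sort A]
    exact Finset.sum_congr rfl fun f _ => by rw [hdim f]
  rw [h3]
  set q := Fintype.card F with hq
  have hK : (q : ℝ) ≤ 2 * n * (((q - 2) / n + 1 : ℕ) : ℝ) := by
    have h5 := Nat.div_add_mod (q - 2) n
    have h6 := Nat.mod_lt (q - 2) (show n > 0 by omega)
    have : q ≤ 2 * (n * ((q - 2) / n + 1)) := by rw [mul_add]; omega
    calc (q : ℝ) ≤ ((2 * (n * ((q - 2) / n + 1)) : ℕ) : ℝ) := by exact_mod_cast this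
      _ = _ := by push_cast; ring
  have hS : 0 ≤ ∑ f : A, (Module.finrank ℂ (R f).V : ℝ) ^ (-s) :=
    Finset.sum_nonneg fun _ _ => by positivity
  calc (q : ℝ) * ∑ f : A, (Module.finrank ℂ (R f).V : ℝ) ^ (-s)
      ≤ 2 * n * (((q - 2) / n + 1 : ℕ) : ℝ) * ∑ f : A, (Module.finrank ℂ (R f).V : ℝ) ^ (-s) :=
        mul_le_mul_of_nonneg_right hK hS
    _ ≤ _ := by
        rw [mul_assoc]
        exact mul_le_mul_of_nonneg_left h2 (by positivity)

end Main

end ZSL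

end Preparations

/-- For fixed `n ≥ 2` and `s > 2/(n-1)`, one has `q·(ζ^{SL_n(q)}(s) − 1) → 0` as `q → ∞`
through prime powers, where `ζ^{SL_n(q)}(s) = Σ_{χ ∈ Irr(SL_n(q))} χ(1)^{-s}`. -/
theorem q_mul_zeta_SL_sub_one_tendsto_zero (n : ℕ) (hn : 2 ≤ n) (s : ℝ)
    (hs : 2 / ((n : ℝ) - 1) < s) :
    ∀ ε : ℝ, 0 < ε → ∃ B : ℕ,
      ∀ q : ℕ, IsPrimePow q → B < q →
      ∀ (F : Type) [Field F] [Fintype F], Fintype.card F = q →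
        (q : ℝ) *
            ((∑ᶠ f ∈ irrChars (Matrix.SpecialLinearGroup (Fin n) F), ((f 1).re) ^ (-s)) - 1) <
          ε := by
  intro ε hε
  set δ := s - 2 / ((n : ℝ) - 1) with hδ
  have hδ0 : 0 < δ := sub_pos.2 hs
  set C : ℝ := 2 * n * ((n : ℝ) ^ s * (n * ZSL.CGL n s)) with hC
  have hlim : Filter.Tendsto (fun q : ℕ => C * (q : ℝ) ^ (-δ)) Filter.atTop (nhds 0) := by
    have := ((tendsto_rpow_neg_atTop hδ0).comp tendsto_natCast_atTop_atTop).const_mul C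
    simpa using this
  obtain ⟨B, hB⟩ := Filter.eventually_atTop.1 (hlim.eventually (gt_mem_nhds hε))
  refine ⟨max B 2, fun q _ hq F _ _ hcard => ?_⟩
  have hBq : C * (q : ℝ) ^ (-δ) < ε := hB q (by omega)
  have hF : 2 < Fintype.card F := by omega
  set S := irrChars (Matrix.SpecialLinearGroup (Fin n) F) with hS
  set φ : (Matrix.SpecialLinearGroup (Fin n) F → ℂ) → ℝ := fun f => ((f 1).re) ^ (-s) with hφ
  refine lt_of_le_of_lt ?_ hBq
  have key : ∀ A : Finset (Matrix.SpecialLinearGroup (Fin n) F → ℂ), (↑A : Set _) ⊆ S →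
      (q : ℝ) * (∑ f ∈ A, φ f - 1) ≤ C * (q : ℝ) ^ (-δ) := by
    intro A hA
    classical
    have h1 := ZSL.sum_chars hn hs hF (A.erase 1)
      (fun f hf => hA (Finset.mem_of_mem_erase hf)) (fun f hf => Finset.ne_of_mem_erase hf)
    rw [hcard] at h1
    have h2 : ∑ f ∈ A, φ f ≤ ∑ f ∈ A.erase 1, φ f + 1 := by
      by_cases h : (1 : Matrix.SpecialLinearGroup (Fin n) F → ℂ) ∈ A
      · rw [← Finset.sum_erase_add A φ h]
        simp [hφ]
      · rw [Finset.erase_eq_of_notMem h]; linarith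
    calc (q : ℝ) * (∑ f ∈ A, φ f - 1) ≤ (q : ℝ) * ∑ f ∈ A.erase 1, φ f :=
          mul_le_mul_of_nonneg_left (by linarith) (by positivity)
      _ ≤ _ := h1
      _ = _ := by rw [hC]; ring
  change (q : ℝ) * ((∑ᶠ f ∈ S, φ f) - 1) ≤ _
  by_cases hfin : (S ∩ Function.support φ).Finite
  · rw [finsum_mem_eq_sum _ hfin]
    exact key _ (by intro f hf; exact (hfin.mem_toFinset.1 hf).1)
  -- an infinite support would make the sum the junk value `0`, which is the empty sum
  · rw [finsum_mem_eq_zero_of_infinite hfin]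
    simpa using key ∅ (by simp)
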